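/- arXiv:1309.0441 — 13 statements merged into one kernel-verified Lean document; each statement's English description precedes it below -/
import Mathlib

section
/- Let φ(a,b,k) denote the condition: there exist x, y, z ∈ ℚ with 2 + a·b·k² + b·z² = x² + a·y². Then for every n ∈ ℚ, n is an integer (i.e., there exists m ∈ ℤ with n = m) if and only if for all nonzero a, b ∈ ℚ, the following holds: if φ(a,b,0) and for every k ∈ ℚ, φ(a,b,k) implies φ(a,b,k+1), then φ(a,b,n). -/
open NumberTheorySymbols

theorem legendre_aux (a b c : ℕ) (ha : 0 < a) (hb : 0 < b) (hc : 0 < c)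
    (hab : a.Coprime b) (hac : a.Coprime c) (hbc : b.Coprime c)
    (e f g : ℤ) (he : (c : ℤ) ∣ e ^ 2 + a * b) (hf : (b : ℤ) ∣ f ^ 2 - a * c)
    (hg : (a : ℤ) ∣ g ^ 2 - b * c)
    (h1 : ¬ IsSquare (a * b)) (h2 : ¬ IsSquare (b * c)) :
    ∃ x y z : ℤ, z ≠ 0 ∧ (a : ℤ) * x ^ 2 + b * y ^ 2 = c * z ^ 2 := by
  have : NeZero a := ⟨ha.ne'⟩
  have : NeZero b := ⟨hb.ne'⟩
  have : NeZero c := ⟨hc.ne'⟩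
  let F : Fin (Nat.sqrt (b * c) + 1) × Fin (Nat.sqrt (a * c) + 1) × Fin (Nat.sqrt (a * b) + 1) →
      ZMod c × ZMod b × ZMod a := fun t =>
    ((((a : ℤ) * (t.1 : ℕ) - e * (t.2.1 : ℕ) : ℤ) : ZMod c),
      (((a : ℤ) * (t.1 : ℕ) - f * (t.2.2 : ℕ) : ℤ) : ZMod b),
      (((b : ℤ) * (t.2.1 : ℕ) - g * (t.2.2 : ℕ) : ℤ) : ZMod a))
  have hcard : Fintype.card (ZMod c × ZMod b × ZMod a) < Fintype.card
      (Fin (Nat.sqrt (b * c) + 1) × Fin (Nat.sqrt (a * c) + 1) × Fin (Nat.sqrt (a * b) + 1)) := by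
    simp only [Fintype.card_prod, ZMod.card, Fintype.card_fin]
    have e1 := Nat.lt_succ_sqrt' (b * c)
    have e2 := Nat.lt_succ_sqrt' (a * c)
    have e3 := Nat.lt_succ_sqrt' (a * b)
    simp only [Nat.succ_eq_add_one] at e1 e2 e3
    apply lt_of_pow_lt_pow_left₀ 2 (Nat.zero_le _)
    calc (c * (b * a)) ^ 2 = (b * c) * ((a * c) * (a * b)) := by ring
      _ < (Nat.sqrt (b * c) + 1) ^ 2 * ((Nat.sqrt (a * c) + 1) ^ 2 * (Nat.sqrt (a * b) + 1) ^ 2) := by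
        gcongr
      _ = _ := by ring
  obtain ⟨s, t, hst, hF⟩ := Fintype.exists_ne_map_eq_of_card_lt F hcard
  obtain ⟨⟨x1, hx1⟩, ⟨y1, hy1⟩, ⟨z1, hz1⟩⟩ := s
  obtain ⟨⟨x2, hx2⟩, ⟨y2, hy2⟩, ⟨z2, hz2⟩⟩ := t
  simp only [F, Prod.mk.injEq] at hF
  obtain ⟨k1, k2, k3⟩ := hF
  rw [ZMod.intCast_eq_intCast_iff_dvd_sub] at k1 k2 k3
  have hne : ¬ ((x2 : ℤ) - x1 = 0 ∧ (y2 : ℤ) - y1 = 0 ∧ (z2 : ℤ) - z1 = 0) := by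
    rintro ⟨i1, i2, i3⟩
    apply hst
    have : x1 = x2 := by omega
    have : y1 = y2 := by omega
    have : z1 = z2 := by omega
    subst_vars
    rfl
  have key : ∀ u v N : ℕ, u < Nat.sqrt N + 1 → v < Nat.sqrt N + 1 → ((u : ℤ) - v) ^ 2 ≤ N := by
    intro u v N hu hv
    have hs := Nat.sqrt_le' N
    have hs' : ((Nat.sqrt N : ℕ) : ℤ) ^ 2 ≤ N := by exact_mod_cast hs
    have : |(u : ℤ) - v| ≤ (Nat.sqrt N : ℕ) := by
      rw [abs_le]; constructor <;> omega
    calc ((u : ℤ) - v) ^ 2 = |(u : ℤ) - v| ^ 2 := (sq_abs _).symm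
      _ ≤ ((Nat.sqrt N : ℕ) : ℤ) ^ 2 := by gcongr
      _ ≤ N := hs'
  have bx := key x2 x1 _ hx2 hx1
  have byy := key y2 y1 _ hy2 hy1
  have bz := key z2 z1 _ hz2 hz1
  have k1' : (c : ℤ) ∣ a * ((x2 : ℤ) - x1) - e * ((y2 : ℤ) - y1) := by convert k1 using 1; ring
  have k2' : (b : ℤ) ∣ a * ((x2 : ℤ) - x1) - f * ((z2 : ℤ) - z1) := by convert k2 using 1; ring
  have k3' : (a : ℤ) ∣ b * ((y2 : ℤ) - y1) - g * ((z2 : ℤ) - z1) := by convert k3 using 1; ring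
  generalize (x2 : ℤ) - x1 = x at *
  generalize (y2 : ℤ) - y1 = y at *
  generalize (z2 : ℤ) - z1 = z at *
  clear hst k1 k2 k3 hcard F key
  push_cast at bx byy bz
  have ha' : (0 : ℤ) < a := by exact_mod_cast ha
  have hb' : (0 : ℤ) < b := by exact_mod_cast hb
  have hc' : (0 : ℤ) < c := by exact_mod_cast hc
  have cab : IsCoprime (a : ℤ) b := Nat.isCoprime_iff_coprime.mpr hab
  have cac : IsCoprime (a : ℤ) c := Nat.isCoprime_iff_coprime.mpr hac
  have cbc : IsCoprime (b : ℤ) c := Nat.isCoprime_iff_coprime.mpr hbc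
  have d1 : (c : ℤ) ∣ a * x ^ 2 + b * y ^ 2 - c * z ^ 2 := by
    apply cac.symm.dvd_of_dvd_mul_left
    have : (a : ℤ) * (a * x ^ 2 + b * y ^ 2 - c * z ^ 2) = (a * x - e * y) * (a * x + e * y)
      + (e ^ 2 + a * b) * y ^ 2 - c * (a * z ^ 2) := by ring
    rw [this]
    exact dvd_sub (dvd_add (k1'.mul_right _) (he.mul_right _)) (dvd_mul_right _ _)
  have d2 : (b : ℤ) ∣ a * x ^ 2 + b * y ^ 2 - c * z ^ 2 := by
    apply cab.symm.dvd_of_dvd_mul_left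
    have : (a : ℤ) * (a * x ^ 2 + b * y ^ 2 - c * z ^ 2) = (a * x - f * z) * (a * x + f * z)
      + (f ^ 2 - a * c) * z ^ 2 + b * (a * y ^ 2) := by ring
    rw [this]
    exact dvd_add (dvd_add (k2'.mul_right _) (hf.mul_right _)) (dvd_mul_right _ _)
  have d3 : (a : ℤ) ∣ a * x ^ 2 + b * y ^ 2 - c * z ^ 2 := by
    apply cab.dvd_of_dvd_mul_left
    have : (b : ℤ) * (a * x ^ 2 + b * y ^ 2 - c * z ^ 2) = (b * y - g * z) * (b * y + g * z)
      + (g ^ 2 - b * c) * z ^ 2 + a * (b * x ^ 2) := by ring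
    rw [this]
    exact dvd_add (dvd_add (k3'.mul_right _) (hg.mul_right _)) (dvd_mul_right _ _)
  have d : (a * b * c : ℤ) ∣ a * x ^ 2 + b * y ^ 2 - c * z ^ 2 :=
    (IsCoprime.mul_left cac cbc).mul_dvd (cab.mul_dvd d3 d2) d1
  obtain ⟨k, hk⟩ := d
  have habc : (0 : ℤ) < a * b * c := by positivity
  have m1 : (a : ℤ) * x ^ 2 ≤ a * (b * c) := by gcongr
  have m2 : (b : ℤ) * y ^ 2 ≤ b * (a * c) := by gcongr
  have m3 : (c : ℤ) * z ^ 2 ≤ c * (a * b) := by gcongr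
  have n1 : (0 : ℤ) ≤ a * x ^ 2 := by positivity
  have n2 : (0 : ℤ) ≤ b * y ^ 2 := by positivity
  have n3 : (0 : ℤ) ≤ c * z ^ 2 := by positivity
  have kl : k < 3 := by
    by_contra h
    push Not at h
    nlinarith
  have ku : -2 < k := by
    by_contra h
    push Not at h
    nlinarith
  have hsq : ∀ (N : ℕ) (w : ℤ), w ^ 2 = N → IsSquare N := by
    intro N w hw
    refine ⟨w.natAbs, ?_⟩
    zify
    rw [← hw, ← sq, sq_abs]
  have hk4 : k = -1 ∨ k = 0 ∨ k = 1 ∨ k = 2 := by omega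
  rcases hk4 with rfl | rfl | rfl | rfl
  · exfalso
    apply h1
    apply hsq _ z
    push_cast
    have : (c : ℤ) * z ^ 2 = c * (a * b) := by linarith
    exact mul_left_cancel₀ hc'.ne' this
  · refine ⟨x, y, z, ?_, by linarith⟩
    rintro rfl
    apply hne
    have q1 : (a : ℤ) * x ^ 2 = 0 := by linarith
    have q2 : (b : ℤ) * y ^ 2 = 0 := by linarith
    simp [ha.ne', hb.ne'] at q1 q2
    exact ⟨q1, q2, rfl⟩
  · refine ⟨x * z + b * y, y * z - a * x, z ^ 2 + a * b, by positivity, ?_⟩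
    have : (a : ℤ) * x ^ 2 + b * y ^ 2 = c * (z ^ 2 + a * b) := by linarith
    linear_combination (z ^ 2 + a * b : ℤ) * this
  · exfalso
    apply h2
    apply hsq _ x
    push_cast
    have : (a : ℤ) * x ^ 2 = a * (b * c) := by linarith
    exact mul_left_cancel₀ ha'.ne' this

theorem descent_aux (l : ℕ) (hl : 1 < l) (η A B : ℤ)
    (h1 : ∀ X Y : ℤ, (l : ℤ) ∣ X ^ 2 - η * Y ^ 2 → (l : ℤ) ∣ X ∧ (l : ℤ) ∣ Y)
    (h2 : ∀ X Y : ℤ, (l : ℤ) ∣ A * X ^ 2 + B * Y ^ 2 → (l : ℤ) ∣ X ∧ (l : ℤ) ∣ Y) :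
    ∀ (n : ℕ) (X Y W Z : ℤ), W.natAbs ≤ n → X ^ 2 - η * Y ^ 2 = l * (A * W ^ 2 + B * Z ^ 2) →
      W = 0 := by
  intro n
  induction n with
  | zero => intro X Y W Z h _; omega
  | succ n ih =>
    intro X Y W Z hW h
    have hl0 : (l : ℤ) ≠ 0 := by positivity
    obtain ⟨⟨X, rfl⟩, ⟨Y, rfl⟩⟩ := h1 X Y ⟨_, h⟩
    have h' : (l : ℤ) * (X ^ 2 - η * Y ^ 2) = A * W ^ 2 + B * Z ^ 2 := by
      apply mul_left_cancel₀ hl0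
      linear_combination h
    obtain ⟨⟨W, rfl⟩, ⟨Z, rfl⟩⟩ := h2 W Z ⟨_, h'.symm⟩
    by_contra hne
    have hW0 : W ≠ 0 := by rintro rfl; simp at hne
    apply hW0
    apply ih X Y W Z
    · rw [Int.natAbs_mul, Int.natAbs_natCast] at hW
      have : 0 < W.natAbs := Int.natAbs_pos.mpr hW0
      nlinarith
    · apply mul_left_cancel₀ hl0
      linear_combination h'

theorem descent_two (M : ℤ) (hM : M % 8 = 3) :
    ∀ (n : ℕ) (X Y W Z : ℤ), W.natAbs ≤ n → X ^ 2 + Y ^ 2 = M * W ^ 2 + 3 * Z ^ 2 → W = 0 := by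
  intro n
  induction n with
  | zero => intro X Y W Z h _; omega
  | succ n ih =>
    intro X Y W Z hW h
    have hsq : ∀ t : ℤ, (∃ u, t = 2 * u) ∨ (∃ u, t ^ 2 = 8 * u + 1) := by
      intro t
      rcases Int.even_or_odd' t with ⟨u, hu | hu⟩
      · exact Or.inl ⟨u, hu⟩
      · obtain ⟨v, hv⟩ := (Int.even_mul_succ_self u)
        exact Or.inr ⟨v, by rw [hu]; linear_combination 4 * hv⟩
    obtain ⟨N, rfl⟩ : ∃ N, M = 8 * N + 3 := ⟨M / 8, by omega⟩
    have hred : X ^ 2 + Y ^ 2 - 3 * W ^ 2 - 3 * Z ^ 2 = 8 * (N * W ^ 2) := by linear_combination h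
    generalize N * W ^ 2 = R at hred
    rcases hsq X with ⟨x, hx⟩ | ⟨x, hx⟩ <;> rcases hsq Y with ⟨y, hy⟩ | ⟨y, hy⟩ <;>
    rcases hsq W with ⟨w, hw⟩ | ⟨w, hw⟩ <;> rcases hsq Z with ⟨z, hz⟩ | ⟨z, hz⟩ <;>
    first
    | (subst hx hy hw hz
       have := ih x y w z (by omega) (by linarith [h])
       omega)
    | (exfalso
       try subst hx
       try subst hy
       try subst hw
       try subst hz
       try simp only [mul_pow] at hred
       omega)

theorem exists_prime_crt (p q m r A B N : ℕ) (hpo : Odd p) (hqo : Odd q) (hmo : Odd m)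
    (hpq : p.Coprime q) (hmp : m.Coprime p) (hmq : m.Coprime q)
    (hr : r.Coprime 8) (hA : A.Coprime p) (hB : B.Coprime m) :
    ∃ c : ℕ, N < c ∧ c.Prime ∧ c ≡ r [MOD 8] ∧ c ≡ 1 [MOD q] ∧ c ≡ A [MOD p] ∧ c ≡ B [MOD m] := by
  have h8 : ∀ t : ℕ, Odd t → t.Coprime 8 := fun t ht => by
    have := (Nat.coprime_two_right.mpr ht).pow_right 3
    simpa using this
  have c1 : Nat.Coprime 8 q := (h8 q hqo).symm
  obtain ⟨k1, a1, a2⟩ := Nat.chineseRemainder c1 r 1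
  have c2 : Nat.Coprime (8 * q) p := Nat.Coprime.mul_left (h8 p hpo).symm hpq.symm
  obtain ⟨k2, b1, b2⟩ := Nat.chineseRemainder c2 k1 A
  have c3 : Nat.Coprime (8 * q * p) m :=
    Nat.Coprime.mul_left (Nat.Coprime.mul_left (h8 m hmo).symm hmq.symm) hmp.symm
  obtain ⟨k3, d1, d2⟩ := Nat.chineseRemainder c3 k2 B
  have e1 : k3 ≡ r [MOD 8] := ((d1.of_mul_right p).of_mul_right q).trans ((b1.of_mul_right q).trans a1)
  have e2 : k3 ≡ 1 [MOD q] := ((d1.of_mul_right p).of_mul_left 8).trans ((b1.of_mul_left 8).trans a2)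
  have e3 : k3 ≡ A [MOD p] := (d1.of_mul_left (8 * q)).trans b2
  have cop : ∀ n s : ℕ, k3 ≡ s [MOD n] → s.Coprime n → k3.Coprime n := by
    intro n s h hs
    unfold Nat.Coprime at *
    rw [h.gcd_eq, hs]
  have hk : k3.Coprime (8 * q * p * m) := by
    refine Nat.Coprime.mul_right (Nat.Coprime.mul_right (Nat.Coprime.mul_right ?_ ?_) ?_) ?_
    · exact cop _ _ e1 hr
    · exact cop _ _ e2 (Nat.coprime_one_left _)
    · exact cop _ _ e3 hA
    · exact cop _ _ d2 hB
  have hne : 8 * q * p * m ≠ 0 := by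
    have := hpo.pos; have := hqo.pos; have := hmo.pos
    positivity
  obtain ⟨c, hc, hcp, hcm⟩ := Nat.forall_exists_prime_gt_and_modEq N hne hk
  have f := hcm.of_mul_right m
  exact ⟨c, hc, hcp, ((f.of_mul_right p).of_mul_right q).trans e1,
    ((f.of_mul_right p).of_mul_left 8).trans e2, (f.of_mul_left (8 * q)).trans e3,
    (hcm.of_mul_left (8 * q * p)).trans d2⟩

theorem J_modEq {a b n : ℕ} (h : a ≡ b [MOD n]) : J((a : ℤ) | n) = J((b : ℤ) | n) := by
  apply jacobiSym.mod_left'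
  exact_mod_cast h

theorem exists_prime_aux (p q M : ℕ) (hpo : Odd p) (hqo : Odd q)
    (hM4 : ¬ 4 ∣ M) (hMp : M.Coprime p) (hMq : M.Coprime q) (hpq : p.Coprime q)
    (h : p % 4 = 1 ∨ M % 4 = 1 ∨ M % 2 = 0) :
    ∃ c : ℕ, c.Prime ∧ p < c ∧ M < c ∧ q < c ∧ c % 4 = 1 ∧ c ≡ 1 [MOD q] ∧ c ≡ M [MOD p] ∧
      c ≡ p [MOD M] ∧ J(-(M * p) | c) = 1 := by
  have neg : ∀ c : ℕ, c % 4 = 1 → J(-(M * p) | c) = J((M : ℤ) | c) * J((p : ℤ) | c) := by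
    intro c hc
    rw [jacobiSym.neg _ (Nat.odd_iff.mpr (by omega)), ZMod.χ₄_nat_one_mod_four hc, one_mul,
      jacobiSym.mul_left]
  have sqone : ∀ (a b : ℕ), a.Coprime b → J((a : ℤ) | b) * J((a : ℤ) | b) = 1 := by
    intro a b hab
    rw [← sq]
    apply jacobiSym.sq_one
    simpa using hab
  rcases Nat.even_or_odd M with he | ho
  · obtain ⟨m, rfl⟩ := he.two_dvd
    have hmo : Odd m := by
      rw [← Nat.not_even_iff_odd]
      intro hm
      obtain ⟨t, rfl⟩ := hm.two_dvd
      exact hM4 ⟨t, by ring⟩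
    have hmp : m.Coprime p := Nat.Coprime.coprime_mul_left hMp
    have hmq : m.Coprime q := Nat.Coprime.coprime_mul_left hMq
    -- choose the residue of c modulo 8
    obtain ⟨r, hr, hr8⟩ : ∃ r : ℕ, (r = 1 ∨ r = 5) ∧
        (if r = 1 then 1 else -1) * (J((p : ℤ) | m) * J(((2 * m : ℕ) : ℤ) | p)) = 1 := by
      have g1 : J((p : ℤ) | m) = 1 ∨ J((p : ℤ) | m) = -1 :=
        jacobiSym.eq_one_or_neg_one (by simpa using hmp.symm)
      have g2 : J(((2 * m : ℕ) : ℤ) | p) = 1 ∨ J(((2 * m : ℕ) : ℤ) | p) = -1 :=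
        jacobiSym.eq_one_or_neg_one (by simpa only [Int.gcd_natCast_natCast] using hMp)
      rcases g1 with g1 | g1 <;> rcases g2 with g2 | g2 <;> rw [g1, g2]
      · exact ⟨1, by simp⟩
      · exact ⟨5, by simp⟩
      · exact ⟨5, by simp⟩
      · exact ⟨1, by simp⟩
    obtain ⟨c, hN, hc, c8, cq, cp, cm⟩ := exists_prime_crt p q m r (2 * m) p (p + 2 * m + q) hpo hqo
      hmo hpq hmp hmq (by rcases hr with rfl | rfl <;> norm_num) hMp hmp.symm
    have c8' : c % 8 = r := by
      have : c % 8 = r % 8 := c8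
      rcases hr with rfl | rfl <;> simpa using this
    have c4 : c % 4 = 1 := by omega
    have co : Odd c := Nat.odd_iff.mpr (by omega)
    refine ⟨c, hc, by omega, by omega, by omega, c4, cq, cp, ?_, ?_⟩
    · refine (Nat.modEq_and_modEq_iff_modEq_mul ?_).mp ⟨?_, cm⟩
      · exact (Nat.coprime_two_left.mpr hmo)
      · have := Nat.odd_iff.mp hpo
        unfold Nat.ModEq
        omega
    · rw [neg c c4]
      have j2 : J((2 : ℤ) | c) = if r = 1 then 1 else -1 := by
        rw [jacobiSym.at_two co, ZMod.χ₈_nat_eq_if_mod_eight]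
        rcases hr with rfl | rfl <;> simp [c8'] <;> omega
      have jp : J((p : ℤ) | c) = J(((2 * m : ℕ) : ℤ) | p) := by
        rw [jacobiSym.quadratic_reciprocity_one_mod_four' hpo c4, J_modEq cp]
      have jm : J((m : ℤ) | c) = J((p : ℤ) | m) := by
        rw [jacobiSym.quadratic_reciprocity_one_mod_four' hmo c4, J_modEq cm]
      rw [jp]
      have : J(((2 * m : ℕ) : ℤ) | c) = J((2 : ℤ) | c) * J((m : ℤ) | c) := by
        push_cast
        rw [jacobiSym.mul_left]
      rw [this, j2, jm, mul_assoc]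
      exact hr8
  · obtain ⟨c, hN, hc, c8, cq, cp, cm⟩ := exists_prime_crt p q M 1 M p (p + M + q) hpo hqo
      ho hpq hMp hMq (by norm_num) hMp hMp.symm
    have c8' : c % 8 = 1 := c8
    have c4 : c % 4 = 1 := by omega
    refine ⟨c, hc, by omega, by omega, by omega, c4, cq, cp, cm, ?_⟩
    rw [neg c c4, jacobiSym.quadratic_reciprocity_one_mod_four' hpo c4, J_modEq cp,
      jacobiSym.quadratic_reciprocity_one_mod_four' ho c4, J_modEq cm]
    have hrec : J((p : ℤ) | M) = J((M : ℤ) | p) := by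
      rcases h with h | h | h
      · exact jacobiSym.quadratic_reciprocity_one_mod_four h ho
      · exact jacobiSym.quadratic_reciprocity_one_mod_four' hpo h
      · have := Nat.odd_iff.mp ho
        omega
    rw [hrec]
    exact sqone _ _ hMp

theorem sq_of_J {a : ℤ} {c : ℕ} (hc : c.Prime) (h : J(a | c) = 1) : ∃ e : ℤ, (c : ℤ) ∣ e ^ 2 - a := by
  have : Fact c.Prime := ⟨hc⟩
  obtain ⟨e, he⟩ := ZMod.isSquare_of_jacobiSym_eq_one h
  refine ⟨e.val, ?_⟩
  rw [← ZMod.intCast_zmod_eq_zero_iff_dvd]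
  push_cast
  rw [ZMod.natCast_zmod_val, he]
  ring

theorem not_sq_aux {p m : ℕ} (hp : p.Prime) (h : ¬ p ∣ m) : ¬ IsSquare (p * m) := by
  rintro ⟨t, ht⟩
  have : p ∣ t := by
    have : p ∣ t * t := ⟨m, ht.symm⟩
    rcases hp.dvd_mul.mp this with h | h <;> exact h
  obtain ⟨s, rfl⟩ := this
  apply h
  refine ⟨s * s, ?_⟩
  apply Nat.eq_of_mul_eq_mul_left hp.pos
  linarith

theorem rep_aux (p q M : ℕ) (hp : p.Prime) (hpo : Odd p) (hq : q = 1 ∨ (q.Prime ∧ Odd q))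
    (hM : 0 < M)
    (hM4 : ¬ 4 ∣ M) (hMp : M.Coprime p) (hMq : M.Coprime q) (hpq : p.Coprime q)
    (h : p % 4 = 1 ∨ M % 4 = 1 ∨ M % 2 = 0) :
    ∃ x y z : ℚ, (M : ℚ) + p * z ^ 2 = x ^ 2 + q * y ^ 2 := by
  have hqo : Odd q := by
    rcases hq with rfl | hq
    · exact odd_one
    · exact hq.2
  obtain ⟨c, hc, hcp, hcM, hcq, c4, cq, cp, cM, hJ⟩ :=
    exists_prime_aux p q M hpo hqo hM4 hMp hMq hpq h
  have hnd : ∀ t, 0 < t → t < c → ¬ c ∣ t := fun t h0 h1 h2 => absurd (Nat.le_of_dvd h0 h2) (by omega)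
  have hcop : ∀ t, 0 < t → t < c → t.Coprime c := fun t h0 h1 =>
    ((Nat.Prime.coprime_iff_not_dvd hc).mpr (hnd t h0 h1)).symm
  have hpd : ¬ p ∣ M := (Nat.Prime.coprime_iff_not_dvd hp).mp hMp.symm
  obtain ⟨w, z, t, ht, hwz⟩ : ∃ x y z : ℤ, z ≠ 0 ∧ (M : ℤ) * x ^ 2 + p * y ^ 2 = c * z ^ 2 := by
    obtain ⟨e, he⟩ := sq_of_J hc hJ
    refine legendre_aux M p c hM hp.pos hc.pos hMp (hcop M hM hcM) (hcop p hp.pos hcp) e M p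
      ?_ ?_ ?_ ?_ ?_
    · simpa using he
    · obtain ⟨u, hu⟩ := cp.symm.dvd
      exact ⟨-M * u, by linear_combination (-(M : ℤ)) * hu⟩
    · obtain ⟨u, hu⟩ := cM.symm.dvd
      exact ⟨-p * u, by linear_combination (-(p : ℤ)) * hu⟩
    · rw [mul_comm]
      exact not_sq_aux hp hpd
    · rw [mul_comm]
      exact not_sq_aux hc (hnd p hp.pos hcp)
  obtain ⟨x, y, v, hv, hxy⟩ : ∃ x y z : ℤ, z ≠ 0 ∧ x ^ 2 + q * y ^ 2 = c * z ^ 2 := by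
    rcases hq with rfl | ⟨hq, -⟩
    · have : Fact c.Prime := ⟨hc⟩
      obtain ⟨a, b, hab⟩ := Nat.Prime.sq_add_sq (p := c) (by omega)
      refine ⟨a, b, 1, one_ne_zero, ?_⟩
      push_cast
      simp only [one_mul, one_pow, mul_one]
      exact_mod_cast hab
    · have jq : J(-(q : ℤ) | c) = 1 := by
        rw [jacobiSym.neg _ (Nat.odd_iff.mpr (by omega)), ZMod.χ₄_nat_one_mod_four c4, one_mul,
          jacobiSym.quadratic_reciprocity_one_mod_four' hqo c4, J_modEq cq]
        simp
      obtain ⟨e, he⟩ := sq_of_J hc jq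
      have := legendre_aux 1 q c one_pos hq.pos hc.pos (Nat.coprime_one_left _)
        (Nat.coprime_one_left _) (hcop q hq.pos hcq) e 1 0
        (by simpa using he) ?_ (by simp) ?_ ?_
      · simpa using this
      · obtain ⟨u, hu⟩ := cq.symm.dvd
        push_cast at hu ⊢
        exact ⟨-u, by linear_combination (-1 : ℤ) * hu⟩
      · rw [mul_comm]
        exact not_sq_aux hq (fun h => hq.one_lt.ne' (Nat.dvd_one.mp h))
      · rw [mul_comm]
        exact not_sq_aux hc (hnd q hq.pos hcq)
  have hw : w ≠ 0 := by
    rintro rfl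
    apply not_sq_aux hp (m := c) (fun h => by
      rcases (Nat.dvd_prime hc).mp h with h | h
      · exact hp.one_lt.ne' h
      · omega)
    have h1 : (p : ℤ) * z ^ 2 = c * t ^ 2 := by linarith
    -- `p c t ^ 2 = (p z) ^ 2`, so `p c` is a rational square
    have h3 : ((p * c : ℕ) : ℤ) * t ^ 2 = (p * z) ^ 2 := by
      push_cast
      linear_combination (-(p : ℤ)) * h1
    have h4 : t ∣ p * z := by
      rw [← Int.pow_dvd_pow_iff two_ne_zero]
      exact ⟨_, by rw [← h3]; ring⟩
    obtain ⟨u, hu⟩ := h4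
    have h5 : ((p * c : ℕ) : ℤ) = u ^ 2 := by
      have : t ^ 2 ≠ 0 := pow_ne_zero 2 ht
      apply mul_right_cancel₀ this
      rw [h3, hu]
      ring
    refine ⟨u.natAbs, ?_⟩
    zify
    push_cast at h5
    rw [h5, ← sq, sq_abs]
  have hwQ : (w : ℚ) ≠ 0 := by exact_mod_cast hw
  have htQ : (t : ℚ) ≠ 0 := by exact_mod_cast ht
  have hvQ : (v : ℚ) ≠ 0 := by exact_mod_cast hv
  have E1 : (M : ℚ) * w ^ 2 + p * z ^ 2 = c * t ^ 2 := by exact_mod_cast hwz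
  have E2 : (x : ℚ) ^ 2 + q * y ^ 2 = c * v ^ 2 := by exact_mod_cast hxy
  refine ⟨x * t / (v * w), y * t / (v * w), z / w, ?_⟩
  field_simp
  linear_combination (v : ℚ) ^ 2 * E1 - (t : ℚ) ^ 2 * E2

theorem phi_of_aux (p q : ℕ) (hp : p.Prime) (hpo : Odd p) (hq : q = 1 ∨ (q.Prime ∧ Odd q))
    (hpq : p.Coprime q) (k : ℚ) (hkp : ¬ p ∣ k.den) (hkq : q = 1 ∨ ¬ q ∣ k.den)
    (h : p % 4 = 1 ∨ (p % 4 = 3 ∧ q = 1 ∧ ¬ 2 ∣ k.den)) :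
    ∃ x y z : ℚ, 2 + (q : ℚ) * p * k ^ 2 + p * z ^ 2 = x ^ 2 + q * y ^ 2 := by
  have hred := k.reduced
  set s := k.den with hs
  set r := k.num.natAbs with hr
  have hs0 : 0 < s := k.den_pos
  have hqo : Odd q := by
    rcases hq with rfl | hq
    · exact odd_one
    · exact hq.2
  have hM0 : 0 < 2 * s ^ 2 + p * q * r ^ 2 := by positivity
  have cop : ∀ l : ℕ, l.Prime → Odd l → l ∣ p * q → ¬ l ∣ s → (2 * s ^ 2 + p * q * r ^ 2).Coprime l := by
    intro l hl hlo hlpq hls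
    apply Nat.Coprime.symm
    rw [Nat.Prime.coprime_iff_not_dvd hl]
    intro hd
    have h1 : l ∣ 2 * s ^ 2 := (Nat.dvd_add_left (hlpq.mul_right _)).mp hd
    rcases hl.dvd_mul.mp h1 with h2 | h2
    · have := (Nat.prime_dvd_prime_iff_eq hl Nat.prime_two).mp h2
      subst this
      exact absurd hlo (by decide)
    · exact hls (hl.dvd_of_dvd_pow h2)
  have sq4 : ∀ t : ℕ, (t % 2 = 0 ∧ t ^ 2 % 4 = 0) ∨ (t % 2 = 1 ∧ t ^ 2 % 4 = 1) := by
    intro t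
    have : t % 4 = 0 ∨ t % 4 = 1 ∨ t % 4 = 2 ∨ t % 4 = 3 := by omega
    rcases this with h | h | h | h <;> simp [Nat.pow_mod, h] <;> omega
  have hpqo : (p * q) % 2 = 1 := Nat.odd_iff.mp (hpo.mul hqo)
  have hnot : ¬ (r % 2 = 0 ∧ s % 2 = 0) := by
    rintro ⟨h1, h2⟩
    have := Nat.dvd_gcd (Nat.dvd_of_mod_eq_zero h1) (Nat.dvd_of_mod_eq_zero h2)
    rw [hred] at this
    omega
  have hmod : (p * q * r ^ 2) % 4 = ((p * q) % 4) * (r ^ 2 % 4) % 4 := Nat.mul_mod _ _ _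
  have hpq4 : (p * q) % 4 = 1 ∨ (p * q) % 4 = 3 := by omega
  have hM4 : ¬ 4 ∣ 2 * s ^ 2 + p * q * r ^ 2 := by
    rcases sq4 r with ⟨r1, r2⟩ | ⟨r1, r2⟩ <;> rcases sq4 s with ⟨s1, s2⟩ | ⟨s1, s2⟩ <;>
    rcases hpq4 with g | g <;> rw [g, r2] at hmod <;> omega
  have hfin : p % 4 = 1 ∨ (2 * s ^ 2 + p * q * r ^ 2) % 4 = 1 ∨
      (2 * s ^ 2 + p * q * r ^ 2) % 2 = 0 := by
    rcases h with h | ⟨h, rfl, h2⟩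
    · exact Or.inl h
    · right
      rcases sq4 r with ⟨r1, r2⟩ | ⟨r1, r2⟩ <;> rcases sq4 s with ⟨s1, s2⟩ | ⟨s1, s2⟩ <;>
      rw [mul_one, h, r2] at hmod <;> rw [mul_one] <;> omega
  obtain ⟨x, y, z, hxyz⟩ := rep_aux p q (2 * s ^ 2 + p * q * r ^ 2) hp hpo hq hM0 hM4
    (cop p hp hpo (dvd_mul_right _ _) hkp)
    (by
      rcases hkq with rfl | hkq
      · exact Nat.coprime_one_right _
      · rcases hq with rfl | hq
        · exact Nat.coprime_one_right _
        · exact cop q hq.1 hq.2 (dvd_mul_left _ _) hkq) hpq hfin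
  have hsQ : (s : ℚ) ≠ 0 := by exact_mod_cast hs0.ne'
  have hr2 : ((r : ℕ) : ℚ) ^ 2 = (k * s) ^ 2 := by
    have h1 : ((r : ℕ) : ℤ) ^ 2 = k.num ^ 2 := by rw [hr]; exact Int.natAbs_sq _
    have h2 : ((r : ℕ) : ℚ) ^ 2 = (k.num : ℚ) ^ 2 := by exact_mod_cast h1
    rw [h2, hs, Rat.mul_den_eq_num]
  push_cast at hxyz
  rw [hr2] at hxyz
  refine ⟨x / s, y / s, z / s, ?_⟩
  field_simp
  linear_combination hxyz

theorem int_of_phi (p q : ℕ) (k : ℚ)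
    (h : ∃ x y z : ℚ, 2 + (q : ℚ) * p * k ^ 2 + p * z ^ 2 = x ^ 2 + q * y ^ 2) :
    ∃ X Y W Z : ℤ, W ≠ 0 ∧
      X ^ 2 + q * Y ^ 2 = (2 * (k.den : ℤ) ^ 2 + p * q * k.num ^ 2) * W ^ 2 + p * Z ^ 2 := by
  obtain ⟨x, y, z, h⟩ := h
  refine ⟨k.den * x.num * y.den * z.den, k.den * y.num * x.den * z.den, x.den * y.den * z.den,
    k.den * z.num * x.den * y.den, ?_, ?_⟩
  · have := x.den_pos; have := y.den_pos; have := z.den_pos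
    positivity
  · have hx := Rat.mul_den_eq_num x
    have hy := Rat.mul_den_eq_num y
    have hz := Rat.mul_den_eq_num z
    have hk := Rat.mul_den_eq_num k
    qify
    rw [← hx, ← hy, ← hz, ← hk]
    linear_combination (-(k.den * x.den * y.den * z.den : ℚ) ^ 2) * h

theorem num_not_dvd (l : ℕ) (hl : l.Prime) (k : ℚ) (h : l ∣ k.den) : ¬ (l : ℤ) ∣ k.num := by
  intro h2
  have := Nat.dvd_gcd (Int.natCast_dvd.mp h2) h
  rw [k.reduced] at this
  exact hl.one_lt.ne' (Nat.dvd_one.mp this)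

theorem not_phi_q (p q : ℕ) (hq : q.Prime) (hJ : J((p : ℤ) | q) = -1) (k : ℚ) (hk : q ∣ k.den) :
    ¬ ∃ x y z : ℚ, 2 + (q : ℚ) * p * k ^ 2 + p * z ^ 2 = x ^ 2 + q * y ^ 2 := by
  intro h
  have : Fact q.Prime := ⟨hq⟩
  obtain ⟨X, Y, W, Z, hW, h⟩ := int_of_phi p q k h
  have hr := num_not_dvd q hq k hk
  obtain ⟨s, hs⟩ := hk
  rw [hs] at h
  push_cast at h
  apply hW
  refine descent_aux q hq.one_lt p (2 * q * s ^ 2 + p * k.num ^ 2) (-1)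
    (fun X Y h => jacobiSym.prime_dvd_of_eq_neg_one hJ h) ?_ _ X Z W Y le_rfl ?_
  · intro X Y h
    have h' : (q : ℤ) ∣ Y ^ 2 - p * (k.num * X) ^ 2 := by
      obtain ⟨u, hu⟩ := h
      exact ⟨2 * s ^ 2 * X ^ 2 - u, by linear_combination (-1 : ℤ) * hu⟩
    obtain ⟨h1, h2⟩ := jacobiSym.prime_dvd_of_eq_neg_one hJ h'
    exact ⟨((Nat.prime_iff_prime_int.mp hq).dvd_or_dvd h2).resolve_left hr, h1⟩
  · linear_combination h

theorem not_phi_p (p q : ℕ) (hp : p.Prime) (hJ : J(-(q : ℤ) | p) = -1) (k : ℚ) (hk : p ∣ k.den) :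
    ¬ ∃ x y z : ℚ, 2 + (q : ℚ) * p * k ^ 2 + p * z ^ 2 = x ^ 2 + q * y ^ 2 := by
  intro h
  have : Fact p.Prime := ⟨hp⟩
  obtain ⟨X, Y, W, Z, hW, h⟩ := int_of_phi p q k h
  have hr := num_not_dvd p hp k hk
  obtain ⟨s, hs⟩ := hk
  rw [hs] at h
  push_cast at h
  apply hW
  refine descent_aux p hp.one_lt (-q) (2 * p * s ^ 2 + q * k.num ^ 2) 1
    (fun X Y h => jacobiSym.prime_dvd_of_eq_neg_one hJ h) ?_ _ X Y W Z le_rfl ?_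
  · intro X Y h
    have h' : (p : ℤ) ∣ Y ^ 2 - (-q) * (k.num * X) ^ 2 := by
      obtain ⟨u, hu⟩ := h
      exact ⟨u - 2 * s ^ 2 * X ^ 2, by linear_combination hu⟩
    obtain ⟨h1, h2⟩ := jacobiSym.prime_dvd_of_eq_neg_one hJ h'
    exact ⟨((Nat.prime_iff_prime_int.mp hp).dvd_or_dvd h2).resolve_left hr, h1⟩
  · linear_combination h

theorem not_phi_two (k : ℚ) (hk : 2 ∣ k.den) :
    ¬ ∃ x y z : ℚ, 2 + ((1 : ℕ) : ℚ) * (3 : ℕ) * k ^ 2 + (3 : ℕ) * z ^ 2 = x ^ 2 + (1 : ℕ) * y ^ 2 := by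
  intro h
  obtain ⟨X, Y, W, Z, hW, h⟩ := int_of_phi 3 1 k h
  have hr := num_not_dvd 2 Nat.prime_two k hk
  obtain ⟨s, hs⟩ := hk
  rw [hs] at h
  push_cast at h
  apply hW
  refine descent_two (2 * (2 * (s : ℤ)) ^ 2 + 3 * k.num ^ 2) ?_ _ X Y W Z le_rfl ?_
  · rcases Int.even_or_odd' k.num with ⟨u, hu | hu⟩
    · exact absurd ⟨u, hu⟩ hr
    · obtain ⟨v, hv⟩ := (Int.even_mul_succ_self u)
      have : 2 * (2 * (s : ℤ)) ^ 2 + 3 * k.num ^ 2 = 8 * (s ^ 2 + 3 * v) + 3 := by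
        rw [hu]
        linear_combination 12 * hv
      omega
  · linear_combination h

theorem exists_nonres (l : ℕ) (hl : l.Prime) (hlo : Odd l) :
    ∃ p : ℕ, p.Prime ∧ p % 4 = 1 ∧ l < p ∧ J((p : ℤ) | l) = -1 := by
  have : Fact l.Prime := ⟨hl⟩
  obtain ⟨t, ht⟩ := FiniteField.exists_nonsquare (F := ZMod l) (by
    rw [ZMod.ringChar_zmod_n]
    rintro rfl
    exact absurd hlo (by decide))
  have htl : t.val.Coprime l := by
    apply Nat.Coprime.symm
    rw [Nat.Prime.coprime_iff_not_dvd hl]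
    intro h
    apply ht
    have : ((t.val : ℕ) : ZMod l) = 0 := (ZMod.natCast_eq_zero_iff _ _).mpr h
    rw [ZMod.natCast_zmod_val] at this
    rw [this]
    exact IsSquare.zero
  obtain ⟨p, hN, hp, p8, -, hpt, -⟩ := exists_prime_crt l 1 1 1 t.val 1 l hlo odd_one odd_one
    (Nat.coprime_one_right _) (Nat.coprime_one_left _) (Nat.coprime_one_left _) (by norm_num) htl
    (Nat.coprime_one_left _)
  have p8' : p % 8 = 1 := p8
  refine ⟨p, hp, by omega, hN, ?_⟩
  rw [J_modEq hpt]
  apply ZMod.nonsquare_iff_jacobiSym_eq_neg_one.mpr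
  simpa using ht

/-- Julia Robinson's definition of ℤ in ℚ. -/
theorem robinson_def_int_in_rat (n : ℚ) :
    (∃ m : ℤ, n = m) ↔
      ∀ a b : ℚ, a ≠ 0 → b ≠ 0 →
        (((∃ x y z : ℚ, 2 + a * b * 0 ^ 2 + b * z ^ 2 = x ^ 2 + a * y ^ 2) ∧
            ∀ k : ℚ, (∃ x y z : ℚ, 2 + a * b * k ^ 2 + b * z ^ 2 = x ^ 2 + a * y ^ 2) →
              ∃ x y z : ℚ, 2 + a * b * (k + 1) ^ 2 + b * z ^ 2 = x ^ 2 + a * y ^ 2) →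
          ∃ x y z : ℚ, 2 + a * b * n ^ 2 + b * z ^ 2 = x ^ 2 + a * y ^ 2) := by
  constructor
  · rintro ⟨m, rfl⟩ a b - - ⟨h0, hs⟩
    have hN : ∀ j : ℕ, ∃ x y z : ℚ, 2 + a * b * (j : ℚ) ^ 2 + b * z ^ 2 = x ^ 2 + a * y ^ 2 := by
      intro j
      induction j with
      | zero => simpa using h0
      | succ j ih =>
        push_cast
        exact hs _ ih
    have := hN m.natAbs
    have h2 : ((m.natAbs : ℕ) : ℚ) ^ 2 = (m : ℚ) ^ 2 := by
      have h3 : ((m.natAbs : ℕ) : ℤ) ^ 2 = m ^ 2 := Int.natAbs_sq _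
      have h4 : (((m.natAbs : ℕ) : ℤ) : ℚ) ^ 2 = (m : ℚ) ^ 2 := by
        rw [← Int.cast_pow, h3, Int.cast_pow]
      rwa [Int.cast_natCast] at h4
    rwa [h2] at this
  · intro H
    by_contra hn
    have hden : n.den ≠ 1 := fun h => hn ⟨n.num, ((Rat.den_eq_one_iff n).mp h).symm⟩
    obtain ⟨l, hl, hld⟩ := Nat.exists_prime_and_dvd hden
    have hadd : ∀ k : ℚ, (k + 1).den = k.den := fun k => by
      have := Rat.add_natCast_den k 1
      rwa [Nat.cast_one] at this
    rcases hl.eq_two_or_odd' with rfl | hlo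
    · refine not_phi_two n hld (H _ _ (by norm_num) (by norm_num) ⟨?_, ?_⟩)
      · exact phi_of_aux 3 1 Nat.prime_three (by decide) (Or.inl rfl) (by norm_num) 0
          (by simp) (Or.inl rfl) (Or.inr (by simp))
      · intro k hk
        have h2 : ¬ 2 ∣ k.den := fun h => not_phi_two k h hk
        have h3 : ¬ 3 ∣ k.den := fun h => not_phi_p 3 1 Nat.prime_three (by norm_num) k h hk
        refine phi_of_aux 3 1 Nat.prime_three (by decide) (Or.inl rfl) (by norm_num) (k + 1)
          ?_ (Or.inl rfl) (Or.inr ⟨by norm_num, rfl, ?_⟩)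
        · rwa [hadd]
        · rwa [hadd]
    · obtain ⟨p, hp, p4, hlp, hJ⟩ := exists_nonres l hl hlo
      have hpo : Odd p := Nat.odd_iff.mpr (by omega)
      have hpl : p.Coprime l := (Nat.coprime_primes hp hl).mpr (by omega)
      have hJ' : J(-(l : ℤ) | p) = -1 := by
        rw [jacobiSym.neg _ hpo, ZMod.χ₄_nat_one_mod_four p4, one_mul,
          jacobiSym.quadratic_reciprocity_one_mod_four' hlo p4, hJ]
      have hne : ∀ t : ℕ, t.Prime → (t : ℚ) ≠ 0 := fun t ht => by exact_mod_cast ht.ne_zero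
      refine not_phi_q p l hl hJ n hld (H _ _ (hne l hl) (hne p hp) ⟨?_, ?_⟩)
      · refine phi_of_aux p l hp hpo (Or.inr ⟨hl, hlo⟩) hpl 0 ?_ (Or.inr ?_) (Or.inl p4)
        · simpa using hp.one_lt.ne'
        · simpa using hl.one_lt.ne'
      · intro k hk
        refine phi_of_aux p l hp hpo (Or.inr ⟨hl, hlo⟩) hpl (k + 1) ?_ (Or.inr ?_) (Or.inl p4)
        · rw [hadd]
          exact fun h => not_phi_p p l hp hJ' k h hk
        · rw [hadd]
          exact fun h => not_phi_q p l hl hJ k h hk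
end

section
/- Let p be a prime with p ≡ 3 (mod 4) and let k ∈ ℚ. Then there exist x, y, z ∈ ℚ with 2 + p·k² + p·z² = x² + y² if and only if the denominator of k (in lowest terms) is divisible neither by p nor by 2 (equivalently, v_p(k) ≥ 0 and v_2(k) ≥ 0). -/
open scoped NumberTheorySymbols in
theorem aux_exists_q (p N : ℕ) (hp : p.Prime) (hp4 : p % 4 = 3) (hN0 : 0 < N)
    (hNp : ¬ p ∣ N) (hN : N % 4 = 1 ∨ N % 4 = 2) :
    ∃ q : ℕ, q.Prime ∧ q % 4 = 1 ∧ N < q ∧ p < q ∧ (N : ℤ) ∣ (p : ℤ) - q ∧ (p : ℤ) ∣ (N : ℤ) - q ∧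
      ∃ g : ℤ, (q : ℤ) ∣ N * g ^ 2 + p := by
  have hpodd : Odd p := Nat.odd_iff.mpr (by omega)
  have hcopNp : Nat.Coprime p N := (Nat.Prime.coprime_iff_not_dvd hp).mpr hNp
  -- prime selection
  have key : ∀ M r : ℕ, M % 2 = 1 → M ∣ N → r % 4 = 1 → r < 8 → ∃ q : ℕ, q.Prime ∧ q % 8 = r ∧
      N + p < q ∧ q ≡ p [MOD M] ∧ q ≡ N [MOD p] := by
    intro M r hM hMN hr hr8
    have hMp : Nat.Coprime M p := (Nat.Coprime.coprime_dvd_right hMN hcopNp).symm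
    have h8 : Nat.Coprime 8 (M * p) := by
      rw [show 8 = 2 ^ 3 by norm_num]
      apply Nat.Coprime.pow_left
      rw [Nat.coprime_two_left]
      exact (Nat.odd_iff.mpr hM).mul hpodd
    obtain ⟨c, hc1, hc2⟩ := Nat.chineseRemainder hMp p N
    obtain ⟨d, hd1, hd2⟩ := Nat.chineseRemainder h8 r c
    have hdM : d ≡ p [MOD M] := (hd2.of_mul_right p).trans hc1
    have hdp : d ≡ N [MOD p] := (hd2.of_mul_left M).trans hc2
    have hu : Nat.Coprime d (8 * (M * p)) := by
      refine Nat.Coprime.mul_right ?_ (Nat.Coprime.mul_right ?_ ?_)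
      · rw [show 8 = 2 ^ 3 by norm_num]
        apply Nat.Coprime.pow_right
        rw [Nat.coprime_two_right, Nat.odd_iff]
        have : d % 8 = r % 8 := hd1
        omega
      · rw [Nat.Coprime, hdM.gcd_eq]; exact hMp.symm
      · rw [Nat.Coprime, hdp.gcd_eq]; exact hcopNp.symm
    have : NeZero (8 * (M * p)) := ⟨by
      have := hp.pos
      have : 0 < M := by omega
      positivity⟩
    obtain ⟨q, hq1, hq2, hq3⟩ := Nat.forall_exists_prime_gt_and_eq_mod
      ((ZMod.isUnit_iff_coprime d (8 * (M * p))).mpr hu) (N + p)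
    have hqd : q ≡ d [MOD 8 * (M * p)] := (ZMod.natCast_eq_natCast_iff _ _ _).mp hq3
    have hq8 : q ≡ r [MOD 8] := (hqd.of_mul_right _).trans hd1
    have hqMp := hqd.of_mul_left 8
    refine ⟨q, hq2, ?_, hq1, (hqMp.of_mul_right _).trans hdM, (hqMp.of_mul_left _).trans hdp⟩
    have : q % 8 = r % 8 := hq8
    omega
  have fin : ∀ q : ℕ, q.Prime → q % 4 = 1 → N + p < q → q ≡ p [MOD N] → q ≡ N [MOD p] →
      J(N | q) * J(p | q) = 1 → ∃ q : ℕ, q.Prime ∧ q % 4 = 1 ∧ N < q ∧ p < q ∧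
      (N : ℤ) ∣ (p : ℤ) - q ∧ (p : ℤ) ∣ (N : ℤ) - q ∧
      ∃ g : ℤ, (q : ℤ) ∣ N * g ^ 2 + p := by
    intro q hq hq4 hlt h1 h2 hJ
    refine ⟨q, hq, hq4, by omega, by omega, h1.dvd, h2.dvd, ?_⟩
    have : Fact q.Prime := ⟨hq⟩
    have hqodd : Odd q := Nat.odd_iff.mpr (by omega)
    have hJ2 : J(-(N * p : ℤ) | q) = 1 := by
      rw [jacobiSym.neg _ hqodd, jacobiSym.mul_left, hJ, ZMod.χ₄_nat_one_mod_four hq4, mul_one]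
    obtain ⟨s, hs⟩ := ZMod.isSquare_of_jacobiSym_eq_one hJ2
    have hNq : (N : ZMod q) ≠ 0 := by
      intro h
      rw [ZMod.natCast_eq_zero_iff] at h
      have := Nat.le_of_dvd hN0 h
      omega
    obtain ⟨g, hg⟩ := ZMod.intCast_surjective (s / N : ZMod q)
    refine ⟨g, ?_⟩
    rw [← ZMod.intCast_zmod_eq_zero_iff_dvd]
    push_cast at hs ⊢
    rw [hg]
    field_simp
    linear_combination -hs
  rcases hN with h | h
  · obtain ⟨q, hq, hq8, hlt, h1, h2⟩ := key N 1 (by omega) dvd_rfl (by norm_num) (by norm_num)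
    refine fin q hq (by omega) hlt h1 h2 ?_
    have hNodd : Odd N := Nat.odd_iff.mpr (by omega)
    rw [jacobiSym.quadratic_reciprocity_one_mod_four' hNodd (by omega : q % 4 = 1),
      jacobiSym.quadratic_reciprocity_one_mod_four' hpodd (by omega : q % 4 = 1),
      jacobiSym.mod_left' (a₁ := q) (a₂ := p) (b := N) (by exact_mod_cast h1),
      jacobiSym.mod_left' (a₁ := q) (a₂ := N) (b := p) (by exact_mod_cast h2),
      jacobiSym.quadratic_reciprocity_one_mod_four h hpodd, ← sq,
      jacobiSym.sq_one (by simpa using hcopNp)]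
  · obtain ⟨M, rfl⟩ : 2 ∣ N := by omega
    have hModd : Odd M := Nat.odd_iff.mpr (by omega)
    have hpM : Nat.Coprime p M := Nat.Coprime.coprime_dvd_right (Dvd.intro_left 2 rfl) hcopNp
    have h12 := jacobiSym.eq_one_or_neg_one (a := p) (b := M) (by simpa using hpM)
    have h13 := jacobiSym.eq_one_or_neg_one (a := (2 * M : ℕ)) (b := p) (by
      rw [Int.gcd_natCast_natCast]; exact hcopNp.symm)
    have step : ∀ r : ℕ, r % 4 = 1 → r < 8 → ZMod.χ₈ (r : ℕ) * (J(p | M) * J((2 * M : ℕ) | p)) = 1 →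
      ∃ q : ℕ, q.Prime ∧ q % 4 = 1 ∧ 2 * M < q ∧ p < q ∧
      ((2 * M : ℕ) : ℤ) ∣ (p : ℤ) - q ∧ (p : ℤ) ∣ ((2 * M : ℕ) : ℤ) - q ∧
      ∃ g : ℤ, (q : ℤ) ∣ (2 * M : ℕ) * g ^ 2 + p := by
      intro r hr hr8 hx
      obtain ⟨q, hq, hq8, hlt, h1, h2⟩ := key M r (by omega) (Dvd.intro_left 2 rfl) hr hr8
      have hqodd : Odd q := Nat.odd_iff.mpr (by omega)
      refine fin q hq (by omega) hlt ?_ h2 ?_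
      · refine (Nat.modEq_and_modEq_iff_modEq_mul ?_).mp ⟨?_, h1⟩
        · rwa [Nat.coprime_two_left]
        · show q % 2 = p % 2
          omega
      · rw [jacobiSym.quadratic_reciprocity_one_mod_four' hpodd (by omega : q % 4 = 1),
          jacobiSym.mod_left' (a₁ := q) (a₂ := (2 * M : ℕ)) (b := p) (by exact_mod_cast h2)]
        conv_lhs => rw [Nat.cast_mul, jacobiSym.mul_left]
        rw [jacobiSym.quadratic_reciprocity_one_mod_four' hModd (by omega : q % 4 = 1),
          jacobiSym.mod_left' (a₁ := q) (a₂ := p) (b := M) (by exact_mod_cast h1),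
          Nat.cast_two, jacobiSym.at_two hqodd, ZMod.χ₈_nat_mod_eight, hq8, mul_assoc]
        push_cast at hx ⊢
        exact hx
    have e1 : ZMod.χ₈ ((1 : ℕ) : ZMod 8) = 1 := by decide
    have e5 : ZMod.χ₈ ((5 : ℕ) : ZMod 8) = -1 := by decide
    rcases h12 with a | a <;> rcases h13 with b | b
    · exact step 1 (by norm_num) (by norm_num) (by rw [e1, a, b]; norm_num)
    · exact step 5 (by norm_num) (by norm_num) (by rw [e5, a, b]; norm_num)
    · exact step 5 (by norm_num) (by norm_num) (by rw [e5, a, b]; norm_num)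
    · exact step 1 (by norm_num) (by norm_num) (by rw [e1, a, b]; norm_num)

theorem aux_not_sq (p m : ℕ) (hp : p.Prime) (hm : ¬ p ∣ m) : ¬ IsSquare (p * m) := by
  rintro ⟨r, hr⟩
  have : p ∣ r := by
    have : p ∣ r * r := ⟨m, hr.symm⟩
    exact (hp.dvd_mul.mp this).elim id id
  obtain ⟨s, rfl⟩ := this
  apply hm
  refine ⟨s * s, ?_⟩
  apply Nat.eq_of_mul_eq_mul_left hp.pos
  rw [hr]; ring

theorem aux_bound (A s a b : ℕ) (hs : s = Nat.sqrt A) (hA : ¬ IsSquare A) (ha : a < s + 1)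
    (hb : b < s + 1) : ((a : ℤ) - b) ^ 2 < A := by
  have h1 : s * s ≤ A := hs ▸ Nat.sqrt_le A
  have h2 : s * s ≠ A := fun h => hA ⟨s, h.symm⟩
  have h3 : s * s < A := lt_of_le_of_ne h1 h2
  have h4 : ((a : ℤ) - b) ^ 2 ≤ (s : ℤ) ^ 2 := by
    apply sq_le_sq'  <;> omega
  have h5 : (s : ℤ) * s < A := by exact_mod_cast h3
  nlinarith

set_option maxHeartbeats 1000000 in
theorem aux_legendre (p q N : ℕ) (hp : p.Prime) (hq : q.Prime) (hN0 : 0 < N)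
    (hNp : ¬ p ∣ N) (hNq : ¬ q ∣ N) (hpq : p ≠ q) (h1 : (N : ℤ) ∣ (p : ℤ) - q)
    (h2 : (p : ℤ) ∣ (N : ℤ) - q) (g : ℤ) (h3 : (q : ℤ) ∣ N * g ^ 2 + p) :
    ∃ w z t : ℤ, t ≠ 0 ∧ q * (N * w ^ 2 + p * z ^ 2) = t ^ 2 := by
  have hpq' : ¬ p ∣ q := fun h => hpq ((Nat.prime_dvd_prime_iff_eq hp hq).mp h)
  have sw := aux_not_sq p q hp hpq'
  have sz := aux_not_sq q N hq hNq
  have su := aux_not_sq p N hp hNp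
  have hp0 := hp.pos
  have hq0 := hq.pos
  have : NeZero N := ⟨hN0.ne'⟩
  have : NeZero p := ⟨hp0.ne'⟩
  have : NeZero q := ⟨hq0.ne'⟩
  set W := Nat.sqrt (p * q) with hW
  set Z := Nat.sqrt (q * N) with hZ
  set U := Nat.sqrt (p * N) with hU
  have lW : p * q < (W + 1) * (W + 1) := Nat.lt_succ_sqrt _
  have lZ : q * N < (Z + 1) * (Z + 1) := Nat.lt_succ_sqrt _
  have lU : p * N < (U + 1) * (U + 1) := Nat.lt_succ_sqrt _
  have hcard : N * (p * q) < (W + 1) * ((Z + 1) * (U + 1)) := by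
    have : (N * (p * q)) * (N * (p * q)) <
        ((W + 1) * ((Z + 1) * (U + 1))) * ((W + 1) * ((Z + 1) * (U + 1))) := by
      calc (N * (p * q)) * (N * (p * q)) = (p * q) * ((q * N) * (p * N)) := by ring
        _ < ((W + 1) * (W + 1)) * (((Z + 1) * (Z + 1)) * ((U + 1) * (U + 1))) := by
            gcongr
        _ = _ := by ring
    exact lt_of_mul_self_lt_mul_self₀ (Nat.zero_le _) this
  let f : ℕ × ℕ × ℕ → ZMod N × ZMod p × ZMod q := fun v =>
    (((v.2.2 : ℤ) - v.2.1 : ℤ), ((v.1 : ℤ) - v.2.2 : ℤ), ((v.1 : ℤ) - g * v.2.1 : ℤ))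
  obtain ⟨⟨a1, a2, a3⟩, ha, ⟨b1, b2, b3⟩, hb, hne, hf⟩ :=
    Finset.exists_ne_map_eq_of_card_lt_of_maps_to
      (s := Finset.range (W + 1) ×ˢ (Finset.range (Z + 1) ×ˢ Finset.range (U + 1)))
      (t := (Finset.univ : Finset (ZMod N × ZMod p × ZMod q))) (f := f)
      (by simpa [Finset.card_product, ZMod.card] using hcard)
      (by intro x _; simp)
  simp only [Finset.coe_product, Finset.mem_product, Finset.mem_range, Finset.mem_coe,
    Set.mem_prod] at ha hb
  obtain ⟨ha1, ha2, ha3⟩ := ha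
  obtain ⟨hb1, hb2, hb3⟩ := hb
  simp only [f, Prod.mk.injEq] at hf
  obtain ⟨f1, f2, f3⟩ := hf
  have bw := aux_bound _ W a1 b1 hW sw ha1 hb1
  have bz := aux_bound _ Z a2 b2 hZ sz ha2 hb2
  have bu := aux_bound _ U a3 b3 hU su ha3 hb3
  rw [ZMod.intCast_eq_intCast_iff_dvd_sub] at f1 f2 f3
  have hne' : ¬ (((a1 : ℤ) - b1) = 0 ∧ ((a2 : ℤ) - b2) = 0 ∧ ((a3 : ℤ) - b3) = 0) := by
    rintro ⟨e1, e2, e3⟩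
    apply hne
    simp only [Prod.mk.injEq]
    omega
  obtain ⟨w, hw⟩ : ∃ w : ℤ, w = (a1 : ℤ) - b1 := ⟨_, rfl⟩
  obtain ⟨z, hz⟩ : ∃ z : ℤ, z = (a2 : ℤ) - b2 := ⟨_, rfl⟩
  obtain ⟨u, hu⟩ : ∃ u : ℤ, u = (a3 : ℤ) - b3 := ⟨_, rfl⟩
  rw [← hw] at bw hne'
  rw [← hz] at bz hne'
  rw [← hu] at bu hne'
  have g1 : (N : ℤ) ∣ z - u := by
    convert f1 using 1; rw [hz, hu]; ring
  have g2 : (p : ℤ) ∣ u - w := by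
    convert f2 using 1; rw [hw, hu]; ring
  have g3 : (q : ℤ) ∣ g * z - w := by
    convert f3 using 1; rw [hw, hz]; ring
  clear f1 f2 f3
  have d1 : (N : ℤ) ∣ N * w ^ 2 + p * z ^ 2 - q * u ^ 2 := by
    obtain ⟨c, hc⟩ := g1
    obtain ⟨d, hd⟩ := h1
    exact ⟨w ^ 2 + p * c * (z + u) + d * u ^ 2, by
      linear_combination (p : ℤ) * (z + u) * hc + u ^ 2 * hd⟩
  have d2 : (p : ℤ) ∣ N * w ^ 2 + p * z ^ 2 - q * u ^ 2 := by
    obtain ⟨c, hc⟩ := g2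
    obtain ⟨d, hd⟩ := h2
    exact ⟨z ^ 2 - N * c * (w + u) + d * u ^ 2, by
      linear_combination -(N : ℤ) * (w + u) * hc + u ^ 2 * hd⟩
  have d3 : (q : ℤ) ∣ N * w ^ 2 + p * z ^ 2 - q * u ^ 2 := by
    obtain ⟨c, hc⟩ := g3
    obtain ⟨d, hd⟩ := h3
    exact ⟨-u ^ 2 - N * c * (g * z + w) + d * z ^ 2, by
      linear_combination -(N : ℤ) * (g * z + w) * hc + z ^ 2 * hd⟩
  have c1 : IsCoprime (N : ℤ) p := by
    rw [Nat.isCoprime_iff_coprime]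
    exact ((Nat.Prime.coprime_iff_not_dvd hp).mpr hNp).symm
  have c2 : IsCoprime (N : ℤ) q := by
    rw [Nat.isCoprime_iff_coprime]
    exact ((Nat.Prime.coprime_iff_not_dvd hq).mpr hNq).symm
  have c3 : IsCoprime (p : ℤ) q := by
    rw [Nat.isCoprime_iff_coprime]
    exact ((Nat.Prime.coprime_iff_not_dvd hp).mpr hpq')
  have d4 : (N : ℤ) * p * q ∣ N * w ^ 2 + p * z ^ 2 - q * u ^ 2 :=
    (c2.mul_left c3).mul_dvd (c1.mul_dvd d1 d2) d3
  obtain ⟨c, hc⟩ := d4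
  push_cast at bw bz bu
  have pN : (0 : ℤ) < N := by exact_mod_cast hN0
  have pp : (0 : ℤ) < p := by exact_mod_cast hp0
  have pq : (0 : ℤ) < q := by exact_mod_cast hq0
  have k1 : (N : ℤ) * w ^ 2 < N * (p * q) := by gcongr
  have k2 : (p : ℤ) * z ^ 2 < p * (q * N) := by gcongr
  have k3 : (q : ℤ) * u ^ 2 < q * (p * N) := by gcongr
  have l1 : (0 : ℤ) ≤ (N : ℤ) * w ^ 2 := by positivity
  have l2 : (0 : ℤ) ≤ (p : ℤ) * z ^ 2 := by positivity
  have l3 : (0 : ℤ) ≤ (q : ℤ) * u ^ 2 := by positivity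
  have pD : (0 : ℤ) < N * p * q := by positivity
  have cu : c < 2 := by
    by_contra h
    have : (N : ℤ) * p * q * 2 ≤ N * p * q * c := by gcongr; omega
    nlinarith
  have cl : -1 < c := by
    by_contra h
    have : (N : ℤ) * p * q * c ≤ N * p * q * (-1) := by gcongr; omega
    nlinarith
  have : c = 0 ∨ c = 1 := by omega
  rcases this with rfl | rfl
  · refine ⟨w, z, q * u, ?_, by linear_combination (q : ℤ) * hc⟩
    intro h
    have u0 : u = 0 := by
      rcases mul_eq_zero.mp h with h | h
      · omega
      · exact h
    subst u0
    have hc0 : (N : ℤ) * w ^ 2 + p * z ^ 2 = 0 := by linear_combination hc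
    have e1 : (N : ℤ) * w ^ 2 = 0 := by linarith
    have e2 : (p : ℤ) * z ^ 2 = 0 := by linarith
    apply hne'
    refine ⟨?_, ?_, rfl⟩
    · rcases mul_eq_zero.mp e1 with h | h
      · omega
      · exact pow_eq_zero_iff (two_ne_zero) |>.mp h
    · rcases mul_eq_zero.mp e2 with h | h
      · omega
      · exact pow_eq_zero_iff (two_ne_zero) |>.mp h
  · refine ⟨w * (q * u) + q * p * z, z * (q * u) - q * N * w, (q * u) ^ 2 + q * N * (q * p), ?_, ?_⟩
    · positivity
    · have hc' : q * (N * w ^ 2 + p * z ^ 2) = (q * u) ^ 2 + q * N * (q * p : ℤ) := by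
        linear_combination (q : ℤ) * hc
      linear_combination ((q * u) ^ 2 + q * N * (q * p : ℤ)) * hc'

theorem aux_suff (p N : ℕ) (hp : p.Prime) (hp4 : p % 4 = 3) (hN0 : 0 < N)
    (hNp : ¬ p ∣ N) (hN : N % 4 = 1 ∨ N % 4 = 2) :
    ∃ x y z : ℚ, (N : ℚ) + p * z ^ 2 = x ^ 2 + y ^ 2 := by
  obtain ⟨q, hq, hq4, hqN, hqp, h1, h2, g, h3⟩ := aux_exists_q p N hp hp4 hN0 hNp hN
  have hNq : ¬ q ∣ N := fun h => by
    have := Nat.le_of_dvd hN0 h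
    omega
  obtain ⟨w, z, t, ht, h⟩ := aux_legendre p q N hp hq hN0 hNp hNq (by omega) h1 h2 g h3
  have : Fact q.Prime := ⟨hq⟩
  obtain ⟨a, b, hab⟩ := Nat.Prime.sq_add_sq (p := q) (by omega)
  have hQ : (q : ℚ) * (N * w ^ 2 + p * z ^ 2) = t ^ 2 := by exact_mod_cast h
  have habQ : (a : ℚ) ^ 2 + b ^ 2 = q := by exact_mod_cast hab
  have htQ : (t : ℚ) ≠ 0 := by exact_mod_cast ht
  have hq0 : (q : ℚ) ≠ 0 := by exact_mod_cast hq.ne_zero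
  have hw : (w : ℚ) ≠ 0 := by
    intro hw
    rw [hw] at hQ
    have hz : (z : ℚ) ≠ 0 := by
      intro hz
      rw [hz] at hQ
      apply htQ
      apply pow_eq_zero_iff (two_ne_zero) |>.mp
      rw [← hQ]; ring
    apply aux_not_sq p q hp (fun h => by
      have := (Nat.prime_dvd_prime_iff_eq hp hq).mp h
      omega)
    rw [← Rat.isSquare_natCast_iff]
    refine ⟨t / z, ?_⟩
    field_simp
    push_cast
    linear_combination hQ
  refine ⟨a * t / (q * w), b * t / (q * w), z / w, ?_⟩
  field_simp
  linear_combination (q : ℚ) * hQ - t ^ 2 * habQ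

theorem aux_descent (p l : ℕ) (hl : l.Prime)
    (H : ∀ X Y K Z D : ℤ, X ^ 2 + Y ^ 2 = 2 * D ^ 2 + p * (K ^ 2 + Z ^ 2) → (l : ℤ) ∣ D →
      (l : ℤ) ∣ X ∧ (l : ℤ) ∣ Y ∧ (l : ℤ) ∣ K ∧ (l : ℤ) ∣ Z) :
    ∀ (D : ℕ), 0 < D → ∀ X Y K Z : ℤ, X ^ 2 + Y ^ 2 = 2 * (D : ℤ) ^ 2 + p * (K ^ 2 + Z ^ 2) →
      ¬ l ∣ ((K : ℚ) / D).den := by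
  intro D
  induction D using Nat.strong_induction_on with
  | _ D ih =>
    intro hD X Y K Z h
    by_cases hd : l ∣ D
    · obtain ⟨⟨X, rfl⟩, ⟨Y, rfl⟩, ⟨K, rfl⟩, ⟨Z, rfl⟩⟩ :=
        H X Y K Z D h (by exact_mod_cast hd)
      obtain ⟨D, rfl⟩ := hd
      have hD0 : 0 < D := Nat.pos_of_mul_pos_left hD
      have hl0 : (l : ℤ) ^ 2 ≠ 0 := by
        have := hl.ne_zero
        positivity
      have hlQ : (l : ℚ) ≠ 0 := by exact_mod_cast hl.ne_zero
      have := ih D (by nlinarith [hl.two_le]) hD0 X Y K Z (by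
        apply mul_left_cancel₀ hl0
        push_cast at h
        linear_combination h)
      push_cast
      rwa [mul_div_mul_left _ _ hlQ]
    · intro hh
      apply hd
      have h1 : (((K : ℚ) / D).den : ℤ) ∣ D := by
        have := Rat.den_dvd K D
        rw [Rat.divInt_eq_div] at this
        exact_mod_cast this
      exact hh.trans (by exact_mod_cast h1)

theorem aux_sumsq (p : ℕ) (hp : p.Prime) (hp4 : p % 4 = 3) (X Y : ℤ)
    (h : (p : ℤ) ∣ X ^ 2 + Y ^ 2) : (p : ℤ) ∣ X ∧ (p : ℤ) ∣ Y := by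
  have : Fact p.Prime := ⟨hp⟩
  have hy : (p : ℤ) ∣ Y := by
    by_contra hy
    have hy0 : (Y : ZMod p) ≠ 0 := by rwa [Ne, ZMod.intCast_zmod_eq_zero_iff_dvd]
    rw [← ZMod.intCast_zmod_eq_zero_iff_dvd] at h
    push_cast at h
    have : IsSquare (-1 : ZMod p) := ⟨X / Y, by
      field_simp
      linear_combination -h⟩
    exact ZMod.exists_sq_eq_neg_one_iff.mp this hp4
  refine ⟨?_, hy⟩
  have : (p : ℤ) ∣ X ^ 2 := by
    rw [← Int.dvd_add_left (Dvd.dvd.pow hy two_ne_zero)]; exact h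
  exact (Nat.prime_iff_prime_int.mp hp).dvd_of_dvd_pow this

theorem aux_two (p : ℕ) (hp4 : p % 4 = 3) (X Y K Z D : ℤ)
    (h : X ^ 2 + Y ^ 2 = 2 * D ^ 2 + p * (K ^ 2 + Z ^ 2)) (hD : (2 : ℤ) ∣ D) :
    (2 : ℤ) ∣ X ∧ (2 : ℤ) ∣ Y ∧ (2 : ℤ) ∣ K ∧ (2 : ℤ) ∣ Z := by
  obtain ⟨d, rfl⟩ := hD
  have sq8 : ∀ x : ℤ, (x ^ 2 % 8 = 1 ∧ x % 2 = 1) ∨ ((x ^ 2 % 8 = 0 ∨ x ^ 2 % 8 = 4) ∧ x % 2 = 0) := by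
    intro x
    have : x % 8 = 0 ∨ x % 8 = 1 ∨ x % 8 = 2 ∨ x % 8 = 3 ∨ x % 8 = 4 ∨ x % 8 = 5 ∨ x % 8 = 6 ∨
      x % 8 = 7 := by omega
    have e : x % 2 = x % 8 % 2 := by omega
    rcases this with h | h | h | h | h | h | h | h <;> simp [e, sq, Int.mul_emod, h]
  obtain ⟨r, s, hs, hr⟩ : ∃ r s : ℤ, (p : ℤ) = 8 * s + r ∧ (r = 3 ∨ r = 7) :=
    ⟨((p % 8 : ℕ) : ℤ), ((p / 8 : ℕ) : ℤ), by omega, by omega⟩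
  rw [hs] at h
  have h' : X ^ 2 + Y ^ 2 = 8 * (d ^ 2 + s * (K ^ 2 + Z ^ 2)) + r * (K ^ 2 + Z ^ 2) := by
    linear_combination h
  generalize d ^ 2 + s * (K ^ 2 + Z ^ 2) = c at h'
  have := sq8 X
  have := sq8 Y
  have := sq8 K
  have := sq8 Z
  rcases hr with rfl | rfl <;> omega

theorem aux_p (p : ℕ) (hp : p.Prime) (hp4 : p % 4 = 3) (X Y K Z D : ℤ)
    (h : X ^ 2 + Y ^ 2 = 2 * D ^ 2 + p * (K ^ 2 + Z ^ 2)) (hD : (p : ℤ) ∣ D) :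
    (p : ℤ) ∣ X ∧ (p : ℤ) ∣ Y ∧ (p : ℤ) ∣ K ∧ (p : ℤ) ∣ Z := by
  obtain ⟨d, rfl⟩ := hD
  obtain ⟨⟨x, rfl⟩, ⟨y, rfl⟩⟩ := aux_sumsq p hp hp4 X Y
    ⟨2 * p * d ^ 2 + (K ^ 2 + Z ^ 2), by linear_combination h⟩
  have hp0 : (p : ℤ) ≠ 0 := by exact_mod_cast hp.ne_zero
  refine ⟨Dvd.intro _ rfl, Dvd.intro _ rfl, aux_sumsq p hp hp4 K Z
    ⟨x ^ 2 + y ^ 2 - 2 * d ^ 2, ?_⟩⟩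
  apply mul_left_cancel₀ hp0
  linear_combination -h

/-- Key lemma for Julia Robinson's definition of ℤ in ℚ:
for a prime `p ≡ 3 mod 4` and `k ∈ ℚ`, the quadratic condition
`∃ x y z, 2 + p k² + p z² = x² + y²` holds iff `v_p(k) ≥ 0` and `v_2(k) ≥ 0`,
i.e., the denominator of `k` is divisible neither by `p` nor by `2`. -/
theorem robinson_key_lemma (p : ℕ) (hp : p.Prime) (hp4 : p % 4 = 3) (k : ℚ) :
    (∃ x y z : ℚ, 2 + (p : ℚ) * k ^ 2 + (p : ℚ) * z ^ 2 = x ^ 2 + y ^ 2) ↔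
      (¬ p ∣ k.den ∧ ¬ 2 ∣ k.den) := by
  constructor
  · rintro ⟨x, y, z, h⟩
    have hx : (x.den : ℚ) ≠ 0 := by exact_mod_cast x.den_nz
    have hy : (y.den : ℚ) ≠ 0 := by exact_mod_cast y.den_nz
    have hz : (z.den : ℚ) ≠ 0 := by exact_mod_cast z.den_nz
    have hk : (k.den : ℚ) ≠ 0 := by exact_mod_cast k.den_nz
    have ex : (x.num : ℚ) = x * x.den := (Rat.mul_den_eq_num x).symm
    have ey : (y.num : ℚ) = y * y.den := (Rat.mul_den_eq_num y).symm
    have ez : (z.num : ℚ) = z * z.den := (Rat.mul_den_eq_num z).symm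
    have ek : (k.num : ℚ) = k * k.den := (Rat.mul_den_eq_num k).symm
    have hD : 0 < x.den * y.den * z.den * k.den := by
      have := x.den_pos
      have := y.den_pos
      have := z.den_pos
      have := k.den_pos
      positivity
    have E : (x.num * y.den * z.den * k.den) ^ 2 + (y.num * x.den * z.den * k.den) ^ 2 =
        2 * ((x.den * y.den * z.den * k.den : ℕ) : ℤ) ^ 2 +
        p * ((k.num * x.den * y.den * z.den) ^ 2 + (z.num * x.den * y.den * k.den) ^ 2) := by
      have : ((x.num : ℚ) * y.den * z.den * k.den) ^ 2 + (y.num * x.den * z.den * k.den) ^ 2 =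
        2 * (x.den * y.den * z.den * k.den) ^ 2 +
        p * ((k.num * x.den * y.den * z.den) ^ 2 + (z.num * x.den * y.den * k.den) ^ 2) := by
        rw [ex, ey, ez, ek]
        linear_combination -(x.den * y.den * z.den * k.den : ℚ) ^ 2 * h
      exact_mod_cast this
    have ke : (((k.num * x.den * y.den * z.den : ℤ) : ℚ) / (x.den * y.den * z.den * k.den : ℕ)) = k := by
      push_cast
      rw [ek]
      field_simp
    constructor
    · have := aux_descent p p hp (aux_p p hp hp4) _ hD _ _ _ _ E
      rwa [ke] at this
    · have := aux_descent p 2 Nat.prime_two (aux_two p hp4) _ hD _ _ _ _ E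
      rwa [ke] at this
  · rintro ⟨h1, h2⟩
    obtain ⟨m, hm⟩ : ∃ m : ℕ, m = k.num.natAbs := ⟨_, rfl⟩
    obtain ⟨n, hn⟩ : ∃ n : ℕ, n = k.den := ⟨_, rfl⟩
    have hn0 : 0 < n := hn ▸ k.den_pos
    rw [← hn] at h1 h2
    have hk2 : k ^ 2 * n ^ 2 = m ^ 2 := by
      rw [hm, hn, ← mul_pow, Rat.mul_den_eq_num, Nat.cast_natAbs, Int.cast_abs, sq_abs]
    have hNp : ¬ p ∣ 2 * n ^ 2 + p * m ^ 2 := by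
      intro h
      rw [← Nat.dvd_add_iff_left (Dvd.intro _ rfl)] at h
      rcases hp.dvd_mul.mp h with h | h
      · have := Nat.le_of_dvd (by norm_num) h
        interval_cases p <;> omega
      · exact h1 (hp.dvd_of_dvd_pow h)
    have hN : (2 * n ^ 2 + p * m ^ 2) % 4 = 1 ∨ (2 * n ^ 2 + p * m ^ 2) % 4 = 2 := by
      have hn4 : n % 4 = 1 ∨ n % 4 = 3 := by omega
      have hm4 : m % 4 = 0 ∨ m % 4 = 1 ∨ m % 4 = 2 ∨ m % 4 = 3 := by omega
      rcases hn4 with a | a <;> rcases hm4 with b | b | b | b <;>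
        simp [Nat.add_mod, Nat.mul_mod, Nat.pow_mod, a, b, hp4]
    obtain ⟨x, y, z, h⟩ := aux_suff p _ hp hp4 (by positivity) hNp hN
    have hnQ : (n : ℚ) ≠ 0 := by exact_mod_cast hn0.ne'
    refine ⟨x / n, y / n, z / n, ?_⟩
    push_cast at h
    field_simp
    linear_combination h + p * hk2
end

section
/- Let p be a prime with p ≡ 3 (mod 4). Then for every t in the field ℚ_p of p-adic numbers, t lies in the ring ℤ_p of p-adic integers (i.e., ‖t‖_p ≤ 1) if and only if there exist x, y, z ∈ ℚ_p with 2 + p·t² = x² + y² − p·z². -/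
theorem aux_unit (p : ℕ) [Fact p.Prime] (hp4 : p % 4 = 3) (c : ℤ_[p]) : ‖c ^ 2 + 1‖ = 1 := by
  by_contra h
  have h1 : ‖c ^ 2 + 1‖ < 1 := lt_of_le_of_ne (PadicInt.norm_le_one _) h
  have h2 : c ^ 2 + 1 ∈ IsLocalRing.maximalIdeal ℤ_[p] := by
    rw [IsLocalRing.mem_maximalIdeal]
    exact PadicInt.mem_nonunits.2 h1
  rw [← PadicInt.ker_toZMod, RingHom.mem_ker] at h2
  simp only [map_add, map_pow, map_one] at h2
  exact ZMod.mod_four_ne_three_of_sq_eq_neg_one (eq_neg_of_add_eq_zero_left h2) hp4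

theorem aux_le (p : ℕ) [Fact p.Prime] (hp4 : p % 4 = 3) (a b : ℚ_[p]) (h : ‖a‖ ≤ ‖b‖) :
    ‖a ^ 2 + b ^ 2‖ = ‖b‖ ^ 2 := by
  by_cases hb : b = 0
  · subst hb
    have : a = 0 := by simpa using h
    simp [this]
  have hc : ‖a / b‖ ≤ 1 := by
    rw [norm_div]
    exact div_le_one_of_le₀ h (norm_nonneg _)
  have h1 : ‖(a / b) ^ 2 + 1‖ = 1 := by
    obtain ⟨u, hu⟩ : ∃ u : ℤ_[p], (u : ℚ_[p]) = a / b := ⟨⟨a / b, hc⟩, rfl⟩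
    rw [← hu]
    have := aux_unit p hp4 u
    rw [PadicInt.norm_def, PadicInt.coe_add, PadicInt.coe_pow, PadicInt.coe_one] at this
    exact this
  have h2 : a ^ 2 + b ^ 2 = ((a / b) ^ 2 + 1) * b ^ 2 := by field_simp
  rw [h2, norm_mul, h1, one_mul, norm_pow]

theorem aux_ex (p : ℕ) [Fact p.Prime] (hp4 : p % 4 = 3) (a b : ℚ_[p]) :
    ∃ c : ℚ_[p], ‖a ^ 2 + b ^ 2‖ = ‖c‖ ^ 2 ∧ ‖a‖ ≤ ‖c‖ := by
  rcases le_total ‖a‖ ‖b‖ with h | h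
  · exact ⟨b, aux_le p hp4 a b h, h⟩
  · exact ⟨a, by rw [add_comm]; exact aux_le p hp4 b a h, le_rfl⟩

theorem aux_sqrt (p : ℕ) [Fact p.Prime] (hp4 : p % 4 = 3) (t : ℤ_[p]) :
    ∃ x : ℤ_[p], x ^ 2 = 1 + p * t ^ 2 := by
  have h2 : ‖(2 : ℤ_[p])‖ = 1 := by
    have := (PadicInt.norm_natCast_eq_one_iff (p := p) (n := 2)).2 (by
      rw [Nat.coprime_comm, Nat.coprime_two_left, Nat.odd_iff]; omega)
    simpa using this
  have hl : ‖(p : ℤ_[p]) * t ^ 2‖ < 1 := by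
    rw [norm_mul]
    have h3 : ‖(p : ℤ_[p])‖ < 1 := by
      rw [PadicInt.norm_p]
      exact inv_lt_one_of_one_lt₀ (by exact_mod_cast (Fact.out : p.Prime).one_lt)
    exact lt_of_le_of_lt (mul_le_of_le_one_right (norm_nonneg _) (PadicInt.norm_le_one _)) h3
  generalize (p : ℤ_[p]) * t ^ 2 = s at hl ⊢
  obtain ⟨x, hx, -⟩ := hensels_lemma (p := p) (R := ℤ_[p])
    (F := Polynomial.X ^ 2 - Polynomial.C (1 + s)) (a := 1) (by
      have e1 : (Polynomial.X ^ 2 - Polynomial.C (1 + s) : Polynomial ℤ_[p]).aeval (1 : ℤ_[p])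
          = -s := by
        simp only [map_sub, map_pow, Polynomial.aeval_X, Polynomial.aeval_C,
          Algebra.algebraMap_self, RingHom.id_apply]
        ring
      have e2 : (Polynomial.X ^ 2 - Polynomial.C (1 + s) : Polynomial ℤ_[p]).derivative.aeval
          (1 : ℤ_[p]) = 2 := by
        rw [Polynomial.derivative_sub, Polynomial.derivative_C, Polynomial.derivative_X_pow]
        simp
      rw [e1, e2, h2, norm_neg]
      simpa using hl)
  refine ⟨x, ?_⟩
  have : x ^ 2 - (1 + s) = 0 := by
    simpa only [map_sub, map_pow, Polynomial.aeval_X, Polynomial.aeval_C,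
          Algebra.algebraMap_self, RingHom.id_apply] using hx
  exact sub_eq_zero.1 this

/-- For a prime `p ≡ 3 mod 4`, the ring `ℤ_p` of `p`-adic integers is defined in `ℚ_p`
by the formula `∃ x y z, 2 + p t² = x² + y² - p z²`. -/
theorem zp_def_in_qp (p : ℕ) [Fact p.Prime] (hp4 : p % 4 = 3) (t : ℚ_[p]) :
    ‖t‖ ≤ 1 ↔ ∃ x y z : ℚ_[p], 2 + (p : ℚ_[p]) * t ^ 2 = x ^ 2 + y ^ 2 - (p : ℚ_[p]) * z ^ 2 := by
  constructor
  · intro ht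
    obtain ⟨x, hx⟩ := aux_sqrt p hp4 ⟨t, ht⟩
    have hx' : (x : ℚ_[p]) ^ 2 = 1 + p * t ^ 2 := by
      have := congrArg (fun u : ℤ_[p] => (u : ℚ_[p])) hx
      simp only [PadicInt.coe_add, PadicInt.coe_mul, PadicInt.coe_pow, PadicInt.coe_one,
        PadicInt.coe_natCast] at this
      exact this
    exact ⟨x, 1, 0, by rw [hx']; ring⟩
  · rintro ⟨x, y, z, h⟩
    by_contra ht
    push Not at ht
    have hp1 : (1 : ℝ) < p := by exact_mod_cast (Fact.out : p.Prime).one_lt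
    have hp0 : (p : ℝ) ≠ 0 := by positivity
    obtain ⟨c, hc, htc⟩ := aux_ex p hp4 t z
    obtain ⟨d, hd, -⟩ := aux_ex p hp4 x y
    have hc1 : 1 < ‖c‖ := ht.trans_le htc
    have hc0 : c ≠ 0 := by rintro rfl; simp at hc1; linarith
    have e : x ^ 2 + y ^ 2 = 2 + p * (t ^ 2 + z ^ 2) := by linear_combination -h
    have hn : ‖(p : ℚ_[p]) * (t ^ 2 + z ^ 2)‖ = (p : ℝ) ^ (-1 - 2 * c.valuation) := by
      rw [norm_mul, hc, Padic.norm_p, Padic.norm_eq_zpow_neg_valuation hc0, ← zpow_natCast,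
        ← zpow_mul, ← zpow_neg_one, ← zpow_add₀ hp0]
      congr 1
      push_cast; ring
    have hv : c.valuation < 0 := by
      rw [Padic.norm_eq_zpow_neg_valuation hc0] at hc1
      have := (one_lt_zpow_iff_right₀ hp1).1 hc1
      omega
    have hgt : 1 < ‖(p : ℚ_[p]) * (t ^ 2 + z ^ 2)‖ := by
      rw [hn]
      exact (one_lt_zpow_iff_right₀ hp1).2 (by omega)
    have h2 : ‖(2 : ℚ_[p])‖ ≤ 1 := by
      simpa using Padic.norm_int_le_one (p := p) 2
    have hsum : ‖x ^ 2 + y ^ 2‖ = ‖(p : ℚ_[p]) * (t ^ 2 + z ^ 2)‖ := by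
      rw [e, Padic.add_eq_max_of_ne (lt_of_le_of_lt h2 hgt).ne]
      exact max_eq_right (h2.trans hgt.le)
    rw [hd, hn] at hsum
    have hd0 : d ≠ 0 := by
      rintro rfl
      have : (0 : ℝ) < (p : ℝ) ^ (-1 - 2 * c.valuation) := by positivity
      simp at hsum
      linarith
    rw [Padic.norm_eq_zpow_neg_valuation hd0, ← zpow_natCast, ← zpow_mul] at hsum
    have := zpow_right_injective₀ (by linarith) hp1.ne' hsum
    push_cast at this
    omega
end

section
/- Let p be an odd prime. Then for every x in the field ℚ_p of p-adic numbers, x lies in the ring ℤ_p of p-adic integers (i.e., ‖x‖_p ≤ 1) if and only if there exists y ∈ ℚ_p with 1 + p·x² = y². -/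
/-- For an odd prime `p`, `ℤ_p = {x ∈ ℚ_p : ∃ y, 1 + p x² = y²}`. -/
theorem zp_def_in_qp_odd (p : ℕ) [Fact p.Prime] (hodd : p ≠ 2) (x : ℚ_[p]) :
    ‖x‖ ≤ 1 ↔ ∃ y : ℚ_[p], 1 + (p : ℚ_[p]) * x ^ 2 = y ^ 2 := by
  have hp : p.Prime := Fact.out
  have hp1 : (1 : ℝ) < p := mod_cast hp.one_lt
  have hp0 : (0 : ℝ) < p := by linarith
  constructor
  · intro hx
    let X' : ℤ_[p] := ⟨x, hx⟩
    let F : Polynomial ℤ_[p] := Polynomial.X ^ 2 - Polynomial.C (1 + (p : ℤ_[p]) * X' ^ 2)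
    have h2 : ‖(2 : ℤ_[p])‖ = 1 := by
      refine le_antisymm (PadicInt.norm_le_one _) (not_lt.1 fun h => ?_)
      have h' := (PadicInt.norm_int_lt_one_iff_dvd (p := p) 2).1 (by exact_mod_cast h)
      have h3 : p ∣ 2 := by exact_mod_cast h'
      exact hodd ((Nat.prime_dvd_prime_iff_eq hp Nat.prime_two).1 h3)
    have hF : F.aeval (1 : ℤ_[p]) = -((p : ℤ_[p]) * X' ^ 2) := by
      simp [F]
    have hF' : F.derivative.aeval (1 : ℤ_[p]) = 2 := by
      simp only [F, Polynomial.derivative_sub, Polynomial.derivative_C, Polynomial.derivative_X_pow]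
      simp
    have hn : ‖F.aeval (1 : ℤ_[p])‖ < ‖F.derivative.aeval (1 : ℤ_[p])‖ ^ 2 := by
      rw [hF, hF', h2, norm_neg, norm_mul, PadicInt.norm_p, one_pow]
      calc (p : ℝ)⁻¹ * ‖X' ^ 2‖ ≤ (p : ℝ)⁻¹ * 1 := by
            gcongr
            exact PadicInt.norm_le_one _
        _ < 1 := by rw [mul_one]; exact inv_lt_one_of_one_lt₀ hp1
    obtain ⟨z, hz, -⟩ := hensels_lemma hn
    have hz' : z ^ 2 = 1 + (p : ℤ_[p]) * X' ^ 2 := by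
      have : z ^ 2 - (1 + (p : ℤ_[p]) * X' ^ 2) = 0 := by simpa [F] using hz
      exact sub_eq_zero.1 this
    refine ⟨z, ?_⟩
    have := congrArg (fun t : ℤ_[p] => (t : ℚ_[p])) hz'
    have hX : (X' : ℚ_[p]) = x := rfl
    simp only [PadicInt.coe_add, PadicInt.coe_mul, PadicInt.coe_pow, PadicInt.coe_one,
      PadicInt.coe_natCast, hX] at this
    exact this.symm
  · rintro ⟨y, hy⟩
    by_contra! hx
    have hx0 : x ≠ 0 := by rintro rfl; simp at hx; linarith
    have hnx := Padic.norm_eq_zpow_neg_valuation hx0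
    have hv : 0 < -x.valuation := by
      rw [hnx] at hx
      exact (one_lt_zpow_iff_right₀ hp1).1 hx
    have hn : ‖(p : ℚ_[p]) * x ^ 2‖ = (p : ℝ) ^ (-1 + -x.valuation * 2) := by
      rw [norm_mul, norm_pow, Padic.norm_p, hnx, zpow_add₀ hp0.ne', zpow_mul, zpow_neg_one]
      norm_cast
    have h1 : 1 < ‖(p : ℚ_[p]) * x ^ 2‖ := by
      rw [hn]
      exact (one_lt_zpow_iff_right₀ hp1).2 (by omega)
    have hs : ‖y‖ ^ 2 = (p : ℝ) ^ (-1 + -x.valuation * 2) := by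
      rw [← norm_pow, ← hy, Padic.add_eq_max_of_ne (by rw [norm_one]; exact h1.ne), norm_one,
        max_eq_right h1.le, hn]
    have hy0 : y ≠ 0 := by
      rintro rfl
      have : (0 : ℝ) < (p : ℝ) ^ (-1 + -x.valuation * 2) := by positivity
      rw [← hs] at this
      simp at this
    rw [Padic.norm_eq_zpow_neg_valuation hy0, ← zpow_natCast, ← zpow_mul] at hs
    have := zpow_right_injective₀ hp0 hp1.ne' hs
    push_cast at this
    omega
end

section
/- Let β ∈ ℝ be an algebraic integer (integral over ℤ) such that every complex root z of the minimal polynomial of β over ℚ is real and satisfies |z| ≤ 2. Then there exists a root of unity α ∈ ℂ (i.e., αⁿ = 1 for some n ≥ 1) such that β = α + α⁻¹. -/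
open Polynomial in
/-- A complex root of `z ^ 2 - r z + 1` with `r` real, `|r| ≤ 2` has norm at most one. -/
theorem norm_le_one_of_quadratic (z : ℂ) (r : ℝ) (hr : |r| ≤ 2)
    (hz : z ^ 2 + 1 = (r : ℂ) * z) : ‖z‖ ≤ 1 := by
  have hre := congrArg Complex.re hz
  have him := congrArg Complex.im hz
  simp only [pow_two, Complex.add_re, Complex.mul_re, Complex.one_re, Complex.ofReal_re,
    Complex.ofReal_im, Complex.add_im, Complex.mul_im, Complex.one_im] at hre him
  have key : z.re * z.re + z.im * z.im = 1 := by
    obtain ⟨h1, h2⟩ := abs_le.1 hr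
    by_cases h0 : z.im = 0
    · rw [h0] at hre ⊢
      have hr4 : r ^ 2 ≤ 4 := by nlinarith
      have h3 : (z.re * z.re + 1) ^ 2 = r ^ 2 * (z.re * z.re) := by
        have : z.re * z.re + 1 = r * z.re := by linarith
        rw [this]; ring
      have h4 : (z.re * z.re - 1) ^ 2 ≤ 0 := by
        nlinarith [mul_self_nonneg z.re]
      have h5 : z.re * z.re - 1 = 0 := pow_eq_zero_iff (two_ne_zero) |>.1
        (le_antisymm h4 (sq_nonneg _))
      linarith
    · have h6 : 2 * z.re = r := by
        apply mul_right_cancel₀ h0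
        linarith
      rw [← h6] at hre
      linarith
  have h7 : ‖z‖ ^ 2 = 1 := by
    rw [← Complex.normSq_eq_norm_sq, Complex.normSq_apply, key]
  nlinarith [norm_nonneg z]

/-- A totally real algebraic integer all of whose conjugates have absolute value at most 2
is of the form `α + α⁻¹` for some root of unity `α`. -/
theorem totally_real_integer_eq_add_inv_root_of_unity (β : ℝ) (hint : IsIntegral ℤ β)
    (h : ∀ z : ℂ, Polynomial.aeval z (minpoly ℚ β) = 0 → ∃ r : ℝ, z = (r : ℂ) ∧ |r| ≤ 2) :
    ∃ α : ℂ, (∃ n : ℕ, 1 ≤ n ∧ α ^ n = 1) ∧ (β : ℂ) = α + α⁻¹ := by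
  obtain ⟨s, hs⟩ := IsAlgClosed.exists_pow_nat_eq ((β : ℂ) ^ 2 - 4) (n := 2) (by norm_num)
  obtain ⟨α, hα⟩ : ∃ α : ℂ, α ^ 2 + 1 = β * α := ⟨(β + s) / 2, by linear_combination hs / 4⟩
  have hα0 : α ≠ 0 := by
    rintro rfl
    simp at hα
  have hβ : (β : ℂ) = α + α⁻¹ := by
    field_simp
    linear_combination -hα
  have hβint : IsIntegral ℤ (β : ℂ) := hint.map (Complex.ofRealHom.toIntAlgHom)
  have hαint : IsIntegral ℤ α := by
    let b : integralClosure ℤ ℂ := ⟨β, hβint⟩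
    have : IsIntegral (integralClosure ℤ ℂ) α := by
      refine ⟨Polynomial.X ^ 2 - Polynomial.C b * Polynomial.X + 1, ?_, ?_⟩
      · monicity!
      · have hb : algebraMap (integralClosure ℤ ℂ) ℂ b = β := rfl
        simp only [Polynomial.eval₂_add, Polynomial.eval₂_sub, Polynomial.eval₂_mul,
          Polynomial.eval₂_pow, Polynomial.eval₂_X, Polynomial.eval₂_C, Polynomial.eval₂_one, hb]
        linear_combination hα
    exact isIntegral_trans _ this
  have hαQ : IsIntegral ℚ α := hαint.tower_top
  let K := IntermediateField.adjoin ℚ {α}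
  have : FiniteDimensional ℚ K := IntermediateField.adjoin.finiteDimensional hαQ
  have : NumberField K := ⟨⟩
  let x : K := IntermediateField.AdjoinSimple.gen ℚ α
  have hx : (x : ℂ) = α := IntermediateField.AdjoinSimple.coe_gen ℚ α
  have hxint : IsIntegral ℤ x := by
    rw [← isIntegral_algebraMap_iff (B := ℂ) (algebraMap K ℂ).injective]
    change IsIntegral ℤ (x : ℂ)
    rwa [hx]
  have hx0 : x ≠ 0 := by
    intro h0
    apply hα0
    rw [← hx, h0]; rfl
  have hroot : Polynomial.aeval (x + x⁻¹) (minpoly ℚ β) = 0 := by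
    apply (algebraMap K ℂ).injective
    rw [← Polynomial.aeval_algebraMap_apply, map_zero]
    have e : algebraMap K ℂ (x + x⁻¹) = algebraMap ℝ ℂ β := by
      rw [map_add, map_inv₀]
      change (x : ℂ) + (x : ℂ)⁻¹ = β
      rw [hx, hβ]
    rw [e, Polynomial.aeval_algebraMap_apply, minpoly.aeval, map_zero]
  obtain ⟨n, hn, hxn⟩ := NumberField.Embeddings.pow_eq_one_of_norm_le_one K ℂ hx0 hxint (by
    intro φ
    obtain ⟨r, hr, hr2⟩ := h (φ (x + x⁻¹)) (by
      have := Polynomial.aeval_algHom_apply φ.toRatAlgHom (x + x⁻¹) (minpoly ℚ β)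
      rw [hroot, map_zero] at this
      exact this)
    refine norm_le_one_of_quadratic _ r hr2 ?_
    have h0 : φ x ≠ 0 := (map_ne_zero φ).2 hx0
    rw [← hr, map_add, map_inv₀]
    field_simp)
  refine ⟨α, ⟨n, hn, ?_⟩, hβ⟩
  have := congrArg (algebraMap K ℂ) hxn
  rw [map_pow, map_one] at this
  rw [← hx]; exact this
end

section
/- For a real number M, the set of algebraic integers β ∈ ℝ such that every complex root z of the minimal polynomial of β over ℚ is real and satisfies 0 < z < M is infinite if and only if M ≥ 4. In other words, the minimum of all M ∈ ℝ such that there are infinitely many totally real algebraic integers t with 0 ≪ t ≪ M equals 4. -/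
open Polynomial

theorem kf_basis {M : ℝ} (hM : 0 < M) (k : ℕ) : ∃ b : ℝ[X], b.Monic ∧ b.natDegree = k ∧
    ∀ x : ℝ, 0 < x → x < M → |b.eval x| ≤ 2 * (M/4)^k := by
  have hl : (C (2/M) * X - C 1 : ℝ[X]).natDegree = 1 := by
    have : (C (2/M) * X - C 1 : ℝ[X]) = C (2/M) * X + C (-1) := by simp [sub_eq_add_neg]
    rw [this]; exact natDegree_linear (by positivity)
  have hlc : (C (2/M) * X - C 1 : ℝ[X]).leadingCoeff = 2/M := by
    have : (C (2/M) * X - C 1 : ℝ[X]) = C (2/M) * X + C (-1) := by simp [sub_eq_add_neg]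
    rw [this]; exact leadingCoeff_linear (by positivity)
  have hT : (Chebyshev.T ℝ k).natDegree = k := by simp
  have hTl : (Chebyshev.T ℝ k).leadingCoeff = 2^(k-1) := by simp
  set p := (Chebyshev.T ℝ k).comp (C (2/M) * X - C 1) with hp
  have hpl : p.leadingCoeff = 2^(k-1) * (2/M)^k := by
    rw [hp, leadingCoeff_comp (by rw [hl]; simp), hTl, hlc, hT]
  have hpos : 0 < p.leadingCoeff := by rw [hpl]; positivity
  refine ⟨C (p.leadingCoeff)⁻¹ * p, ?_, ?_, ?_⟩
  · rw [Monic, leadingCoeff_mul, leadingCoeff_C]; exact inv_mul_cancel₀ hpos.ne'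
  · rw [natDegree_C_mul (by positivity), hp, natDegree_comp, hl, hT, mul_one]
  · intro x h0 h1
    have h2 : |p.eval x| ≤ 1 := by
      rw [hp, eval_comp]
      apply Chebyshev.abs_eval_T_real_le_one
      simp only [eval_sub, eval_mul, eval_C, eval_X]
      have : 2 / M * x < 2 := by rw [div_mul_eq_mul_div, div_lt_iff₀ hM]; linarith
      have : 0 < 2 / M * x := by positivity
      rw [abs_le]; constructor <;> linarith
    rw [eval_mul, eval_C, abs_mul, abs_of_pos (by positivity)]
    have h3 : (p.leadingCoeff)⁻¹ ≤ 2 * (M/4)^k := by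
      rw [hpl, inv_le_iff_one_le_mul₀ (by positivity)]
      have e : (M/4)^k * (2/M)^k * 2^k = 1 := by
        rw [← mul_pow, ← mul_pow]
        have : M/4 * (2/M) * 2 = 1 := by field_simp; norm_num
        rw [this, one_pow]
      have h4 : (2:ℝ)^k ≤ 2 * 2^(k-1) := by
        rw [← pow_succ']; exact pow_le_pow_right₀ (by norm_num) (by omega)
      calc (1:ℝ) = (M/4)^k * (2/M)^k * 2^k := e.symm
        _ ≤ (M/4)^k * (2/M)^k * (2 * 2^(k-1)) := by gcongr
        _ = _ := by ring
    calc _ ≤ (p.leadingCoeff)⁻¹ * 1 := by gcongr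
      _ ≤ _ := by rw [mul_one]; exact h3

theorem kf_reduce (b : ℕ → ℝ[X]) (hb : ∀ k, (b k).Monic) (hd : ∀ k, (b k).natDegree = k) (n : ℕ) :
    ∀ R : ℝ[X], R.degree < n → ∃ (Z : ℤ[X]) (d : ℕ → ℝ), Z.degree < n ∧ (∀ k, |d k| ≤ 1) ∧
      R = Z.map (Int.castRingHom ℝ) + ∑ k ∈ Finset.range n, C (d k) * b k := by
  induction n with
  | zero =>
    intro R hR
    refine ⟨0, 0, by simp, by simp, ?_⟩
    have : R = 0 := by simpa using hR
    simp [this]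
  | succ n ih =>
    intro R hR
    have hmon : (C (Int.fract (R.coeff n)) * b n).degree < (n+1 : ℕ) := by
      rw [degree_lt_iff_coeff_zero]
      intro m hm
      rw [coeff_C_mul, coeff_eq_zero_of_natDegree_lt (p := b n) (by rw [hd]; omega), mul_zero]
    have hX : ∀ a : ℝ, (C a * X^n : ℝ[X]).degree < (n+1 : ℕ) := fun a =>
      lt_of_le_of_lt (degree_C_mul_X_pow_le n _) (by exact_mod_cast Nat.lt_succ_self n)
    have key : (R - C ((⌊R.coeff n⌋ : ℤ) : ℝ) * X^n - C (Int.fract (R.coeff n)) * b n).degree < (n : WithBot ℕ) := by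
      rw [degree_lt_iff_coeff_zero]
      intro m hm
      rcases hm.eq_or_lt with rfl | hm
      · have : (b n).coeff n = 1 := by
          have := (hb n).coeff_natDegree; rwa [hd] at this
        rw [coeff_sub, coeff_sub, coeff_C_mul, coeff_C_mul, this, coeff_X_pow_self]; simp
      · have h1 := (degree_lt_iff_coeff_zero _ _).1 hR m hm
        have h2 := (degree_lt_iff_coeff_zero _ _).1 hmon m hm
        have h3 := (degree_lt_iff_coeff_zero _ _).1 (hX ((⌊R.coeff n⌋ : ℤ) : ℝ)) m hm
        rw [coeff_sub, coeff_sub, h1, h2, h3]; simp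
    obtain ⟨Z, d, hZ, hd1, hR2⟩ := ih _ key
    refine ⟨Z + C ⌊R.coeff n⌋ * X^n, fun k => if k = n then Int.fract (R.coeff n) else d k, ?_, ?_, ?_⟩
    · apply lt_of_le_of_lt (degree_add_le _ _)
      apply max_lt
      · exact hZ.trans (by exact_mod_cast Nat.lt_succ_self n)
      · exact lt_of_le_of_lt (degree_C_mul_X_pow_le n _) (by exact_mod_cast Nat.lt_succ_self n)
    · intro k
      dsimp only
      split_ifs
      · rw [abs_of_nonneg (Int.fract_nonneg _)]; exact (Int.fract_lt_one _).le
      · exact hd1 k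
    · rw [Finset.sum_range_succ]
      have : ∑ k ∈ Finset.range n, C (if k = n then Int.fract (R.coeff n) else d k) * b k
          = ∑ k ∈ Finset.range n, C (d k) * b k := by
        apply Finset.sum_congr rfl
        intro k hk
        rw [if_neg (Finset.mem_range.1 hk).ne]
      have hm : (C ⌊R.coeff n⌋ * X^n : ℤ[X]).map (Int.castRingHom ℝ)
          = C ((⌊R.coeff n⌋ : ℤ) : ℝ) * X^n := by simp
      dsimp only
      rw [this, if_pos rfl, Polynomial.map_add, hm]
      linear_combination hR2

theorem kf_monic (b : ℕ → ℝ[X]) (hb : ∀ k, (b k).Monic) (hd : ∀ k, (b k).natDegree = k) (n : ℕ) :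
    ∃ (P : ℤ[X]) (c : ℕ → ℝ), P.degree = n ∧ (∀ k, |c k| ≤ 1) ∧
      P.map (Int.castRingHom ℝ) = ∑ k ∈ Finset.range (n+1), C (c k) * b k := by
  have h : (b n - X^n).degree < (n : WithBot ℕ) := by
    have := degree_sub_lt_left (p := b n) (q := X^n) (by rw [degree_X_pow, degree_eq_natDegree (hb n).ne_zero, hd]) (hb n).ne_zero (by rw [leadingCoeff_X_pow, (hb n).leadingCoeff])
    rwa [degree_eq_natDegree (hb n).ne_zero, hd] at this
  obtain ⟨Z, d, hZ, hd1, hR⟩ := kf_reduce b hb hd n _ h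
  refine ⟨X^n + Z, fun k => if k = n then 1 else - d k, ?_, ?_, ?_⟩
  · rw [degree_add_eq_left_of_degree_lt] <;> simp [hZ]
  · intro k
    dsimp only
    split_ifs
    · simp
    · simpa using hd1 k
  · rw [Finset.sum_range_succ]
    have : ∑ k ∈ Finset.range n, C (if k = n then 1 else - d k) * b k
          = - ∑ k ∈ Finset.range n, C (d k) * b k := by
        rw [← Finset.sum_neg_distrib]
        apply Finset.sum_congr rfl
        intro k hk
        rw [if_neg (Finset.mem_range.1 hk).ne]; simp
    dsimp only
    rw [this, if_pos rfl, Polynomial.map_add, Polynomial.map_pow, map_X, C_1]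
    linear_combination -hR

theorem kf_small {M : ℝ} (hM : 0 < M) (hM4 : M < 4) : ∃ Q : ℤ[X], Q ≠ 0 ∧
    ∀ x : ℝ, 0 < x → x < M → |aeval x Q| < 1 := by
  choose b hb hd hbd using kf_basis hM
  choose P c hP hc hPc using kf_monic b hb hd
  set q := M/4 with hq
  have hq0 : 0 < q := by positivity
  have hq1 : q < 1 := by rw [hq]; linarith
  have hlim : Filter.Tendsto (fun K : ℕ => 2 * (q^K / (1-q))) Filter.atTop (nhds 0) := by
    simpa using ((tendsto_pow_atTop_nhds_zero_of_lt_one hq0.le hq1).div_const (1-q)).const_mul 2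
  obtain ⟨K, hK⟩ := (hlim.eventually (gt_mem_nhds (show (0:ℝ) < 1/4 by norm_num))).exists
  -- low coordinates
  let v : ℕ → (Fin K → ℝ) := fun N k => c (N+K) k
  have hv : ∀ N, v N ∈ Metric.closedBall (0 : Fin K → ℝ) 1 := by
    intro N
    rw [mem_closedBall_zero_iff, pi_norm_le_iff_of_nonneg zero_le_one]
    intro i; exact hc _ _
  obtain ⟨a, -, φ, hφ, hlimφ⟩ := tendsto_subseq_of_bounded Metric.isBounded_closedBall hv
  have hε : (0:ℝ) < 1 / (4 * (K+1)) := by positivity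
  obtain ⟨N, hN⟩ := Metric.cauchySeq_iff'.1 hlimφ.cauchySeq _ hε
  have hdist := hN (N+1) (by omega)
  set n1 := φ (N+1) + K with hn1
  set n0 := φ N + K with hn0
  have hne : n0 < n1 := by
    have : φ N < φ (N+1) := hφ (Nat.lt_succ_self N)
    simp only [hn0, hn1]; omega
  have hlow : ∀ k < K, |c n1 k - c n0 k| ≤ 1 / (4 * (K+1)) := by
    intro k hk
    have := (dist_le_pi_dist (v (φ (N+1))) (v (φ N)) ⟨k, hk⟩).trans hdist.le
    simpa [v, Real.dist_eq] using this
  refine ⟨P n1 - P n0, ?_, ?_⟩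
  · intro h
    have := hP n1
    rw [sub_eq_zero.1 h, hP n0] at this
    exact hne.ne (by exact_mod_cast this)
  · intro x h0 h1
    have ev : ∀ n, aeval x (P n) = ∑ k ∈ Finset.range (n+1), c n k * (b k).eval x := by
      intro n
      have := congrArg (eval x) (hPc n)
      rw [eval_map, eval_finsetSum] at this
      simpa [aeval_def] using this
    have split : ∀ m, aeval x (P (m+K)) = ∑ k ∈ Finset.range K, c (m+K) k * (b k).eval x +
        ∑ j ∈ Finset.range (m+1), c (m+K) (K+j) * (b (K+j)).eval x := by
      intro m
      rw [ev, show m+K+1 = K + (m+1) by ring, Finset.sum_range_add]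
    have tail : ∀ m, |∑ j ∈ Finset.range (m+1), c (m+K) (K+j) * (b (K+j)).eval x| < 1/4 := by
      intro m
      refine lt_of_le_of_lt ?_ hK
      calc _ ≤ ∑ j ∈ Finset.range (m+1), |c (m+K) (K+j) * (b (K+j)).eval x| := Finset.abs_sum_le_sum_abs _ _
        _ ≤ ∑ j ∈ Finset.range (m+1), 2 * q^K * q^j := by
          apply Finset.sum_le_sum
          intro j _
          rw [abs_mul]
          calc _ ≤ 1 * (2 * q^(K+j)) := by
                gcongr
                · exact hc _ _
                · exact hbd _ x h0 h1
            _ = _ := by ring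
        _ = 2 * q^K * ∑ j ∈ Finset.range (m+1), q^j := by rw [Finset.mul_sum]
        _ ≤ 2 * q^K * (1-q)⁻¹ := by
          gcongr
          rw [← tsum_geometric_of_lt_one hq0.le hq1]
          exact (summable_geometric_of_lt_one hq0.le hq1).sum_le_tsum _ (fun i _ => by positivity)
        _ = _ := by ring
    have low : |∑ k ∈ Finset.range K, c n1 k * (b k).eval x - ∑ k ∈ Finset.range K, c n0 k * (b k).eval x| ≤ 1/2 := by
      rw [← Finset.sum_sub_distrib]
      calc _ ≤ ∑ k ∈ Finset.range K, |c n1 k * (b k).eval x - c n0 k * (b k).eval x| := Finset.abs_sum_le_sum_abs _ _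
        _ ≤ ∑ k ∈ Finset.range K, 1 / (4 * ((K:ℝ)+1)) * 2 := by
          apply Finset.sum_le_sum
          intro k hk
          rw [← sub_mul, abs_mul]
          gcongr
          · exact hlow k (Finset.mem_range.1 hk)
          · refine (hbd k x h0 h1).trans ?_
            have := pow_le_one₀ hq0.le hq1.le (n := k)
            linarith
        _ ≤ 1/2 := by
          rw [Finset.sum_const, Finset.card_range, nsmul_eq_mul, one_div, mul_inv]
          have : (K:ℝ) * ((K:ℝ)+1)⁻¹ ≤ 1 := by
            rw [← div_eq_mul_inv, div_le_one (by positivity)]; linarith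
          linarith
    rw [map_sub, hn1, hn0, split, split]
    have t1 := abs_lt.1 (tail (φ (N+1)))
    have t0 := abs_lt.1 (tail (φ N))
    have t2 := abs_le.1 low
    rw [abs_lt]
    simp only [hn1, hn0] at t2
    constructor <;> linarith [t1.1, t1.2, t0.1, t0.2, t2.1, t2.2]

theorem kf_root {M β : ℝ} (Q : ℤ[X]) (hQ : ∀ x : ℝ, 0 < x → x < M → |aeval x Q| < 1)
    (hβ : IsIntegral ℤ β) (h : ∀ z : ℂ, Polynomial.aeval z (minpoly ℚ β) = 0 →
        ∃ r : ℝ, z = (r : ℂ) ∧ 0 < r ∧ r < M) : aeval β Q = 0 := by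
  have hβQ : IsIntegral ℚ β := hβ.tower_top
  let K := IntermediateField.adjoin ℚ {β}
  have : FiniteDimensional ℚ K := IntermediateField.adjoin.finiteDimensional hβQ
  let g : K := IntermediateField.AdjoinSimple.gen ℚ β
  have hgβ : algebraMap K ℝ g = β := IntermediateField.AdjoinSimple.algebraMap_gen ℚ β
  have hinj : Function.Injective (algebraMap K ℝ) := (algebraMap K ℝ).injective
  have hg : IsIntegral ℤ g := by
    rw [← isIntegral_algebraMap_iff hinj, hgβ]; exact hβ
  have hmin : minpoly ℚ g = minpoly ℚ β := by
    rw [← hgβ]; exact (minpoly.algebraMap_eq hinj g).symm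
  let y : K := aeval g Q
  have hy : IsIntegral ℤ y := by
    exact adjoin_le_integralClosure hg (aeval_mem_adjoin_singleton ℤ g)
  have hn : IsIntegral ℤ (Algebra.norm ℚ y) := Algebra.isIntegral_norm ℚ hy
  obtain ⟨m, hm⟩ := IsIntegrallyClosed.isIntegral_iff.1 hn
  have hprod := Algebra.norm_eq_prod_embeddings ℚ ℂ y
  have hlt : ∀ σ : K →ₐ[ℚ] ℂ, ‖σ y‖ < 1 := by
    intro σ
    have hr : aeval (σ g) (minpoly ℚ β) = 0 := by
      rw [← hmin, aeval_algHom_apply, minpoly.aeval, map_zero]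
    obtain ⟨r, hr, h0, h1⟩ := h _ hr
    have : σ y = ((aeval r Q : ℝ) : ℂ) := by
      have e1 : σ y = aeval (σ g) Q := by
        exact (aeval_algHom_apply (σ.restrictScalars ℤ) g Q).symm
      rw [e1, hr]
      exact aeval_algebraMap_apply ℂ r Q
    rw [this, Complex.norm_real]
    exact hQ r h0 h1
  have hm0 : m = 0 := by
    rw [← Int.abs_lt_one_iff]
    have : ‖(m : ℂ)‖ < 1 := by
      have e : (m:ℂ) = ∏ σ : K →ₐ[ℚ] ℂ, σ y := by
        rw [← hprod, ← hm]; simp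
      rw [e, norm_prod]
      have : Nonempty (K →ₐ[ℚ] ℂ) := ⟨IsAlgClosed.lift⟩
      classical
      rw [← Finset.mul_prod_erase _ _ (Finset.mem_univ (Classical.arbitrary (K →ₐ[ℚ] ℂ)))]
      exact mul_lt_one_of_nonneg_of_lt_one_left (norm_nonneg _) (hlt _)
        (Finset.prod_le_one (fun _ _ => norm_nonneg _) (fun σ _ => (hlt σ).le))
    rw [Complex.norm_intCast] at this
    exact_mod_cast this
  rw [hm0] at hm
  have hy0 : y = 0 := by
    rw [← Algebra.norm_eq_zero_iff (R := ℚ), ← hm]; simp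
  rw [← hgβ, aeval_algebraMap_apply]
  change algebraMap K ℝ y = 0
  rw [hy0, map_zero]

theorem kf_upper {M : ℝ} (hM : M < 4) : {β : ℝ | IsIntegral ℤ β ∧ ∀ z : ℂ, Polynomial.aeval z (minpoly ℚ β) = 0 →
        ∃ r : ℝ, z = (r : ℂ) ∧ 0 < r ∧ r < M}.Finite := by
  rcases le_or_gt M 0 with h0 | h0
  · convert Set.finite_empty
    ext β
    simp only [Set.mem_ofPred_eq, Set.mem_empty_iff_false, iff_false]
    rintro ⟨-, h⟩
    obtain ⟨r, -, h1, h2⟩ := h β (by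
      have := aeval_algebraMap_apply ℂ β (minpoly ℚ β)
      rw [minpoly.aeval, map_zero] at this
      exact this)
    linarith
  · obtain ⟨Q, hQ0, hQ⟩ := kf_small h0 hM
    apply (Q.rootSet_finite ℝ).subset
    rintro β ⟨h1, h2⟩
    rw [mem_rootSet]
    exact ⟨hQ0, kf_root Q hQ h1 h2⟩

theorem kf_lower {M : ℝ} (hM : 4 ≤ M) : {β : ℝ | IsIntegral ℤ β ∧ ∀ z : ℂ, Polynomial.aeval z (minpoly ℚ β) = 0 →
        ∃ r : ℝ, z = (r : ℂ) ∧ 0 < r ∧ r < M}.Infinite := by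
  have hθ : ∀ n : ℕ, Real.pi / (2 * ((n:ℝ)+1)) ∈ Set.Icc 0 Real.pi := by
    intro n
    refine ⟨by positivity, ?_⟩
    apply div_le_self Real.pi_pos.le
    have : (0:ℝ) ≤ n := by positivity
    linarith
  apply Set.infinite_of_injective_forall_mem (f := fun n : ℕ => 2 + 2 * Real.cos (Real.pi / (2 * ((n:ℝ)+1))))
  · intro m n h
    have h1 : Real.cos (Real.pi / (2 * ((m:ℝ)+1))) = Real.cos (Real.pi / (2 * ((n:ℝ)+1))) := by
      simp only at h; linarith
    have h2 := Real.injOn_cos (hθ m) (hθ n) h1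
    rw [div_eq_div_iff (by positivity) (by positivity)] at h2
    have h3 := mul_left_cancel₀ Real.pi_ne_zero h2
    have : (m:ℝ) = n := by linarith
    exact_mod_cast this
  · intro n
    set θ := Real.pi / (2 * ((n:ℝ)+1)) with hθdef
    refine ⟨?_, ?_⟩
    · have := Real.isIntegral_two_mul_cos_rat_mul_pi (1/(2*((n:ℚ)+1)))
      have e : (((1/(2*((n:ℚ)+1)) : ℚ) : ℝ) * Real.pi) = θ := by
        rw [hθdef]; push_cast; ring
      rw [e] at this
      exact (isIntegral_algebraMap (x := (2:ℤ))).add this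
    · intro z hz
      let P : ℚ[X] := (Chebyshev.C ℚ ((n+1 : ℕ) : ℤ)).comp (X - C 2)
      have hP : aeval (2 + 2 * Real.cos θ) P = 0 := by
        rw [aeval_comp]
        simp only [map_sub, aeval_X, aeval_C]
        rw [Chebyshev.aeval_C]
        have : (2 + 2 * Real.cos θ - algebraMap ℚ ℝ 2) = 2 * Real.cos θ := by simp
        rw [this, Chebyshev.C_two_mul_real_cos]
        have : (((n+1:ℕ):ℤ):ℝ) * θ = Real.pi / 2 := by
          rw [hθdef]; push_cast; field_simp
        rw [this, Real.cos_pi_div_two, mul_zero]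
      have hdvd := minpoly.dvd ℚ _ hP
      have hz2 : aeval z P = 0 := by
        obtain ⟨R, hR⟩ := hdvd
        rw [hR, map_mul, hz, zero_mul]
      obtain ⟨w, hw⟩ := Complex.cos_surjective ((z-2)/2)
      rw [aeval_comp] at hz2
      simp only [map_sub, aeval_X, aeval_C] at hz2
      have hzw : z - algebraMap ℚ ℂ 2 = 2 * Complex.cos w := by rw [hw]; simp; ring
      rw [hzw, Chebyshev.aeval_C, Chebyshev.C_two_mul_complex_cos, mul_eq_zero] at hz2
      have hz3 := hz2.resolve_left two_ne_zero
      obtain ⟨k, hk⟩ := Complex.cos_eq_zero_iff.1 hz3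
      set t : ℝ := (2*k+1) * Real.pi / 2 / (n+1) with ht
      have hn1 : ((n:ℂ)+1) ≠ 0 := by exact_mod_cast Nat.succ_ne_zero n
      have hwt : w = (t:ℂ) := by
        rw [ht]; push_cast
        push_cast at hk
        rw [eq_div_iff hn1, ← hk]; ring
      have hs : Real.sin t ≠ 0 := by
        intro hs
        obtain ⟨j, hj⟩ := Real.sin_eq_zero_iff.1 hs
        rw [ht] at hj
        have hn2 : ((n:ℝ)+1) ≠ 0 := by positivity
        field_simp at hj
        have hj2 : (j * (2 * (n+1)) : ℝ) = 2*k+1 := by linarith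
        have hj3 : j * (2 * ((n:ℤ)+1)) = 2*k+1 := by exact_mod_cast hj2
        have : (2:ℤ) ∣ 2*k+1 := ⟨j * (n+1), by rw [← hj3]; ring⟩
        omega
      have hs2 : 0 < Real.sin t ^ 2 := by positivity
      have hsc := Real.sin_sq_add_cos_sq t
      refine ⟨2 + 2 * Real.cos t, ?_, ?_, ?_⟩
      · push_cast
        rw [← hwt, hw]; ring
      · nlinarith
      · nlinarith

/-- The minimum of all real `M` such that there are infinitely many totally real
algebraic integers `t` with `0 ≪ t ≪ M` equals `4`: the set of such `t` is infinite
iff `M ≥ 4`. -/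
theorem kronecker_four (M : ℝ) :
    {β : ℝ | IsIntegral ℤ β ∧ ∀ z : ℂ, Polynomial.aeval z (minpoly ℚ β) = 0 →
        ∃ r : ℝ, z = (r : ℂ) ∧ 0 < r ∧ r < M}.Infinite ↔ 4 ≤ M := by
  refine ⟨fun h => ?_, kf_lower⟩
  by_contra hM
  exact h (kf_upper (not_le.1 hM))
end

section
/- Let R be an integral domain of characteristic zero (so ℕ embeds into R via the canonical map). Let k ∈ ℕ and let φ(x; y₁,…,y_k) be a first-order formula in the language of rings {+, ·, 0, 1} with k+1 free variables. Assume: (i) for every tuple ȳ ∈ R^k, the set {x ∈ R : φ(x; ȳ) holds in R} is finite, and (ii) for every n ∈ ℕ there exists ȳ ∈ R^k such that {x ∈ R : φ(x; ȳ) holds in R} equals the image in R of the initial segment {0, 1, …, n} of ℕ. Then the set {x ∈ R : x is the image of some natural number} is first-order definable in R in the language of rings, with parameters from R. -/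
open FirstOrder Language Ring

/-- If a family of subsets of an integral domain `R` of characteristic zero, uniformly
parametrised by a ring-language formula `φ(x; y₁,…,y_k)`, consists of finite sets only
and contains every initial segment `{0,…,n}` of `ℕ` (viewed inside `R`), then the image
of `ℕ` in `R` is first-order definable in `R` with parameters. -/
theorem nat_definable_of_uniform_family (R : Type*) [CommRing R] [IsDomain R] [CharZero R]
    [CompatibleRing R] (k : ℕ) (φ : Language.ring.Formula (Fin (k + 1)))
    (hfin : ∀ c : Fin k → R, {x : R | φ.Realize (Fin.cons x c)}.Finite)
    (hinit : ∀ n : ℕ, ∃ c : Fin k → R,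
      {x : R | φ.Realize (Fin.cons x c)} = (fun i : ℕ => (i : R)) '' {i : ℕ | i ≤ n}) :
    ∃ (m : ℕ) (θ : Language.ring.Formula (Fin (m + 1))) (c : Fin m → R),
      ∀ x : R, (∃ n : ℕ, (n : R) = x) ↔ θ.Realize (Fin.cons x c) := by
  classical
  let φs : {γ : Type} → Language.ring.Term γ → (Fin k → Language.ring.Term γ) →
      Language.ring.Formula γ :=
    fun {γ} t ys => BoundedFormula.subst φ (Fin.cons t ys : Fin (k + 1) → Language.ring.Term γ)
  have hφs : ∀ {γ : Type} (t : Language.ring.Term γ) (ys : Fin k → Language.ring.Term γ)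
      (v : γ → R), (φs t ys).Realize v ↔
        φ.Realize (Fin.cons (t.realize v) (fun i => (ys i).realize v)) := by
    intro γ t ys v
    have h : (fun a => Term.realize v ((Fin.cons t ys : Fin (k + 1) → Language.ring.Term γ) a))
        = Fin.cons (t.realize v) (fun i => (ys i).realize v) := by
      funext a
      refine Fin.cases ?_ (fun i => ?_) a <;> simp
    rw [← h]
    exact BoundedFormula.realize_subst
  let z : Language.ring.Term ((Fin 1 ⊕ Fin k) ⊕ Fin 1) := Term.var (Sum.inr 0)
  let ys : Fin k → Language.ring.Term ((Fin 1 ⊕ Fin k) ⊕ Fin 1) :=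
    fun i => Term.var (Sum.inl (Sum.inr i))
  let good : Language.ring.Formula (Fin 1 ⊕ Fin k) :=
    Formula.iAlls (Fin 1) ((φs z ys).imp ((Term.equal z 0) ⊔ φs (z + -1) ys))
  let θ : Language.ring.Formula (Fin 1) :=
    Formula.iExs (Fin k)
      (φs (Term.var (Sum.inl 0)) (fun i => Term.var (Sum.inr i)) ⊓ good)
  have hθ : ∀ v : Fin 1 → R, θ.Realize v ↔ ∃ c : Fin k → R,
      φ.Realize (Fin.cons (v 0) c) ∧
        ∀ w : R, φ.Realize (Fin.cons w c) → w = 0 ∨ φ.Realize (Fin.cons (w + -1) c) := by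
    intro v
    simp only [θ, good, Formula.realize_iExs, Formula.realize_iAlls, Formula.realize_inf,
      Formula.realize_imp, Formula.realize_sup, Formula.realize_equal, hφs, z, ys,
      Term.realize_var, Sum.elim_inl, Sum.elim_inr, realize_add, realize_neg, realize_one,
      realize_zero]
    refine exists_congr fun c => and_congr Iff.rfl ?_
    exact ⟨fun h w => h (fun _ => w), fun h i => h (i 0)⟩
  refine ⟨0, θ, Fin.elim0, fun x => ?_⟩
  rw [hθ, Fin.cons_zero]
  constructor
  · rintro ⟨n, rfl⟩
    obtain ⟨c, hc⟩ := hinit n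
    have hm : ∀ w, φ.Realize (Fin.cons w c) ↔ ∃ i : ℕ, i ≤ n ∧ (i : R) = w := by
      intro w
      exact Set.ext_iff.mp hc w
    refine ⟨c, (hm _).2 ⟨n, le_rfl, rfl⟩, fun w hw => ?_⟩
    obtain ⟨i, hi, rfl⟩ := (hm _).1 hw
    cases i with
    | zero => left; simp
    | succ j => right; exact (hm _).2 ⟨j, by omega, by push_cast; ring⟩
  · rintro ⟨c, hx, hstep⟩
    by_contra hne
    push Not at hne
    have hall : ∀ j : ℕ, φ.Realize (Fin.cons (x - j) c) := by
      intro j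
      induction j with
      | zero => simpa using hx
      | succ j ih =>
        rcases hstep _ ih with h | h
        · exact absurd (sub_eq_zero.mp h).symm (hne j)
        · have e : x - ((j + 1 : ℕ) : R) = x - j + -1 := by push_cast; ring
          rw [e]; exact h
    refine Set.infinite_of_injective_forall_mem (f := fun j : ℕ => x - (j : R)) ?_ hall (hfin c)
    intro a b h
    simpa using h
end

section
/- Let K be a number field of degree l = [K : ℚ] with ring of integers 𝓞_K, and let f ∈ 𝓞_K be nonzero. Then there are only finitely many a ∈ 𝓞_K such that (a+1) ∣ f, (a+2) ∣ f, …, and (a+l) ∣ f in 𝓞_K. -/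
/-- The value of the characteristic polynomial of multiplication by `a` at `-i` is, up to the
sign `(-1)^l`, the norm of `a+i`. -/
theorem charpoly_eval_neg_aux (K : Type*) [Field K] [NumberField K]
    (a : NumberField.RingOfIntegers K) (i : ℕ) :
    (LinearMap.charpoly (Algebra.lmul ℤ (NumberField.RingOfIntegers K) a)).eval (-(i : ℤ)) =
      (-1) ^ (Module.finrank ℤ (NumberField.RingOfIntegers K)) *
        Algebra.norm ℤ (a + (i : NumberField.RingOfIntegers K)) := by
  rw [LinearMap.eval_charpoly, Algebra.norm_apply, ← LinearMap.det_smul]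
  congr 1
  ext x
  simp
  ring

/-- `a` is a root of the characteristic polynomial of multiplication by `a`. -/
theorem aeval_charpoly_lmul_aux (K : Type*) [Field K] [NumberField K]
    (a : NumberField.RingOfIntegers K) :
    Polynomial.aeval a
      (LinearMap.charpoly (Algebra.lmul ℤ (NumberField.RingOfIntegers K) a)) = 0 := by
  have h := LinearMap.aeval_self_charpoly (Algebra.lmul ℤ (NumberField.RingOfIntegers K) a)
  rw [Polynomial.aeval_algHom_apply] at h
  have h2 := congrArg (fun g => g 1) h
  simpa using h2

/-- In a number field `K` of degree `l` over `ℚ`, for every nonzero integer `f ∈ 𝓞_K`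
there are only finitely many `a ∈ 𝓞_K` with `(a+1) ∣ f`, `(a+2) ∣ f`, …, `(a+l) ∣ f`. -/
theorem finitely_many_consecutive_divisors (K : Type*) [Field K] [NumberField K]
    (f : NumberField.RingOfIntegers K) (hf : f ≠ 0) :
    {a : NumberField.RingOfIntegers K |
      ∀ i : ℕ, 1 ≤ i → i ≤ Module.finrank ℚ K →
        (a + (i : NumberField.RingOfIntegers K)) ∣ f}.Finite := by
  have hrank : Module.finrank ℤ (NumberField.RingOfIntegers K) = Module.finrank ℚ K :=
    NumberField.RingOfIntegers.rank K
  have hN : Algebra.norm ℤ f ≠ 0 := Algebra.norm_ne_zero_iff.mpr hf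
  let φ : NumberField.RingOfIntegers K → (Fin (Module.finrank ℚ K) → ℤ) :=
    fun a i => Algebra.norm ℤ (a + ((i.1 + 1 : ℕ) : NumberField.RingOfIntegers K))
  have hD : {d : ℤ | d ∣ Algebra.norm ℤ f}.Finite := by
    refine (Set.finite_Icc (-|Algebra.norm ℤ f|) |Algebra.norm ℤ f|).subset ?_
    intro d hd
    have h1 : |d| ≤ |Algebra.norm ℤ f| :=
      Int.le_of_dvd (abs_pos.mpr hN) ((abs_dvd_abs _ _).mpr hd)
    exact abs_le.mp h1
  have hT : (Set.pi Set.univ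
      (fun _ : Fin (Module.finrank ℚ K) => {d : ℤ | d ∣ Algebra.norm ℤ f})).Finite :=
    Set.Finite.pi fun _ => hD
  refine (hT.preimage' (f := φ) ?_).subset ?_
  · intro b _
    by_cases hb : ∃ a₀, φ a₀ = b
    · obtain ⟨a₀, rfl⟩ := hb
      set p := LinearMap.charpoly (Algebra.lmul ℤ (NumberField.RingOfIntegers K) a₀) with hp
      refine (p.rootSet_finite (NumberField.RingOfIntegers K)).subset ?_
      intro a ha
      have ha : φ a = φ a₀ := ha
      have hpm : p.Monic := LinearMap.charpoly_monic _
      rw [Polynomial.mem_rootSet]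
      refine ⟨hpm.ne_zero, ?_⟩
      have key : LinearMap.charpoly (Algebra.lmul ℤ (NumberField.RingOfIntegers K) a) = p := by
        have hqm := LinearMap.charpoly_monic (Algebra.lmul ℤ (NumberField.RingOfIntegers K) a)
        have hdp := LinearMap.charpoly_natDegree (Algebra.lmul ℤ (NumberField.RingOfIntegers K) a₀)
        have hdq := LinearMap.charpoly_natDegree (Algebra.lmul ℤ (NumberField.RingOfIntegers K) a)
        rw [← hp] at hdp
        refine Polynomial.eq_of_degree_sub_lt_of_eval_index_eq
          (s := (Finset.univ : Finset (Fin (Module.finrank ℚ K))))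
          (v := fun i => -((i.1 + 1 : ℕ) : ℤ)) ?_ ?_ ?_
        · intro i _ j _ hij
          apply Fin.ext
          simp only at hij
          omega
        · have hlt := Polynomial.degree_sub_lt_left
            (p := LinearMap.charpoly (Algebra.lmul ℤ (NumberField.RingOfIntegers K) a)) (q := p)
            (by rw [Polynomial.degree_eq_natDegree hqm.ne_zero,
              Polynomial.degree_eq_natDegree hpm.ne_zero, hdp, hdq]) hqm.ne_zero
            (by rw [hqm.leadingCoeff, hpm.leadingCoeff])
          rw [Polynomial.degree_eq_natDegree hqm.ne_zero, hdq, hrank] at hlt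
          simpa using hlt
        · intro i _
          rw [hp, charpoly_eval_neg_aux, charpoly_eval_neg_aux]
          have := congrFun ha i
          simp only [φ] at this
          rw [this]
      rw [← key]
      exact aeval_charpoly_lmul_aux K a
    · refine Set.finite_empty.subset ?_
      intro a ha
      exact hb ⟨a, ha⟩
  · intro a ha i _
    exact map_dvd (Algebra.norm ℤ) (ha (i.1 + 1) (by omega) (by omega))
end

section
/- Let K be a number field with ring of integers 𝓞_K. Then the set {x ∈ 𝓞_K : x is the image of some natural number n ∈ ℕ} is first-order definable in the ring 𝓞_K in the language of rings {+, ·, 0, 1}, with parameters from 𝓞_K. -/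
open FirstOrder Language Ring

namespace NatDef

section math
variable {R : Type*} [CommRing R] [IsDomain R] [CharZero R] [Module.Free ℤ R] [Module.Finite ℤ R]

/-- bounded sets -/
def B (d : ℕ) (f x : R) : Prop := ∀ i < d, x + ((i : R) + 1) ∣ f

def S (d : ℕ) (f g h x : R) : Prop := B d f x ∧ (x = 0 ∨ ¬ (1 + x * g ∣ h))

lemma eval_charpoly_lmul (y : R) (i : ℕ) :
    (Algebra.lmul ℤ R y).charpoly.eval (-((i : ℤ) + 1)) =
      (-1) ^ (Module.finrank ℤ R) * Algebra.norm ℤ (y + ((i : R) + 1)) := by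
  rw [LinearMap.eval_charpoly, Algebra.norm_apply, ← LinearMap.det_smul]
  congr 1
  ext z
  simp [Module.algebraMap_end_apply]
  ring

lemma finite_B (f : R) (hf : f ≠ 0) : {x : R | B (Module.finrank ℤ R + 1) f x}.Finite := by
  set d := Module.finrank ℤ R
  let F : R → Fin (d + 1) → ℤ := fun x i => Algebra.norm ℤ (x + (((i : ℕ) : R) + 1))
  have hN : Algebra.norm ℤ f ≠ 0 := Algebra.norm_ne_zero_iff.mpr hf
  apply Set.Finite.of_finite_fibers F
  · apply Set.Finite.subset (s := Set.pi Set.univ (fun _ => {z : ℤ | z ∣ Algebra.norm ℤ f}))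
    · apply Set.Finite.pi
      intro _
      apply (Set.finite_Icc (-|Algebra.norm ℤ f|) |Algebra.norm ℤ f|).subset
      intro z hz
      have := Int.le_of_dvd (abs_pos.mpr hN) ((dvd_abs _ _).mpr ((abs_dvd _ _).mpr hz))
      exact abs_le.mp this
    · rintro _ ⟨x, hx, rfl⟩ i _
      exact map_dvd (Algebra.norm ℤ) (hx i i.2)
  · rintro _ ⟨z, hz, rfl⟩
    apply ((Algebra.lmul ℤ R z).charpoly.rootSet_finite R).subset
    rintro y ⟨-, hy⟩
    have hy' : F y = F z := hy
    have heq : (Algebra.lmul ℤ R y).charpoly = (Algebra.lmul ℤ R z).charpoly := by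
      let s : Finset ℤ := Finset.univ.image (fun i : Fin (d + 1) => -(((i : ℕ) : ℤ) + 1))
      have hs : s.card = d + 1 := by
        rw [Finset.card_image_of_injective]
        · simp
        · intro a b hab
          ext
          simpa using hab
      have hdeg (w : R) : (Algebra.lmul ℤ R w).charpoly.degree < s.card := by
        rw [hs]
        apply lt_of_le_of_lt Polynomial.degree_le_natDegree
        rw [LinearMap.charpoly_natDegree]
        exact_mod_cast Nat.lt_succ_self _
      apply Polynomial.eq_of_degrees_lt_of_eval_finset_eq s (hdeg y) (hdeg z)
      intro x hx
      obtain ⟨i, -, rfl⟩ := Finset.mem_image.mp hx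
      rw [eval_charpoly_lmul, eval_charpoly_lmul]
      congr 1
      exact congrFun hy' i
    rw [Polynomial.mem_rootSet]
    refine ⟨(LinearMap.charpoly_monic _).ne_zero, ?_⟩
    rw [← heq]
    have := LinearMap.aeval_self_charpoly (Algebra.lmul ℤ R y)
    rw [Polynomial.aeval_algHom_apply] at this
    have h1 := LinearMap.congr_fun this 1
    simpa using h1

lemma not_isUnit_nat (m : ℕ) (hm : 2 ≤ m) : ¬ IsUnit (m : R) := by
  intro h
  have h2 := h.map (Algebra.norm ℤ)
  have h3 : Algebra.norm ℤ (m : R) = (m : ℤ) ^ Module.finrank ℤ R := by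
    have := Algebra.norm_algebraMap (R := ℤ) (S := R) (m : ℤ)
    simpa using this
  rw [h3, isUnit_pow_iff (Module.finrank_pos (R := ℤ) (M := R)).ne', Int.isUnit_iff] at h2
  omega

lemma coprime_aux {x y g : R} (h : x - y ∣ g) : IsCoprime (1 + x * g) (1 + y * g) := by
  have h1 : IsCoprime (1 + x * g) g := ⟨1, -x, by ring⟩
  have h2 : IsCoprime (1 + x * g) (x - y) := h1.of_isCoprime_of_dvd_right h
  have h3 := (h2.mul_right h1).neg_right
  have h4 := h3.add_mul_left_right 1
  convert h4 using 1
  ring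

lemma key [IsDedekindDomain R] (x : R) :
    (∃ n : ℕ, (n : R) = x) ↔ ∃ f g h : R, f ≠ 0 ∧ S (Module.finrank ℤ R + 1) f g h 0 ∧
      ∀ y, S (Module.finrank ℤ R + 1) f g h y →
        y = x ∨ S (Module.finrank ℤ R + 1) f g h (y + 1) := by
  classical
  constructor
  · rintro ⟨n, rfl⟩
    set d := Module.finrank ℤ R + 1
    set f : R := ((n + d + 1).factorial : R) with hfdef
    have hf : f ≠ 0 := Nat.cast_ne_zero.mpr (Nat.factorial_ne_zero _)
    have hfin := finite_B f hf
    set T := hfin.toFinset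
    have hT (x : R) : x ∈ T ↔ B d f x := by simp [T]; rfl
    have hnat (i : ℕ) (hi : i ≤ n) : B d f (i : R) := by
      intro j hj
      have : (i + (j + 1)) ∣ (n + d + 1).factorial :=
        Nat.dvd_factorial (by omega) (by omega)
      have := Nat.cast_dvd_cast (α := R) this
      simpa using this
    let N : R → ℕ := fun x => Ideal.absNorm (Ideal.span {x})
    have hNd (x : R) : x ∣ (N x : R) :=
      Ideal.mem_span_singleton.mp (Ideal.absNorm_mem _)
    let G : ℕ := ∏ p ∈ T.offDiag, N (p.1 - p.2)
    have hG : G ≠ 0 := by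
      apply Finset.prod_ne_zero_iff.mpr
      intro p hp h0
      rw [Ideal.absNorm_eq_zero_iff, Ideal.span_singleton_eq_bot, sub_eq_zero] at h0
      exact (Finset.mem_offDiag.mp hp).2.2 h0
    have hGd (x y : R) (hx : B d f x) (hy : B d f y) (hxy : x ≠ y) : x - y ∣ (G : R) := by
      apply (hNd _).trans
      apply Nat.cast_dvd_cast
      exact Finset.dvd_prod_of_mem (fun p : R × R => N (p.1 - p.2)) (a := (x, y))
        (Finset.mem_offDiag.mpr ⟨(hT x).2 hx, (hT y).2 hy, hxy⟩)
    let h : R := ∏ x ∈ T.filter (fun x => ¬ ∃ i : ℕ, i ≤ n ∧ (i : R) = x), (1 + x * (G : R))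
    have hS (y : R) : S d f (G : R) h y ↔ ∃ i : ℕ, i ≤ n ∧ (i : R) = y := by
      constructor
      · rintro ⟨hB, hy⟩
        by_contra hcon
        rcases hy with rfl | hy
        · exact hcon ⟨0, by simp⟩
        · apply hy
          exact Finset.dvd_prod_of_mem (fun x => 1 + x * (G : R))
            (Finset.mem_filter.mpr ⟨(hT y).2 hB, hcon⟩)
      · rintro ⟨i, hi, rfl⟩
        refine ⟨hnat i hi, ?_⟩
        by_cases hi0 : i = 0
        · left; simp [hi0]
        right
        intro hd
        have hcop : IsCoprime (1 + (i : R) * (G : R)) h := by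
          apply IsCoprime.prod_right
          intro z hz
          obtain ⟨hz1, hz2⟩ := Finset.mem_filter.mp hz
          apply coprime_aux
          apply hGd _ _ (hnat i hi) ((hT z).1 hz1)
          rintro rfl
          exact hz2 ⟨i, hi, rfl⟩
        have hu := hcop.isUnit_of_dvd' dvd_rfl hd
        apply not_isUnit_nat (R := R) (1 + i * G)
        · have : 0 < i * G := Nat.mul_pos (Nat.pos_of_ne_zero hi0) (Nat.pos_of_ne_zero hG)
          omega
        · simpa using hu
    refine ⟨f, G, h, hf, (hS 0).2 ⟨0, by simp⟩, ?_⟩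
    intro y hy
    obtain ⟨i, hi, rfl⟩ := (hS y).1 hy
    rcases hi.eq_or_lt with rfl | hlt
    · left; rfl
    · right
      exact (hS _).2 ⟨i + 1, hlt, by simp⟩
  · rintro ⟨f, g, h, hf, h0, hstep⟩
    by_contra hcon
    have hall (n : ℕ) : S (Module.finrank ℤ R + 1) f g h (n : R) := by
      induction n with
      | zero => simpa using h0
      | succ k ih =>
        rcases hstep _ ih with h1 | h1
        · exact (hcon ⟨k, h1⟩).elim
        · simpa using h1
    apply Set.infinite_range_of_injective (Nat.cast_injective (R := R))
    apply (finite_B f hf).subset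
    rintro _ ⟨n, rfl⟩
    exact (hall n).1

end math

section logic

variable {α : Type} {n : ℕ}

/-- The formula `a ∣ b`. -/
noncomputable def dvdF (a b : Language.ring.Term (α ⊕ Fin n)) : Language.ring.BoundedFormula α n :=
  ∃' ((b.relabel (Sum.map id Fin.castSucc)) =' ((a.relabel (Sum.map id Fin.castSucc)) *
    (Term.var (Sum.inr (Fin.last n)))))

/-- Numeral terms. -/
noncomputable def numT : ℕ → Language.ring.Term (α ⊕ Fin n)
  | 0 => 0
  | k + 1 => numT k + 1

noncomputable def BF (f x : Language.ring.Term (α ⊕ Fin n)) : ℕ → Language.ring.BoundedFormula α n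
  | 0 => ⊤
  | k + 1 => BF f x k ⊓ dvdF (x + (numT k + 1)) f

noncomputable def SF (d : ℕ) (f g h x : Language.ring.Term (α ⊕ Fin n)) :
    Language.ring.BoundedFormula α n :=
  BF f x d ⊓ ((x =' 0) ⊔ ∼(dvdF (1 + x * g) h))

variable {R : Type*} [CommRing R] [CompatibleRing R]

lemma realize_dvdF (a b : Language.ring.Term (α ⊕ Fin n)) (v : α → R) (w : Fin n → R) :
    (dvdF a b).Realize v w ↔ a.realize (Sum.elim v w) ∣ b.realize (Sum.elim v w) := by
  have h (y : R) : (Sum.elim v (Fin.snoc w y) ∘ Sum.map id Fin.castSucc : α ⊕ Fin n → R) =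
      Sum.elim v w := by
    ext i
    rcases i with i | i <;> simp
  simp [dvdF, BoundedFormula.realize_ex, Term.realize_relabel, h, Dvd.dvd]

lemma realize_numT (k : ℕ) (v : α ⊕ Fin n → R) :
    (numT k : Language.ring.Term (α ⊕ Fin n)).realize v = (k : R) := by
  induction k with
  | zero => simp [numT]
  | succ k ih => simp [numT, ih]

lemma realize_BF (d : ℕ) (f x : Language.ring.Term (α ⊕ Fin n)) (v : α → R) (w : Fin n → R) :
    (BF f x d).Realize v w ↔ B d (f.realize (Sum.elim v w)) (x.realize (Sum.elim v w)) := by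
  induction d with
  | zero => simp [BF, B]
  | succ k ih =>
    simp only [BF, BoundedFormula.realize_inf, ih, realize_dvdF, B, Nat.forall_lt_succ_right,
      realize_add, realize_numT, realize_one]

lemma realize_SF (d : ℕ) (f g h x : Language.ring.Term (α ⊕ Fin n)) (v : α → R) (w : Fin n → R) :
    (SF d f g h x).Realize v w ↔ S d (f.realize (Sum.elim v w)) (g.realize (Sum.elim v w))
      (h.realize (Sum.elim v w)) (x.realize (Sum.elim v w)) := by
  simp [SF, S, realize_BF, realize_dvdF]

/-- The final formula. -/
noncomputable def natF (d : ℕ) : Language.ring.Formula (Fin 1) :=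
  ∃' ∃' ∃' ((∼ ((&0 : Language.ring.Term (Fin 1 ⊕ Fin 3)) =' 0) ⊓ SF d (&0) (&1) (&2) 0) ⊓
    ∀' (SF d (&0) (&1) (&2) (&3) ⟹
      (((&3 : Language.ring.Term (Fin 1 ⊕ Fin 4)) =' (Term.var (Sum.inl 0))) ⊔
        SF d (&0) (&1) (&2) (&3 + 1))))

lemma realize_natF (d : ℕ) (v : Fin 1 → R) :
    (natF d).Realize v ↔ ∃ f g h : R, f ≠ 0 ∧ S d f g h 0 ∧
      ∀ y, S d f g h y → y = v 0 ∨ S d f g h (y + 1) := by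
  simp only [natF, Formula.Realize, BoundedFormula.realize_ex, BoundedFormula.realize_inf,
    BoundedFormula.realize_all, BoundedFormula.realize_imp, BoundedFormula.realize_sup,
    BoundedFormula.realize_not, BoundedFormula.realize_bdEqual, realize_SF, realize_add,
    realize_zero, realize_one, Term.realize_var, Sum.elim_inl, Sum.elim_inr, and_assoc]
  rfl

end logic

end NatDef

/-- For any number field `K`, the image of `ℕ` in the ring of integers `𝓞_K` is
first-order definable in `𝓞_K` in the language of rings, with parameters from `𝓞_K`. -/
theorem nat_definable_in_ring_of_integers (K : Type*) [Field K] [NumberField K] :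
    letI := compatibleRingOfRing (NumberField.RingOfIntegers K)
    ∃ (m : ℕ) (θ : Language.ring.Formula (Fin (m + 1)))
      (c : Fin m → NumberField.RingOfIntegers K),
      ∀ x : NumberField.RingOfIntegers K,
        (∃ n : ℕ, (n : NumberField.RingOfIntegers K) = x) ↔ θ.Realize (Fin.cons x c) := by
  letI := compatibleRingOfRing (NumberField.RingOfIntegers K)
  refine ⟨0, NatDef.natF (Module.finrank ℤ (NumberField.RingOfIntegers K) + 1), Fin.elim0, ?_⟩
  intro x
  rw [NatDef.realize_natF, NatDef.key]
  rfl
end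

section
/- (Unsolvability of Hilbert's Tenth Problem) There exists a set S ⊆ ℕ that is diophantine — i.e., there are m ∈ ℕ and a polynomial p ∈ ℤ[T; X₁,…,X_m] with S = {a ∈ ℕ : ∃x ∈ ℕ^m, p(a; x₁,…,x_m) = 0} — but such that membership in S is not a computable (decidable) predicate. -/
namespace H10

theorem digit_sum (u : ℕ) : ∀ (k m : ℕ) (c : ℕ → ℕ), (∀ i, c i < u) → k < m →
    (∑ i ∈ Finset.range m, c i * u ^ i) / u ^ k % u = c k := by
  intro k
  induction k with
  | zero =>
    intro m c hc hm
    obtain ⟨m, rfl⟩ : ∃ m', m = m' + 1 := ⟨m - 1, by omega⟩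
    rw [Finset.sum_range_succ']
    have : ∑ i ∈ Finset.range m, c (i + 1) * u ^ (i + 1)
        = u * ∑ i ∈ Finset.range m, c (i + 1) * u ^ i := by
      rw [Finset.mul_sum]; refine Finset.sum_congr rfl fun i _ => by ring
    rw [this]
    simp [Nat.add_mod, Nat.mod_eq_of_lt (hc 0)]
  | succ k ih =>
    intro m c hc hm
    obtain ⟨m, rfl⟩ : ∃ m', m = m' + 1 := ⟨m - 1, by omega⟩
    rw [Finset.sum_range_succ']
    have : ∑ i ∈ Finset.range m, c (i + 1) * u ^ (i + 1)
        = u * ∑ i ∈ Finset.range m, c (i + 1) * u ^ i := by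
      rw [Finset.mul_sum]; refine Finset.sum_congr rfl fun i _ => by ring
    rw [this, pow_succ', ← Nat.div_div_eq_div_mul]
    have hu : 0 < u := lt_of_le_of_lt (Nat.zero_le _) (hc 0)
    have h2 : (u * ∑ i ∈ Finset.range m, c (i + 1) * u ^ i + c 0 * u ^ 0) / u
        = ∑ i ∈ Finset.range m, c (i + 1) * u ^ i := by
      rw [pow_zero, mul_one, Nat.mul_add_div hu, Nat.div_eq_of_lt (hc 0), add_zero]
    rw [h2]
    exact ih m (fun i => c (i + 1)) (fun i => hc _) (by omega)

theorem choose_formula (n k : ℕ) :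
    n.choose k = ((2 ^ n + 1 + 1) ^ n / (2 ^ n + 1) ^ k) % (2 ^ n + 1) := by
  have h := digit_sum (2 ^ n + 1) k (n + 1 + k) (fun i => n.choose i)
    (fun i => by have := Nat.choose_le_two_pow n i; omega) (by omega)
  rw [← h]
  congr 2
  rw [Finset.sum_range_add]
  simp only [add_pow (2 ^ n + 1) 1 n]
  have : ∑ x ∈ Finset.range k, n.choose (n + 1 + x) * (2 ^ n + 1) ^ (n + 1 + x) = 0 := by
    refine Finset.sum_eq_zero fun i _ => ?_
    rw [Nat.choose_eq_zero_of_lt (by omega), zero_mul]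
  rw [this, add_zero]
  refine Finset.sum_congr rfl fun i _ => by simp [mul_comm]

theorem bern (q s n : ℕ) : (q + s) ^ (n + 1) ≤ (q + s) * q ^ n + n * s * (q + s) ^ n := by
  induction n with
  | zero => simp
  | succ n ih =>
    have h1 := Nat.mul_le_mul_left (q + s) ih
    have h2 : q ^ n ≤ (q + s) ^ n := Nat.pow_le_pow_left (by omega) n
    have h3 := Nat.mul_le_mul_left (s * (q + s)) h2
    calc (q + s) ^ (n + 1 + 1) = (q + s) * (q + s) ^ (n + 1) := by ring
      _ ≤ _ := h1
      _ = (q + s) * q ^ (n + 1) + s * (q + s) * q ^ n + n * s * (q + s) ^ (n + 1) := by ring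
      _ ≤ (q + s) * q ^ (n + 1) + s * (q + s) * (q + s) ^ n + n * s * (q + s) ^ (n + 1) := by omega
      _ = _ := by ring

theorem factorial_formula (n : ℕ) :
    n.factorial = ((n ^ n + 1) * n ^ 2 + n + 1) ^ n / ((n ^ n + 1) * n ^ 2 + n + 1).choose n := by
  set q := (n ^ n + 1) * n ^ 2 + 1 with hq
  have hr : (n ^ n + 1) * n ^ 2 + n + 1 = q + n := by omega
  rw [hr]
  have hD := Nat.descFactorial_eq_factorial_mul_choose (q + n) n
  have hle := Nat.descFactorial_le_pow (q + n) n
  have hge := Nat.pow_sub_le_descFactorial (q + n) n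
  have hge2 : q ^ n ≤ (q + n).descFactorial n :=
    le_trans (Nat.pow_le_pow_left (by omega) n) hge
  have hb := bern q n n
  have hF : n.factorial ≤ n ^ n := Nat.factorial_le_pow n
  have hFp := n.factorial_pos
  rw [hD] at hle hge2
  symm
  refine Nat.div_eq_of_lt_le hle ?_
  set F := n.factorial
  set C := (q + n).choose n
  set R := (q + n) ^ n with hR
  have hRp : 0 < R := by positivity
  have hb2 : (q + n) * R ≤ (q + n) * (F * C) + n * n * R := by
    calc (q + n) * R = (q + n) ^ (n + 1) := by rw [hR]; ring
      _ ≤ _ := hb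
      _ ≤ _ := by gcongr
  have hkey : (F + 1) * (n * n) < q + n := by
    have : (F + 1) * (n * n) ≤ (n ^ n + 1) * n ^ 2 := by rw [← pow_two]; gcongr
    omega
  by_contra hcon
  push Not at hcon
  have h1 : (q + n) * ((F + 1) * (F * C)) ≤ (q + n) * (F * R) := by
    apply Nat.mul_le_mul_left
    calc (F + 1) * (F * C) = F * ((F + 1) * C) := by ring
      _ ≤ _ := Nat.mul_le_mul_left _ hcon
  have h2 := Nat.mul_le_mul_left (F + 1) hb2
  have h3 := Nat.mul_lt_mul_of_pos_right hkey hRp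
  nlinarith

def md (N k : ℕ) : ℕ := N / (k + 1) + 1

theorem prod_md (N : ℕ) : ∀ y : ℕ, (∀ k < y, (k + 1) ∣ N) →
    ∏ k ∈ Finset.range y, md N k = (N + y).choose y := by
  intro y
  induction y with
  | zero => simp
  | succ y ih =>
    intro h
    rw [Finset.prod_range_succ, ih fun k hk => h k (by omega)]
    have h1 := Nat.add_one_mul_choose_eq (N + y) y
    have h2 : md N y * (y + 1) = N + y + 1 := by
      rw [md, add_mul, Nat.div_mul_cancel (h y (by omega))]; ring
    apply Nat.eq_of_mul_eq_mul_right (Nat.succ_pos y)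
    rw [← add_assoc, Nat.succ_eq_add_one, ← h1, mul_assoc, h2]; ring

section
variable {Q : ℕ}

theorem dvd_N {k : ℕ} (hk : k < Q) : (k + 1) ∣ Q.factorial ^ 2 :=
  (Nat.dvd_factorial (Nat.succ_pos k) hk).trans (dvd_pow_self _ two_ne_zero)

theorem md_mul {k : ℕ} (hk : k < Q) :
    md (Q.factorial ^ 2) k * (k + 1) = Q.factorial ^ 2 + k + 1 := by
  rw [md, add_mul, Nat.div_mul_cancel (dvd_N hk)]; ring

theorem prime_md {k p : ℕ} (hk : k < Q) (hp : p.Prime) (h : p ∣ md (Q.factorial ^ 2) k) :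
    Q < p := by
  by_contra hc
  push Not at hc
  have h1 : p ∣ Q.factorial := Nat.dvd_factorial hp.pos hc
  have h2 : k + 1 ∣ Q.factorial := Nat.dvd_factorial (Nat.succ_pos k) hk
  have h3 : p ∣ Q.factorial ^ 2 / (k + 1) := by
    rw [pow_two]
    rw [Nat.mul_div_assoc _ h2]
    exact h1.mul_right _
  rw [md, Nat.dvd_add_right h3] at h
  exact hp.one_lt.ne' (Nat.dvd_one.1 h)

theorem md_coprime {k j : ℕ} (hk : k < Q) (hj : j < Q) (hkj : k < j) :
    Nat.Coprime (md (Q.factorial ^ 2) k) (md (Q.factorial ^ 2) j) := by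
  rw [Nat.coprime_iff_gcd_eq_one]
  by_contra hc
  obtain ⟨p, hp, hd⟩ := Nat.exists_prime_and_dvd hc
  have h1 := hd.trans (Nat.gcd_dvd_left _ _)
  have h2 := hd.trans (Nat.gcd_dvd_right _ _)
  have h3 := prime_md hk hp h1
  have h4 : p ∣ Q.factorial ^ 2 + k + 1 := md_mul hk ▸ h1.mul_right _
  have h5 : p ∣ Q.factorial ^ 2 + j + 1 := md_mul hj ▸ h2.mul_right _
  have h6 := Nat.dvd_sub h5 h4
  have h7 := Nat.le_of_dvd (by omega) h6
  omega

theorem core {n : ℕ} (F : ℕ → (Fin n → ℕ) → ℤ)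
    (hF : ∀ (M k k' : ℕ) (x x' : Fin n → ℕ), (k : ℤ) ≡ k' [ZMOD M] → (∀ i, (x i : ℤ) ≡ x' i [ZMOD M]) →
      F k x ≡ F k' x' [ZMOD M])
    {y u : ℕ} (hy : y ≤ Q) (hu : u ≤ Q)
    (hB : ∀ k < y, ∀ x : Fin n → ℕ, (∀ i, x i < u) → (F k x).natAbs ≤ Q) :
    (∀ k < y, ∃ x : Fin n → ℕ, (∀ i, x i < u) ∧ F k x = 0) ↔
    ∃ (c : ℕ) (a : Fin n → ℕ), (Q.factorial ^ 2 + y).choose y ∣ c + Q.factorial ^ 2 + 1 ∧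
      (∀ i, (Q.factorial ^ 2 + y).choose y ∣ (a i).choose u) ∧
      (Q.factorial ^ 2 + y).choose y ∣ (F c a).natAbs := by
  have hW := prod_md (Q.factorial ^ 2) y (fun k hk => dvd_N (by omega))
  set N := Q.factorial ^ 2 with hN
  set W := (N + y).choose y with hWdef
  have hNp : 0 < N := by positivity
  have hmW : ∀ k < y, md N k ∣ W := fun k hk => by
    rw [← hW]; exact Finset.dvd_prod_of_mem _ (Finset.mem_range.2 hk)
  have hcop : (Finset.range y : Set ℕ).Pairwise (Function.onFun Nat.Coprime (md N)) := by
    intro i hi j hj hij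
    have hi' : i < y := by simpa using hi
    have hj' : j < y := by simpa using hj
    rcases lt_or_gt_of_ne hij with h | h
    · exact md_coprime (by omega) (by omega) h
    · exact (md_coprime (by omega) (by omega) h).symm
  have hWdvd : ∀ z : ℕ, (∀ k < y, md N k ∣ z) → W ∣ z := by
    intro z hz
    rw [← hW]
    apply Finset.prod_dvd_of_isRelPrime
    · intro i hi j hj hij
      exact (Nat.coprime_iff_isRelPrime.1 (hcop hi hj hij))
    · intro i hi
      exact hz i (Finset.mem_range.1 hi)
  constructor
  · intro h
    choose! x hx hx0 using h
    have hWp : 0 < W := Nat.choose_pos (by omega)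
    have hex : ∀ i : Fin n, ∃ a : ℕ, ∀ k < y, a ≡ x k i [MOD md N k] := by
      intro i
      obtain ⟨a, ha⟩ := Nat.chineseRemainderOfFinset (fun k => x k i) (md N) (Finset.range y)
        (by intro k _; simp [md]) hcop
      exact ⟨a, fun k hk => ha k (Finset.mem_range.2 hk)⟩
    choose a ha using hex
    have hc : W * (N + 1) - (N + 1) + N + 1 = W * (N + 1) := by
      have := Nat.mul_le_mul_right (N + 1) hWp
      omega
    refine ⟨W * (N + 1) - (N + 1), a, ⟨N + 1, hc⟩, ?_, ?_⟩
    · intro i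
      have hcf : Nat.Coprime W u.factorial := by
        by_contra hc
        obtain ⟨p, hp, hd⟩ := Nat.exists_prime_and_dvd hc
        have h1 := hd.trans (Nat.gcd_dvd_left _ _)
        have h2 := hd.trans (Nat.gcd_dvd_right _ _)
        rw [← hW, hp.prime.dvd_finsetProd_iff] at h1
        obtain ⟨k, hk, hk2⟩ := h1
        have hk : k < y := Finset.mem_range.1 hk
        have h3 := prime_md (by omega) hp hk2
        rw [hp.dvd_factorial] at h2
        omega
      refine hcf.dvd_of_dvd_mul_left ?_
      rw [← Nat.descFactorial_eq_factorial_mul_choose]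
      apply hWdvd
      intro k hk
      rw [Nat.descFactorial_eq_prod_range]
      rcases le_or_gt (x k i) (a i) with hle | hlt
      · exact ((Nat.modEq_iff_dvd' hle).1 (ha i k hk).symm).trans
          (Finset.dvd_prod_of_mem _ (Finset.mem_range.2 (hx k hk i)))
      · have : a i < u := hlt.trans (hx k hk i)
        rw [Finset.prod_eq_zero (Finset.mem_range.2 this) (by simp)]
        exact dvd_zero _
    · apply hWdvd
      intro k hk
      rw [← Int.natCast_dvd]
      apply Int.modEq_zero_iff_dvd.1
      rw [← hx0 k hk]
      apply hF
      · apply Int.natCast_modEq_iff.2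
        have h4 : md N k ∣ N + k + 1 := md_mul (Q := Q) (k := k) (by omega) ▸ dvd_mul_right _ _
        have h5 : md N k ∣ W * (N + 1) := (hmW k hk).mul_right _
        apply Nat.ModEq.add_right_cancel' (N + 1)
        rw [← add_assoc, hc]
        apply (Nat.modEq_zero_iff_dvd.2 h5).trans
        rw [show k + (N + 1) = N + k + 1 by ring]
        exact (Nat.modEq_zero_iff_dvd.2 h4).symm
      · intro i
        exact Int.natCast_modEq_iff.2 (ha i k hk)
  · rintro ⟨c, a, hc, ha, hFa⟩ k hk
    have hm1 : md N k ≠ 1 := by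
      have : 0 < N / (k + 1) := Nat.div_pos (Nat.le_of_dvd hNp (dvd_N (by omega))) (by omega)
      rw [md]; omega
    obtain ⟨p, hp, hpm⟩ := Nat.exists_prime_and_dvd hm1
    have hQp := prime_md (Q := Q) (by omega) hp hpm
    have hpW := hpm.trans (hmW k hk)
    have hj : ∀ i, ∃ j < u, a i ≡ j [MOD p] := by
      intro i
      have h1 : p ∣ (a i).descFactorial u := by
        rw [Nat.descFactorial_eq_factorial_mul_choose]
        exact (hpW.trans (ha i)).mul_left _
      rcases lt_or_ge (a i) u with h | h
      · exact ⟨a i, h, rfl⟩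
      rw [Nat.descFactorial_eq_prod_range, hp.prime.dvd_finsetProd_iff] at h1
      obtain ⟨j, hj, hd⟩ := h1
      have hj := Finset.mem_range.1 hj
      exact ⟨j, hj, ((Nat.modEq_iff_dvd' (by omega)).2 hd).symm⟩
    choose j hju hjm using hj
    refine ⟨j, hju, ?_⟩
    have hcon : F c a ≡ F k j [ZMOD p] := by
      apply hF
      · apply Int.natCast_modEq_iff.2
        have h4 : md N k ∣ N + k + 1 := md_mul (Q := Q) (k := k) (by omega) ▸ dvd_mul_right _ _
        apply Nat.ModEq.add_right_cancel' (N + 1)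
        apply (Nat.modEq_zero_iff_dvd.2 (hpW.trans hc)).trans
        rw [show k + (N + 1) = N + k + 1 by ring]
        exact (Nat.modEq_zero_iff_dvd.2 (hpm.trans h4)).symm
      · intro i
        exact Int.natCast_modEq_iff.2 (hjm i)
    have h0 : F c a ≡ 0 [ZMOD p] :=
      Int.modEq_zero_iff_dvd.2 (Int.natCast_dvd.2 (hpW.trans hFa))
    have h1 : p ∣ (F k j).natAbs := Int.natCast_dvd.1 (Int.modEq_zero_iff_dvd.1 (hcon.symm.trans h0))
    have h2 := hB k hk j hju
    have := Nat.eq_zero_of_dvd_of_lt h1 (by omega)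
    exact Int.natAbs_eq_zero.1 this

end

end H10

namespace H10
open Dioph

section
variable {α : Type} {f g : (α → ℕ) → ℕ}

theorem constFn (n : ℕ) : DiophFn fun _ : α → ℕ => n := const_dioph n

theorem choose_dioph (df : DiophFn f) (dg : DiophFn g) :
    DiophFn fun v => (f v).choose (g v) := by
  simp only [choose_formula]
  have hu : DiophFn fun v => 2 ^ f v + 1 := add_dioph (pow_dioph (constFn 2) df) (constFn 1)
  exact mod_dioph (div_dioph (pow_dioph (add_dioph hu (constFn 1)) df) (pow_dioph hu dg)) hu

theorem factorial_dioph (df : DiophFn f) : DiophFn fun v => (f v).factorial := by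
  have h : DiophFn fun v => (f v ^ f v + 1) * f v ^ 2 + f v + 1 :=
    add_dioph (add_dioph (mul_dioph (add_dioph (pow_dioph df df) (constFn 1))
      (pow_dioph df (constFn 2))) df) (constFn 1)
  have h2 := div_dioph (pow_dioph h df) (choose_dioph h df)
  simp only [← factorial_formula] at h2
  exact h2

theorem fin_all_dioph : ∀ (n : ℕ) (S : Fin n → Set (α → ℕ)), (∀ i, Dioph (S i)) →
    Dioph {v | ∀ i, v ∈ S i} := by
  intro n
  induction n with
  | zero =>
    intro S _
    exact (eq_dioph (constFn 0) (constFn 0)).ext fun v => by simp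
  | succ n ih =>
    intro S hS
    refine ((hS 0).inter (ih (fun i => S i.succ) fun i => hS _)).ext fun v => ?_
    simp [Fin.forall_fin_succ]

theorem isPoly_congr {f : (α → ℕ) → ℤ} (hf : IsPoly f) (M : ℤ) (x x' : α → ℕ)
    (h : ∀ i, (x i : ℤ) ≡ x' i [ZMOD M]) : f x ≡ f x' [ZMOD M] := by
  induction hf with
  | proj i => exact h i
  | const n => rfl
  | sub _ _ h1 h2 => exact h1.sub h2
  | mul _ _ h1 h2 => exact h1.mul h2

theorem isPoly_bound {f : (α → ℕ) → ℤ} (hf : IsPoly f) :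
    ∃ B : (α → ℕ) → ℕ, DiophFn B ∧ Monotone B ∧ ∀ x, (f x).natAbs ≤ B x := by
  induction hf with
  | proj i => exact ⟨fun v => v i, proj_dioph i, fun a b h => h i, fun x => by simp⟩
  | const n => exact ⟨fun v => n.natAbs, constFn _, fun a b h => le_rfl, fun x => le_rfl⟩
  | sub _ _ h1 h2 =>
    obtain ⟨B, dB, mB, hB⟩ := h1
    obtain ⟨C, dC, mC, hC⟩ := h2
    exact ⟨fun v => B v + C v, add_dioph dB dC, fun a b h => add_le_add (mB h) (mC h),
      fun x => (Int.natAbs_sub_le _ _).trans (add_le_add (hB x) (hC x))⟩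
  | mul _ _ h1 h2 =>
    obtain ⟨B, dB, mB, hB⟩ := h1
    obtain ⟨C, dC, mC, hC⟩ := h2
    refine ⟨fun v => B v * C v, mul_dioph dB dC, fun a b h => Nat.mul_le_mul (mB h) (mC h),
      fun x => ?_⟩
    rw [Int.natAbs_mul]
    exact Nat.mul_le_mul (hB x) (hC x)

theorem isPoly_mv {f : (α → ℕ) → ℤ} (hf : IsPoly f) :
    ∃ q : MvPolynomial α ℤ, ∀ x, f x = MvPolynomial.eval (fun i => (x i : ℤ)) q := by
  induction hf with
  | proj i => exact ⟨MvPolynomial.X i, fun x => by simp⟩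
  | const n => exact ⟨MvPolynomial.C n, fun x => by simp⟩
  | sub _ _ h1 h2 =>
    obtain ⟨B, hB⟩ := h1
    obtain ⟨C, hC⟩ := h2
    exact ⟨B - C, fun x => by simp [hB, hC]⟩
  | mul _ _ h1 h2 =>
    obtain ⟨B, hB⟩ := h1
    obtain ⟨C, hC⟩ := h2
    exact ⟨B * C, fun x => by simp [hB, hC]⟩

theorem mv_isPoly (q : MvPolynomial α ℤ) :
    IsPoly fun x : α → ℕ => MvPolynomial.eval (fun i => (x i : ℤ)) q := by
  induction q using MvPolynomial.induction_on with
  | C a => simpa using IsPoly.const a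
  | add p q hp hq => simp only [map_add]; exact hp.add hq
  | mul_X p i hp => simpa using hp.mul (IsPoly.proj i)

theorem finite_dummies {S : Set (α → ℕ)} (d : Dioph S) :
    ∃ (n : ℕ) (q : MvPolynomial (α ⊕ Fin n) ℤ), ∀ v, v ∈ S ↔ ∃ t : Fin n → ℕ,
      MvPolynomial.eval (fun i => ((Sum.elim v t i : ℕ) : ℤ)) q = 0 := by
  classical
  obtain ⟨β, p, hp⟩ := d
  obtain ⟨q, hq⟩ := isPoly_mv p.2
  obtain ⟨s, q', rfl⟩ := MvPolynomial.exists_finset_rename q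
  let b : Set β := {b | Sum.inr b ∈ s}
  have hb : b.Finite := by
    have : b = Sum.inr ⁻¹' (s : Set (α ⊕ β)) := rfl
    rw [this]
    exact s.finite_toSet.preimage Sum.inr_injective.injOn
  have : Fintype b := hb.fintype
  let e := Fintype.equivFin b
  let φ : {x // x ∈ s} → α ⊕ Fin (Fintype.card b) := fun x => match x with
    | ⟨Sum.inl a, _⟩ => Sum.inl a
    | ⟨Sum.inr c, h⟩ => Sum.inr (e ⟨c, h⟩)
  refine ⟨Fintype.card b, MvPolynomial.rename φ q', fun v => ?_⟩
  rw [hp]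
  have key : ∀ x, p x = MvPolynomial.eval (fun i => (x i : ℤ))
    (MvPolynomial.rename Subtype.val q') := hq
  simp only [key, MvPolynomial.eval_rename]
  constructor
  · rintro ⟨t, ht⟩
    refine ⟨fun i => t (e.symm i).1, ?_⟩
    rw [← ht]
    congr 2
    funext x
    rcases x with ⟨a | c, h⟩ <;> simp [φ]
  · rintro ⟨t, ht⟩
    refine ⟨fun c => if h : c ∈ b then t (e ⟨c, h⟩) else 0, ?_⟩
    rw [← ht]
    congr 2
    funext x
    rcases x with ⟨a | c, h⟩
    · simp [φ]
    · have : c ∈ b := h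
      simp [φ, this]

theorem ball_dioph {S : Set (Option α → ℕ)} (d : Dioph S) {y : (α → ℕ) → ℕ} (dy : DiophFn y) :
    Dioph {v : α → ℕ | ∀ k < y v, Option.elim' k v ∈ S} := by
  obtain ⟨n, q, hq⟩ := finite_dummies d
  have hP := mv_isPoly q
  set P : (Option α ⊕ Fin n → ℕ) → ℤ := fun x => MvPolynomial.eval (fun i => (x i : ℤ)) q with hPd
  obtain ⟨B, dB, mB, hB⟩ := isPoly_bound hP
  let γ := α ⊕ (Fin 4 ⊕ Fin n)
  let iz : γ := Sum.inr (Sum.inl 0)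
  let iu : γ := Sum.inr (Sum.inl 1)
  let iQ : γ := Sum.inr (Sum.inl 2)
  let ic : γ := Sum.inr (Sum.inl 3)
  let ia : Fin n → γ := fun i => Sum.inr (Sum.inr i)
  let g : Option α ⊕ Fin n → γ := Sum.elim (Option.elim' ic Sum.inl) ia
  let h : Option α ⊕ Fin n → γ := Sum.elim (Option.elim' iz Sum.inl) (fun _ => iu)
  have dz : DiophFn fun w : γ → ℕ => w iz := proj_dioph _
  have du : DiophFn fun w : γ → ℕ => w iu := proj_dioph _
  have dQ : DiophFn fun w : γ → ℕ => w iQ := proj_dioph _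
  have dc : DiophFn fun w : γ → ℕ => w ic := proj_dioph _
  have dN : DiophFn fun w : γ → ℕ => (w iQ).factorial ^ 2 :=
    pow_dioph (factorial_dioph dQ) (constFn 2)
  have dW : DiophFn fun w : γ → ℕ => ((w iQ).factorial ^ 2 + w iz).choose (w iz) :=
    choose_dioph (add_dioph dN dz) dz
  have dB' : DiophFn fun w : γ → ℕ => B (w ∘ h) := reindex_diophFn h dB
  have dP : DiophFn fun w : γ → ℕ => (P (w ∘ g)).natAbs :=
    reindex_diophFn g (abs_poly_dioph (⟨P, hP⟩ : Poly _))
  have dy' : DiophFn fun w : γ → ℕ => y (w ∘ Sum.inl) := reindex_diophFn _ dy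
  have D := (eq_dioph dz dy').inter <| (le_dioph dz dQ).inter <| (le_dioph du dQ).inter <|
    (le_dioph dB' dQ).inter <| (dvd_dioph dW (add_dioph (add_dioph dc dN) (constFn 1))).inter <|
    (fin_all_dioph n _ fun i => dvd_dioph dW (choose_dioph (proj_dioph (ia i)) du)).inter <|
    dvd_dioph dW dP
  refine (ex_dioph D).ext fun v => ?_
  have hcore : ∀ u Q, y v ≤ Q → u ≤ Q → B (Sum.elim (Option.elim' (y v) v) fun _ => u) ≤ Q →
      _ := fun u Q h1 h2 h3 => core (Q := Q) (n := n) (y := y v) (u := u)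
    (fun k x => P (Sum.elim (Option.elim' k v) x))
    (fun M k k' x x' hk hx => isPoly_congr hP _ _ _ (by
      rintro ((_ | a) | i)
      · exact hk
      · rfl
      · exact hx i)) h1 h2 (fun k hk x hx => (hB _).trans (le_trans (mB (by
      rintro ((_ | a) | i)
      · exact hk.le
      · exact le_rfl
      · exact (hx i).le)) h3))
  have eg : ∀ x : Fin 4 ⊕ Fin n → ℕ, (Sum.elim v x) ∘ g =
      Sum.elim (Option.elim' (x (Sum.inl 3)) v) (fun i => x (Sum.inr i)) := by
    intro x; funext j; rcases j with (_ | a) | i <;> rfl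
  have eh : ∀ x : Fin 4 ⊕ Fin n → ℕ, (Sum.elim v x) ∘ h =
      Sum.elim (Option.elim' (x (Sum.inl 0)) v) (fun i => x (Sum.inl 1)) := by
    intro x; funext j; rcases j with (_ | a) | i <;> rfl
  constructor
  · rintro ⟨x, h1, h2, h3, h4, h5, h6, h7⟩ k hk
    replace h1 : x (Sum.inl 0) = y v := h1
    replace h2 : x (Sum.inl 0) ≤ x (Sum.inl 2) := h2
    replace h3 : x (Sum.inl 1) ≤ x (Sum.inl 2) := h3
    replace h4 : B ((Sum.elim v x) ∘ h) ≤ x (Sum.inl 2) := h4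
    rw [eh, h1] at h4
    rw [h1] at h2
    have hh := (hcore _ _ h2 h3 h4).2 ⟨x (Sum.inl 3), fun i => x (Sum.inr i), ?_, ?_, ?_⟩ k hk
    · obtain ⟨t, _, ht⟩ := hh
      exact (hq _).2 ⟨t, ht⟩
    · rw [← h1]; exact h5
    · rw [← h1]; exact h6
    · rw [← h1, ← eg]; exact h7
  · intro hv
    have hv' : ∀ k < y v, ∃ t : Fin n → ℕ, P (Sum.elim (Option.elim' k v) t) = 0 :=
      fun k hk => (hq _).1 (hv k hk)
    choose! t ht using hv'
    let u := (∑ k ∈ Finset.range (y v), ∑ i, t k i) + 1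
    have hu : ∀ k < y v, ∀ i, t k i < u := by
      intro k hk i
      have h1 : t k i ≤ ∑ i, t k i :=
        Finset.single_le_sum (f := fun i => t k i) (fun _ _ => Nat.zero_le _) (Finset.mem_univ i)
      have h2 : ∑ i, t k i ≤ ∑ k ∈ Finset.range (y v), ∑ i, t k i :=
        Finset.single_le_sum (f := fun k => ∑ i, t k i) (fun _ _ => Nat.zero_le _)
          (Finset.mem_range.2 hk)
      omega
    let Q := y v + u + B (Sum.elim (Option.elim' (y v) v) fun _ => u)
    obtain ⟨c, a, h5, h6, h7⟩ := (hcore u Q (by omega) (by omega) (by omega)).1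
      fun k hk => ⟨t k, hu k hk, ht k hk⟩
    refine ⟨Sum.elim ![y v, u, Q, c] a, rfl, ?_, ?_, ?_, h5, h6, ?_⟩
    · change y v ≤ Q; omega
    · change u ≤ Q; omega
    · change B ((Sum.elim v _) ∘ h) ≤ Q
      rw [eh]
      change B (Sum.elim (Option.elim' (y v) v) fun _ => u) ≤ Q
      omega
    · change _ ∣ (P ((Sum.elim v _) ∘ g)).natAbs
      rw [eg]
      exact h7

end

end H10

namespace H10
open Dioph

section
variable {α : Type} {f g : (α → ℕ) → ℕ}

theorem ex_rel {R : (α → ℕ) → ℕ → Prop}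
    (h : Dioph {w : Option α → ℕ | R (fun i => w (some i)) (w none)}) :
    Dioph {v : α → ℕ | ∃ x, R v x} :=
  (ex1_dioph h).ext fun _ => Iff.rfl

theorem ball_rel {R : (α → ℕ) → ℕ → Prop}
    (h : Dioph {w : Option α → ℕ | R (fun i => w (some i)) (w none)})
    {y : (α → ℕ) → ℕ} (dy : DiophFn y) :
    Dioph {v : α → ℕ | ∀ k < y v, R v k} :=
  (ball_dioph h dy).ext fun _ => Iff.rfl

theorem lift_fn (h : DiophFn f) : DiophFn fun w : Option α → ℕ => f fun i => w (some i) :=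
  reindex_diophFn some h

theorem none_fn : DiophFn fun w : Option α → ℕ => w none := proj_dioph none

theorem pair_dioph (df : DiophFn f) (dg : DiophFn g) : DiophFn fun v => Nat.pair (f v) (g v) := by
  have h : ∀ {β : Type} {a b c : (β → ℕ) → ℕ}, DiophFn a → DiophFn b → DiophFn c →
      Dioph {v | Nat.pair (a v) (b v) = c v} := by
    intro β a b c da db dc
    refine (((lt_dioph da db).inter (eq_dioph (add_dioph (mul_dioph db db) da) dc)).union
      ((le_dioph db da).inter
        (eq_dioph (add_dioph (add_dioph (mul_dioph da da) da) db) dc))).ext fun v => ?_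
    change (a v < b v ∧ b v * b v + a v = c v) ∨ (b v ≤ a v ∧ a v * a v + a v + b v = c v) ↔
      Nat.pair (a v) (b v) = c v
    rw [Nat.pair]
    split_ifs with hh
    · constructor
      · rintro (h | h) <;> omega
      · intro h; exact Or.inl ⟨hh, h⟩
    · constructor
      · rintro (h | h) <;> omega
      · intro h; exact Or.inr ⟨by omega, h⟩
  exact h (lift_fn df) (lift_fn dg) none_fn

/-- A binary relation is Diophantine (after any substitution of Diophantine functions). -/
def DRel (R : ℕ → ℕ → Prop) : Prop :=
  ∀ ⦃α : Type⦄ ⦃f g : (α → ℕ) → ℕ⦄, DiophFn f → DiophFn g → Dioph {v | R (f v) (g v)}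

theorem DRel.congr {R R' : ℕ → ℕ → Prop} (h : DRel R) (e : ∀ a b, R' a b ↔ R a b) : DRel R' :=
  fun _ _ _ df dg => (h df dg).ext fun _ => (e _ _).symm

end

theorem prec_iff (f g : ℕ →. ℕ) (a n z : ℕ) :
    z ∈ (Nat.rec (f a) (fun y IH => do let i ← IH; g (Nat.pair a (Nat.pair y i))) n : Part ℕ) ↔
    ∃ s : ℕ → ℕ, s 0 ∈ f a ∧ (∀ i < n, s (i + 1) ∈ g (Nat.pair a (Nat.pair i (s i)))) ∧
      s n = z := by
  induction n generalizing z with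
  | zero =>
    constructor
    · intro h; exact ⟨fun _ => z, h, by simp, rfl⟩
    · rintro ⟨s, h, _, rfl⟩; exact h
  | succ n ih =>
    constructor
    · intro h
      obtain ⟨i, hi, hz⟩ := Part.mem_bind_iff.1 h
      obtain ⟨s, h0, hs, rfl⟩ := (ih i).1 hi
      refine ⟨fun j => if j ≤ n then s j else z, by simpa using h0, ?_, by simp⟩
      intro i hi
      rcases Nat.lt_succ_iff_lt_or_eq.1 hi with h | rfl
      · have h1 : i + 1 ≤ n := h
        have h2 : i ≤ n := by omega
        simpa [h1, h2] using hs i h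
      · simpa using hz
    · rintro ⟨s, h0, hs, rfl⟩
      exact Part.mem_bind_iff.2 ⟨s n, (ih _).2 ⟨s, h0, fun i hi => hs i (by omega), rfl⟩,
        hs n (by omega)⟩

theorem beta_exists (s : ℕ → ℕ) (n : ℕ) :
    ∃ c d : ℕ, ∀ i ≤ n, c % ((i + 1) * d + 1) = s i := by
  let l := (List.range (n + 1)).map s
  refine ⟨(Nat.unbeta l).unpair.1, (Nat.unbeta l).unpair.2, fun i hi => ?_⟩
  have := Nat.beta_unbeta_coe l ⟨i, by simp [l]; omega⟩
  simpa [Nat.beta, l] using this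

theorem partrec_dioph {f : ℕ →. ℕ} (hf : Nat.Partrec f) : DRel fun a b => b ∈ f a := by
  induction hf with
  | zero =>
    refine DRel.congr (R := fun a b => b = 0) (fun _ _ _ df dg => eq_dioph dg (constFn 0)) ?_
    intro a b; exact Part.mem_some_iff
  | succ =>
    refine DRel.congr (R := fun a b => b = a + 1)
      (fun _ _ _ df dg => eq_dioph dg (add_dioph df (constFn 1))) ?_
    intro a b; exact Part.mem_some_iff
  | left =>
    refine DRel.congr (R := fun a b => ∃ c, Nat.pair b c = a)
      (fun _ _ _ df dg => ex_rel (eq_dioph (pair_dioph (lift_fn dg) none_fn) (lift_fn df))) ?_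
    intro a b
    refine Part.mem_some_iff.trans ⟨?_, ?_⟩
    · rintro rfl; exact ⟨_, Nat.pair_unpair a⟩
    · rintro ⟨c, rfl⟩; simp
  | right =>
    refine DRel.congr (R := fun a b => ∃ c, Nat.pair c b = a)
      (fun _ _ _ df dg => ex_rel (eq_dioph (pair_dioph none_fn (lift_fn dg)) (lift_fn df))) ?_
    intro a b
    refine Part.mem_some_iff.trans ⟨?_, ?_⟩
    · rintro rfl; exact ⟨_, Nat.pair_unpair a⟩
    · rintro ⟨c, rfl⟩; simp
  | @pair f g _ _ hf hg =>
    refine DRel.congr (R := fun a b => ∃ x, ∃ y, x ∈ f a ∧ y ∈ g a ∧ Nat.pair x y = b)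
      (fun α F G df dg => ?_) ?_
    · refine ex_rel (R := fun v x => ∃ y, x ∈ f (F v) ∧ y ∈ g (F v) ∧ Nat.pair x y = G v) ?_
      refine ex_rel (R := fun (w : Option α → ℕ) y => w none ∈ f (F fun i => w (some i)) ∧
        y ∈ g (F fun i => w (some i)) ∧ Nat.pair (w none) y = G fun i => w (some i)) ?_
      have dF := lift_fn (lift_fn df)
      have dG := lift_fn (lift_fn dg)
      exact (hf dF (lift_fn none_fn)).inter ((hg dF none_fn).inter
        (eq_dioph (pair_dioph (lift_fn none_fn) none_fn) dG))
    · intro a b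
      simp [Seq.seq, eq_comm]
  | @comp f g _ _ hf hg =>
    refine DRel.congr (R := fun a b => ∃ x, x ∈ g a ∧ b ∈ f x)
      (fun _ _ _ df dg => ex_rel ((hg (lift_fn df) none_fn).inter (hf none_fn (lift_fn dg)))) ?_
    intro a b
    exact Part.mem_bind_iff
  | @prec f g _ _ hf hg =>
    refine DRel.congr (R := fun m z => ∃ a, ∃ n, ∃ c, ∃ d, Nat.pair a n = m ∧
      c % ((0 + 1) * d + 1) ∈ f a ∧
      (∀ i < n, c % ((i + 1 + 1) * d + 1) ∈
        g (Nat.pair a (Nat.pair i (c % ((i + 1) * d + 1))))) ∧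
      c % ((n + 1) * d + 1) = z) (fun α F G df dg => ?_) ?_
    · refine ex_rel (ex_rel (ex_rel (ex_rel ?_)))
      have dF := lift_fn (lift_fn (lift_fn (lift_fn df)))
      have dG := lift_fn (lift_fn (lift_fn (lift_fn dg)))
      have da := lift_fn (lift_fn (lift_fn (none_fn (α := α))))
      have dn := lift_fn (lift_fn (none_fn (α := Option α)))
      have dc := lift_fn (none_fn (α := Option (Option α)))
      have dd := none_fn (α := Option (Option (Option α)))
      have db : ∀ {β : Type} {c i d : (β → ℕ) → ℕ}, DiophFn c → DiophFn i → DiophFn d →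
          DiophFn fun v => c v % ((i v + 1) * d v + 1) := fun dc di dd =>
        mod_dioph dc (add_dioph (mul_dioph (add_dioph di (constFn 1)) dd) (constFn 1))
      have hball := ball_rel (R := fun (w : Option (Option (Option (Option α))) → ℕ) i =>
          w (some none) % ((i + 1 + 1) * w none + 1) ∈
          g (Nat.pair (w (some (some (some none))))
            (Nat.pair i (w (some none) % ((i + 1) * w none + 1)))))
        (hg (pair_dioph (lift_fn da) (pair_dioph none_fn (db (lift_fn dc) none_fn (lift_fn dd))))
          (db (lift_fn dc) (add_dioph none_fn (constFn 1)) (lift_fn dd))) dn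
      exact (eq_dioph (pair_dioph da dn) dF).inter <| (hf da (db dc (constFn 0) dd)).inter <|
        hball.inter <| eq_dioph (db dc dn dd) dG
    · intro m z
      rw [Nat.unpaired, prec_iff]
      constructor
      · rintro ⟨s, h0, hs, rfl⟩
        obtain ⟨c, d, hcd⟩ := beta_exists s m.unpair.2
        refine ⟨m.unpair.1, m.unpair.2, c, d, Nat.pair_unpair m, ?_, ?_, hcd _ le_rfl⟩
        · rw [hcd 0 (Nat.zero_le _)]; exact h0
        · intro i hi
          rw [hcd (i + 1) hi, hcd i hi.le]; exact hs i hi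
      · rintro ⟨a, n, c, d, rfl, h0, hs, rfl⟩
        rw [Nat.unpair_pair]
        exact ⟨fun i => c % ((i + 1) * d + 1), h0, hs, rfl⟩
  | @rfind f _ hf =>
    refine DRel.congr (R := fun a n => 0 ∈ f (Nat.pair a n) ∧
      ∀ i < n, ∃ m, m + 1 ∈ f (Nat.pair a i)) (fun α F G df dg => ?_) ?_
    · refine (hf (pair_dioph df dg) (constFn 0)).inter ?_
      refine ball_rel (R := fun v i => ∃ m, m + 1 ∈ f (Nat.pair (F v) i)) ?_ dg
      refine ex_rel (R := fun (w : Option α → ℕ) m =>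
        m + 1 ∈ f (Nat.pair (F fun i => w (some i)) (w none))) ?_
      exact hf (pair_dioph (lift_fn (lift_fn df)) (lift_fn none_fn))
        (add_dioph none_fn (constFn 1))
    · intro a n
      refine Nat.mem_rfind.trans ?_
      simp only [Part.map_eq_map, Part.mem_map_iff]
      refine and_congr ?_ (forall_congr' fun i => imp_congr_right fun hi => ?_)
      · simp
      · constructor
        · rintro ⟨m, hm, h⟩
          have : m ≠ 0 := by simpa using h
          obtain ⟨m, rfl⟩ := Nat.exists_eq_succ_of_ne_zero this
          exact ⟨m, hm⟩
        · rintro ⟨m, hm⟩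
          exact ⟨m + 1, hm, by simp⟩

theorem final {S : Set ℕ} (h : Dioph {v : Unit → ℕ | v () ∈ S}) :
    ∃ (m : ℕ) (p : MvPolynomial (Fin (m + 1)) ℤ),
        ∀ a : ℕ, a ∈ S ↔ ∃ x : Fin m → ℕ,
          MvPolynomial.eval (Fin.cons (a : ℤ) (fun i => (x i : ℤ))) p = 0 := by
  obtain ⟨n, q, hq⟩ := finite_dummies h
  refine ⟨n, MvPolynomial.rename (Sum.elim (fun _ => 0) Fin.succ) q, fun a => ?_⟩
  refine (hq fun _ => a).trans (exists_congr fun t => ?_)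
  rw [MvPolynomial.eval_rename]
  have : (fun i => ((Sum.elim (fun _ : Unit => a) t i : ℕ) : ℤ)) =
      (Fin.cons (a : ℤ) fun i => (t i : ℤ) : Fin (n + 1) → ℤ) ∘
        Sum.elim (fun _ => 0) Fin.succ := by
    funext i; rcases i with i | i <;> simp
  rw [this]

end H10

theorem hilbert_tenth_unsolvable :
    ∃ S : Set ℕ,
      (∃ (m : ℕ) (p : MvPolynomial (Fin (m + 1)) ℤ),
        ∀ a : ℕ, a ∈ S ↔ ∃ x : Fin m → ℕ,
          MvPolynomial.eval (Fin.cons (a : ℤ) (fun i => (x i : ℤ))) p = 0) ∧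
      ¬ ComputablePred (· ∈ S) := by
  refine ⟨{a | (Nat.Partrec.Code.eval (Denumerable.ofNat Nat.Partrec.Code a) 0).Dom}, ?_, ?_⟩
  · apply H10.final
    have hp : Partrec fun a : ℕ => Nat.Partrec.Code.eval (Denumerable.ofNat Nat.Partrec.Code a) 0 :=
      Nat.Partrec.Code.eval_part.comp (Computable.ofNat _) (Computable.const 0)
    have h := H10.partrec_dioph (Partrec.nat_iff.1 hp)
    refine (H10.ex_rel (R := fun v b => b ∈ Nat.Partrec.Code.eval
      (Denumerable.ofNat Nat.Partrec.Code (v ())) 0) (h (Dioph.proj_dioph (some ())) H10.none_fn)).ext fun v => ?_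
    exact Part.dom_iff_mem.symm
  · intro h
    apply ComputablePred.halting_problem 0
    refine ComputablePred.computable_of_manyOneReducible ?_ h
    exact ⟨Encodable.encode, Computable.encode, fun c => by simp⟩
end

section
/- (Matiyasevich) There exists a diophantine relation of exponential growth: there are m ∈ ℕ and a polynomial P ∈ ℤ[U, V; X₁,…,X_m] such that, defining J(u,v) for u, v ∈ ℕ by J(u,v) ⇔ ∃x ∈ ℕ^m with P(u, v; x₁,…,x_m) = 0, the relation J satisfies: (i) for all u, v ∈ ℕ, J(u,v) implies v < u^u, and (ii) for every k ∈ ℕ there exist u, v ∈ ℕ with J(u,v) and v > u^k. -/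
theorem isPoly_exists_mvPolynomial {α : Type*} {f : (α → ℕ) → ℤ} (hf : IsPoly f) :
    ∃ Q : MvPolynomial α ℤ, ∀ x : α → ℕ, f x = MvPolynomial.eval (fun i => (x i : ℤ)) Q := by
  induction hf with
  | proj i => exact ⟨MvPolynomial.X i, fun x => by simp⟩
  | const n => exact ⟨MvPolynomial.C n, fun x => by simp⟩
  | sub _ _ h1 h2 =>
    obtain ⟨a, ha⟩ := h1
    obtain ⟨b, hb⟩ := h2
    exact ⟨a - b, fun x => by simp [ha, hb]⟩
  | mul _ _ h1 h2 =>
    obtain ⟨a, ha⟩ := h1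
    obtain ⟨b, hb⟩ := h2
    exact ⟨a * b, fun x => by simp [ha, hb]⟩

theorem dioph_pow_self : Dioph {v : Fin 2 → ℕ | v 1 < v 0 ^ v 0} :=
  Dioph.lt_dioph (Dioph.proj_dioph 1) (Dioph.pow_dioph (Dioph.proj_dioph 0) (Dioph.proj_dioph 0))

/-- The relation `v < u ^ u` is diophantine in the sense of an explicit polynomial. -/
theorem exists_poly_lt_pow_self :
    ∃ (m : ℕ) (P : MvPolynomial (Fin (m + 2)) ℤ), ∀ u v : ℕ,
      (∃ x : Fin m → ℕ,
        MvPolynomial.eval (Fin.cons (u : ℤ) (Fin.cons (v : ℤ) (fun i => (x i : ℤ)))) P = 0) ↔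
      v < u ^ u := by
  classical
  obtain ⟨β, p, hp⟩ := dioph_pow_self
  obtain ⟨Q, hQ⟩ := isPoly_exists_mvPolynomial p.isPoly
  obtain ⟨s, q, rfl⟩ := MvPolynomial.exists_finset_rename Q
  let e : {x // x ∈ s} ≃ Fin s.card := s.equivFin
  let g : {x // x ∈ s} → Fin (s.card + 2) := fun x =>
    Sum.elim (fun i : Fin 2 => if i = 0 then 0 else 1) (fun _ => (e x).succ.succ) x.1
  refine ⟨s.card, MvPolynomial.rename g q, fun u v => ?_⟩
  have h1 : v < u ^ u ↔ ∃ t : β → ℕ, p (Sum.elim ![u, v] t) = 0 := hp ![u, v]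
  rw [h1]
  have key : ∀ (x : Fin s.card → ℕ) (t : β → ℕ),
      (∀ (b : β) (hb : Sum.inr b ∈ s), x (e ⟨Sum.inr b, hb⟩) = t b) →
      MvPolynomial.eval (Fin.cons (u : ℤ) (Fin.cons (v : ℤ) (fun i => (x i : ℤ))))
        (MvPolynomial.rename g q) = p (Sum.elim ![u, v] t) := by
    intro x t h
    rw [hQ, MvPolynomial.eval_rename, MvPolynomial.eval_rename]
    congr 2
    funext y
    obtain ⟨y, hy⟩ := y
    rcases y with i | b
    · fin_cases i
      · simp [g]
      · rfl
    · simp [g, h b hy]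
  constructor
  · rintro ⟨x, hx⟩
    refine ⟨fun b => if hb : Sum.inr b ∈ s then x (e ⟨Sum.inr b, hb⟩) else 0, ?_⟩
    rw [← key x _ ?_]
    · exact hx
    · intro b hb
      simp [hb]
  · rintro ⟨t, ht⟩
    refine ⟨fun i => Sum.elim ![u, v] t (e.symm i).1, ?_⟩
    rw [key _ t ?_]
    · exact ht
    · intro b hb
      simp

/-- Matiyasevich's theorem: there exists a diophantine relation of exponential growth. -/
theorem exists_diophantine_relation_of_exponential_growth :
    ∃ (m : ℕ) (P : MvPolynomial (Fin (m + 2)) ℤ),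
      (∀ u v : ℕ,
        (∃ x : Fin m → ℕ,
          MvPolynomial.eval (Fin.cons (u : ℤ) (Fin.cons (v : ℤ) (fun i => (x i : ℤ)))) P = 0) →
        v < u ^ u) ∧
      (∀ k : ℕ, ∃ u v : ℕ,
        (∃ x : Fin m → ℕ,
          MvPolynomial.eval (Fin.cons (u : ℤ) (Fin.cons (v : ℤ) (fun i => (x i : ℤ)))) P = 0) ∧
        u ^ k < v) := by
  obtain ⟨m, P, h⟩ := exists_poly_lt_pow_self
  refine ⟨m, P, fun u v => (h u v).1, fun k => ⟨k + 2, (k + 2) ^ k + 1, (h _ _).2 ?_, by omega⟩⟩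
  have h1 : 0 < (k + 2) ^ k := by positivity
  have h2 : (k + 2) ^ (k + 2) = (k + 2) ^ k * (k + 2) ^ 2 := pow_add _ _ _
  rw [h2]
  have h3 : 4 ≤ (k + 2) ^ 2 := by nlinarith [Nat.zero_le k]
  have h4 := Nat.mul_le_mul_left ((k + 2) ^ k) h3
  omega
end

section
/- There exist n ∈ ℕ and a polynomial f ∈ ℤ[X₁,…,Xₙ] such that the set of prime numbers equals the set of positive values taken by f on ℤⁿ; that is, for every natural number m: m is prime if and only if m > 0 and there exists x ∈ ℤⁿ with f(x₁,…,xₙ) = m. -/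
theorem aux_choose_eq (n k : ℕ) :
    n.choose k = ((2 ^ n + 1 + 1) ^ n / (2 ^ n + 1) ^ k) % (2 ^ n + 1) := by
  set u := 2 ^ n + 1 with hu
  have hu0 : 0 < u := Nat.succ_pos _
  have hlt : ∀ i, n.choose i < u := fun i => by
    have := Nat.choose_le_two_pow n i
    omega
  -- low part
  have hlow : ∀ k, ∑ i ∈ Finset.range k, n.choose i * u ^ i < u ^ k := by
    intro k
    induction k with
    | zero => simp
    | succ k ih =>
      rw [Finset.sum_range_succ, pow_succ]
      have h1 : (n.choose k + 1) * u ^ k ≤ u * u ^ k := Nat.mul_le_mul_right _ (hlt k)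
      nlinarith
  have hexp : (u + 1) ^ n = ∑ i ∈ Finset.range (n + 1 + (k + 1)), n.choose i * u ^ i := by
    rw [add_pow, Finset.sum_range_add _ (n + 1) (k + 1)]
    rw [Finset.sum_eq_zero (s := Finset.range (k + 1))]
    · simp [mul_comm]
    · intro i _
      rw [Nat.choose_eq_zero_of_lt (by omega), zero_mul]
  have hsplit : (u + 1) ^ n = ∑ i ∈ Finset.range k, n.choose i * u ^ i +
      u ^ k * (n.choose k + u * ∑ i ∈ Finset.range (n + 1), n.choose (k + 1 + i) * u ^ i) := by
    rw [hexp, show n + 1 + (k + 1) = (k + 1) + (n + 1) by ring, Finset.sum_range_add,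
      Finset.sum_range_succ, mul_add, Finset.mul_sum, Finset.mul_sum, add_assoc]
    congr 2
    · ring
    · refine Finset.sum_congr rfl fun i _ => ?_
      ring
  rw [hsplit, Nat.add_mul_div_left _ _ (pow_pos hu0 k), Nat.div_eq_of_lt (hlow k), zero_add,
    Nat.add_mul_mod_self_left, Nat.mod_eq_of_lt (hlt k)]

theorem aux_desc_bound (r n : ℕ) : r ^ n ≤ r.descFactorial n + n * n * r ^ (n - 1) := by
  induction n with
  | zero => simp
  | succ n ih =>
    rw [Nat.descFactorial_succ, Nat.add_sub_cancel]
    rcases le_total r n with h | h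
    · rw [pow_succ]
      have : r ^ n * r ≤ r ^ n * ((n + 1) * (n + 1)) := Nat.mul_le_mul_left _ (by nlinarith)
      nlinarith
    · have hd : r.descFactorial n ≤ r ^ n := Nat.descFactorial_le_pow r n
      obtain ⟨s, rfl⟩ := Nat.exists_eq_add_of_le h
      rw [Nat.add_sub_cancel_left, pow_succ]
      have h2 : n * n * (n + s) ^ (n - 1) * (n + s) = n * n * (n + s) ^ n := by
        rcases n with _ | n
        · simp
        · rw [Nat.add_sub_cancel, pow_succ (_ + s) n]; ring
      have h3 := Nat.mul_le_mul_right (n + s) ih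
      rw [add_mul, h2] at h3
      nlinarith

theorem aux_factorial_eq (n r : ℕ) (hr : r = n ^ (n + 2) + n ^ 2 + 1) :
    n.factorial = r ^ n / r.choose n := by
  rcases Nat.eq_zero_or_pos n with rfl | hn
  · simp
  have hf : n.factorial ≤ n ^ n := Nat.factorial_le_pow n
  have hrn : n ≤ r := by nlinarith [Nat.zero_le (n ^ (n + 2))]
  have hC : 0 < r.choose n := Nat.choose_pos hrn
  have hD := Nat.descFactorial_eq_factorial_mul_choose r n
  have hB := aux_desc_bound r n
  have hle := Nat.descFactorial_le_pow r n
  have hfp := n.factorial_pos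
  have hr0 : 0 < r := by omega
  symm
  rw [Nat.div_eq_iff hC]
  obtain ⟨k, rfl⟩ : ∃ k, n = k + 1 := ⟨n - 1, by omega⟩
  rw [Nat.add_sub_cancel] at hB
  set N := k + 1
  set F := N.factorial
  set C := r.choose N
  set D := r.descFactorial N
  have hpk : 0 < r ^ k := pow_pos hr0 k
  have hpow : r ^ N = r ^ k * r := pow_succ r k
  have hr' : N * N * (F + 1) < r := by
    have : N * N * F ≤ N * N * N ^ N := Nat.mul_le_mul_left _ hf
    rw [hr, pow_add]
    nlinarith
  have key : r ^ N < D + C := by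
    by_contra hcon
    push Not at hcon
    -- C ≤ r^N - D ≤ N*N*r^k, so D = F*C ≤ F*N*N*r^k
    have h1 : C ≤ N * N * r ^ k := by omega
    have h2 : F * C ≤ F * (N * N * r ^ k) := Nat.mul_le_mul_left _ h1
    have h3 : r ^ k * (N * N * (F + 1)) < r ^ k * r := Nat.mul_lt_mul_of_pos_left hr' hpk
    nlinarith
  constructor
  · rw [← hD]; exact hle
  · rw [← hD]; omega

theorem aux_prime_iff (m : ℕ) : m.Prime ↔ 2 ≤ m ∧ m ∣ (m - 1).factorial + 1 := by
  constructor
  · intro h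
    refine ⟨h.two_le, ?_⟩
    have := (Nat.prime_iff_fac_equiv_neg_one h.ne_one).1 h
    rw [← ZMod.natCast_eq_zero_iff]
    push_cast
    rw [this]; ring
  · rintro ⟨h2, h⟩
    rw [Nat.prime_iff_fac_equiv_neg_one (by omega)]
    rw [← ZMod.natCast_eq_zero_iff] at h
    push_cast at h
    exact eq_neg_of_add_eq_zero_left h

section
open Dioph

theorem aux_choose_dioph {α : Type} {f g : (α → ℕ) → ℕ} (df : DiophFn f) (dg : DiophFn g) :
    DiophFn fun v => (f v).choose (g v) := by
  have h2 : DiophFn fun v : α → ℕ => 2 ^ f v + 1 :=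
    add_dioph (pow_dioph (const_dioph 2) df) (const_dioph 1)
  have := mod_dioph (div_dioph (pow_dioph (add_dioph h2 (const_dioph 1)) df) (pow_dioph h2 dg)) h2
  simp only [aux_choose_eq]
  exact this

theorem aux_factorial_dioph {α : Type} {f : (α → ℕ) → ℕ} (df : DiophFn f) :
    DiophFn fun v => (f v).factorial := by
  have hr : DiophFn fun v : α → ℕ => f v ^ (f v + 2) + f v ^ 2 + 1 :=
    add_dioph (add_dioph (pow_dioph df (add_dioph df (const_dioph 2)))
      (pow_dioph df (const_dioph 2))) (const_dioph 1)
  have := div_dioph (pow_dioph hr df) (aux_choose_dioph hr df)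
  simp only [fun n => aux_factorial_eq n _ rfl]
  exact this

theorem aux_prime_dioph : Dioph {v : Unit → ℕ | (v ()).Prime} := by
  have hp : DiophFn fun v : Unit → ℕ => v () := proj_dioph ()
  have h := inter (le_dioph (const_dioph 2) hp)
    (dvd_dioph hp (add_dioph (aux_factorial_dioph (sub_dioph hp (const_dioph 1))) (const_dioph 1)))
  exact h.ext fun v => (aux_prime_iff (v ())).symm

end

theorem aux_isPoly {α : Type} {f : (α → ℕ) → ℤ} (hf : IsPoly f) :
    ∃ P : MvPolynomial α ℤ, ∀ x : α → ℕ, f x = MvPolynomial.eval (fun i => (x i : ℤ)) P := by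
  induction hf with
  | proj i => exact ⟨MvPolynomial.X i, by simp⟩
  | const n => exact ⟨MvPolynomial.C n, by simp⟩
  | sub _ _ h1 h2 =>
    obtain ⟨P, hP⟩ := h1
    obtain ⟨Q, hQ⟩ := h2
    exact ⟨P - Q, fun x => by simp [hP, hQ]⟩
  | mul _ _ h1 h2 =>
    obtain ⟨P, hP⟩ := h1
    obtain ⟨Q, hQ⟩ := h2
    exact ⟨P * Q, fun x => by simp [hP, hQ]⟩

open MvPolynomial in
theorem aux_arbitrary_vars : ∃ (σ : Type) (f : MvPolynomial σ ℤ),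
    ∀ m : ℕ, m.Prime ↔ (0 < m ∧ ∃ x : σ → ℤ, MvPolynomial.eval x f = (m : ℤ)) := by
  obtain ⟨β, p, hp⟩ := aux_prime_dioph
  obtain ⟨P, hP⟩ := aux_isPoly p.isPoly
  let sq : Unit ⊕ β → MvPolynomial ((Unit ⊕ β) × Fin 4) ℤ := fun i => ∑ j : Fin 4, X (i, j) ^ 2
  refine ⟨(Unit ⊕ β) × Fin 4, sq (Sum.inl ()) * (1 - (bind₁ sq P) ^ 2), fun m => ?_⟩
  have hev : ∀ (x : (Unit ⊕ β) × Fin 4 → ℤ) (w : Unit ⊕ β → ℕ),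
      (∀ i, ∑ j : Fin 4, x (i, j) ^ 2 = (w i : ℤ)) →
      eval x (sq (Sum.inl ()) * (1 - (bind₁ sq P) ^ 2)) =
        (w (Sum.inl ()) : ℤ) * (1 - (p w) ^ 2) := by
    intro x w h
    have h1 : ∀ i, eval x (sq i) = (w i : ℤ) := fun i => by simp only [sq, map_sum, map_pow, eval_X, h]
    have h2 : eval x (bind₁ sq P) = p w := by
      rw [hP w, ← coe_aeval_eq_eval, RingHom.coe_coe, aeval_bind₁]
      have h3 : (fun i => aeval x (sq i)) = fun i => (w i : ℤ) := funext h1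
      rw [h3]
      rfl
    simp only [map_mul, map_sub, map_one, map_pow, h1, h2]
  constructor
  · intro hm
    refine ⟨hm.pos, ?_⟩
    obtain ⟨t, ht⟩ := (hp (fun _ => m)).1 hm
    choose a b c d h using fun i => Nat.sum_four_squares (Sum.elim (fun _ : Unit => m) t i)
    refine ⟨fun ij => ![(a ij.1 : ℤ), b ij.1, c ij.1, d ij.1] ij.2, ?_⟩
    rw [hev _ (Sum.elim (fun _ : Unit => m) t), ht]
    · simp
    · intro i
      rw [← h i]
      simp [Fin.sum_univ_four]
  · rintro ⟨hm, x, hx⟩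
    have hw : ∀ i, ∑ j : Fin 4, x (i, j) ^ 2 = ((∑ j : Fin 4, x (i, j) ^ 2).toNat : ℤ) :=
      fun i => (Int.toNat_of_nonneg (Finset.sum_nonneg fun j _ => sq_nonneg _)).symm
    rw [hev x _ hw] at hx
    set w : Unit ⊕ β → ℕ := fun i => (∑ j : Fin 4, x (i, j) ^ 2).toNat
    have hm' : (0 : ℤ) < m := by exact_mod_cast hm
    have h0 : p w = 0 := by
      by_contra hne
      have h1 : 0 < p w ^ 2 := by positivity
      have h2 : (0 : ℤ) ≤ w (Sum.inl ()) := by positivity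
      nlinarith
    rw [h0] at hx
    have hwm : w (Sum.inl ()) = m := by
      have : (w (Sum.inl ()) : ℤ) = m := by linarith
      exact_mod_cast this
    have := (hp (fun _ => w (Sum.inl ()))).2 ⟨w ∘ Sum.inr, by
      rw [← h0]; congr 1; funext i; rcases i with ⟨⟩ | i <;> rfl⟩
    rw [← hwm]
    exact this

/-- There is a prime-producing polynomial: an integer polynomial whose set of positive
values on integer tuples is exactly the set of prime numbers. -/
theorem exists_prime_producing_polynomial :
    ∃ (n : ℕ) (f : MvPolynomial (Fin n) ℤ),
      ∀ m : ℕ, m.Prime ↔ (0 < m ∧ ∃ x : Fin n → ℤ, MvPolynomial.eval x f = (m : ℤ)) := by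
  obtain ⟨σ, f, hf⟩ := aux_arbitrary_vars
  obtain ⟨n, g, hg, q, rfl⟩ := MvPolynomial.exists_fin_rename f
  refine ⟨n, q, fun m => (hf m).trans (and_congr_right fun _ => ?_)⟩
  constructor
  · rintro ⟨x, hx⟩
    exact ⟨x ∘ g, by rw [← hx, MvPolynomial.eval_rename]⟩
  · rintro ⟨y, hy⟩
    refine ⟨Function.extend g y 0, ?_⟩
    rw [MvPolynomial.eval_rename, show Function.extend g y 0 ∘ g = y from funext fun i => hg.extend_apply y 0 i, hy]
end

section
/- (Laczkovich) For every complex number x: x is an integer (i.e., there exists m ∈ ℤ with x = m) if and only if x is rational (there exists q ∈ ℚ with x = q) and there exists z ∈ ℂ such that exp(z) = 2 and exp(z·x) is rational (i.e., there exists q ∈ ℚ with exp(z·x) = q). -/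
/-- Laczkovich's existential definition of `ℤ` in the complex exponential field. -/
theorem laczkovich_int_def (x : ℂ) :
    (∃ m : ℤ, x = m) ↔
      ((∃ q : ℚ, x = q) ∧
        ∃ z : ℂ, Complex.exp z = 2 ∧ ∃ q : ℚ, Complex.exp (z * x) = q) := by
  constructor
  · rintro ⟨m, rfl⟩
    refine ⟨⟨m, by simp⟩, Complex.log 2, Complex.exp_log two_ne_zero, 2 ^ m, ?_⟩
    rw [mul_comm, Complex.exp_int_mul, Complex.exp_log two_ne_zero]
    push_cast
    rfl
  · rintro ⟨⟨q, rfl⟩, z, hz, r, hr⟩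
    have hd : (q.den : ℂ) * (q : ℂ) = (q.num : ℂ) := by
      exact_mod_cast Rat.den_mul_eq_num q
    have h1 : (r : ℂ) ^ q.den = 2 ^ q.num := by
      rw [← hr, ← hz, ← Complex.exp_nat_mul, ← Complex.exp_int_mul, ← hd]
      congr 1
      ring
    have h2 : r ^ q.den = (2 : ℚ) ^ q.num := by
      apply Rat.cast_injective (α := ℂ)
      push_cast
      exact h1
    have hr0 : r ≠ 0 := by
      rintro rfl
      simp at hr
    haveI : Fact (Nat.Prime 2) := ⟨Nat.prime_two⟩
    have h3 := congrArg (padicValRat 2) h2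
    rw [padicValRat.pow, padicValRat.zpow] at h3
    have h4 : padicValRat 2 (2 : ℚ) = 1 := by
      simpa using padicValRat.self (p := 2) (by norm_num)
    rw [h4, mul_one] at h3
    refine ⟨padicValRat 2 r, ?_⟩
    have h5 : (q.den : ℂ) ≠ 0 := by exact_mod_cast q.den_nz
    apply mul_left_cancel₀ h5
    rw [hd, ← h3]
    push_cast
    rfl
end
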